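/- Let M be an oriented matroid program of rank r on [n] ∪ {f,g}, let ṽ^1,…,ṽ^{r−2} be nodes of K_f, none of which is the source or the sink of K_f, and suppose the oriented matroid M/{f,g} has an adjoint. Then there exists an extension 𝑀̃ of M/{f,g} by an element h such that for each i = 1,…,r−2 there is a cocircuit Z^i of 𝑀̃ with Z^i_h = + and Z^i_e ∈ {+,0} for all e ∈ ṽ^i. -/

import Mathlib

/-!
The proof has two halves: one turns the combinatorics of the program into a statement about
covectors of `N = M / {f, g}`, the other uses the adjoint of `N` to build the extension.

**Nodes (`exists_interior`).** A node `v` that is neither source nor sink has a covector `P` of `N`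
with `P = +` on `v`. Subtracting `v` from the source and from the sink (eliminating `g`) gives
covectors that vanish at `g`, are nonnegative on the source, respectively the sink, and nonpositive
on `v`. Their signs at `f` are forced: otherwise `exists_edge` would produce an arc entering the
source or leaving the sink. After negating and composing with a covector positive on `v`
(`exists_pos`) there are two covectors that vanish at `g`, are positive on `v` and have opposite
signs at `f`; eliminating `f` between them gives `P`. If some nonzero covector is supported on `f`
alone, composing with it and with its negative gives such a pair directly.

**Extension (`Adj.extend`).** The adjoint is transported to an oriented matroid `A` on all
cocircuits of `N` (`Adj`). Let `σ` be a covector of `A` that is nonzero at every cocircuit. The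
covectors of the extension are the covectors `X` of `N` together with a sign at `h` that is a value
of `σ` at some cocircuit conformal to `X`, and with `0` if both values occur. The difficult axiom is
elimination of an old element `e` between covectors with a common value of `σ`
(`Adj.eliminate_old`). If it failed, `σ` would have a constant sign on the cocircuits that vanish at
`e` of a certain cone of `N`, but would have the other sign at two cocircuits of this cone on
different sides of `e`, contradicting `Adj.core`. That lemma is an induction on the number of
constraints of the cone. Vertices at which a covector of `A` vanishes are handled by dropping
inactive constraints (`Adj.localize`); in the end everything rests on `Adj.interior`, where the rank
of the adjoint enters: a covector of `A` that vanishes at a cocircuit and is nonpositive on the cone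
having that cocircuit in its interior vanishes on all cocircuits.

**Choice of `σ` (`Adj.exists_signature`).** A covector of `A` vanishing on all cocircuits of the
cone `{Y | Y ≥ 0 on v}` is zero, because the cone has the interior covector `P` (`Adj.spanning`).
Fewer than `rank N` cocircuits do not span `A`, so cocircuits `Y₁, …, Yₘ` in the cones of
`m ≤ rank N` nodes and a covector `σ` positive at all of them are found one after another; composing
with a nowhere zero covector makes `σ` nowhere zero. Since `rank N ≥ r - 2` (`rank_con`), all the
nodes `vt i` are covered, and `Yᵢ` with the entry `+` at `h` is the required cocircuit.
-/

open Set

/-- A *sign vector* on an ambient type `α`. -/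
abbrev SignVec (α : Type*) := α → SignType

namespace OMHK

variable {α : Type*}

/-- The support of a sign vector. -/
def supp (X : SignVec α) : Set α := {e | X e ≠ 0}

/-- A sign vector is nonnegative if every entry is `+` or `0`. -/
def Nonneg (X : SignVec α) : Prop := ∀ e, X e = 1 ∨ X e = 0

/-- Composition of sign vectors: `(X ∘ Y)ₑ = Xₑ` if `Xₑ ≠ 0`, else `Yₑ`. -/
def compose (X Y : SignVec α) : SignVec α := fun e => if X e ≠ 0 then X e else Y e

/-- The separation set `S(X,Y) = {e : Xₑ = -Yₑ ≠ 0}`. -/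
def sep (X Y : SignVec α) : Set α := {e | X e = -(Y e) ∧ X e ≠ 0}

/-- Two sign vectors are orthogonal if `S(X,Y)` and `S(X,-Y)` are both empty
or both nonempty. -/
def Orth (X Y : SignVec α) : Prop :=
  (sep X Y = ∅ ∧ sep X (-Y) = ∅) ∨ (sep X Y ≠ ∅ ∧ sep X (-Y) ≠ ∅)

/-- An oriented matroid with finite ground set inside the ambient type `α`,
presented by its collection of covectors (sign vectors supported on the
ground set), satisfying the covector axioms. -/
structure OrientedMatroid (α : Type*) where
  ground : Set α
  ground_finite : ground.Finite
  covectors : Set (SignVec α)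
  supp_subset : ∀ X ∈ covectors, supp X ⊆ ground
  zero_mem : (0 : SignVec α) ∈ covectors
  neg_mem : ∀ X ∈ covectors, -X ∈ covectors
  compose_mem : ∀ X ∈ covectors, ∀ Y ∈ covectors, compose X Y ∈ covectors
  elim : ∀ X ∈ covectors, ∀ Y ∈ covectors, ∀ e ∈ sep X Y,
    ∃ Z ∈ covectors, Z e = 0 ∧ ∀ e' ∉ sep X Y, Z e' = compose X Y e'

namespace OrientedMatroid

variable (M : OrientedMatroid α)

/-- A cocircuit: a nonzero covector of minimal support. -/
def IsCocircuit (X : SignVec α) : Prop :=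
  X ∈ M.covectors ∧ X ≠ 0 ∧
    ∀ Y ∈ M.covectors, Y ≠ 0 → supp Y ⊆ supp X → supp Y = supp X

/-- A vector: a sign vector supported on the ground set and orthogonal to
every covector. -/
def IsVector (X : SignVec α) : Prop :=
  supp X ⊆ M.ground ∧ ∀ Y ∈ M.covectors, Orth X Y

/-- A circuit: a nonzero vector of minimal support. -/
def IsCircuit (X : SignVec α) : Prop :=
  M.IsVector X ∧ X ≠ 0 ∧
    ∀ Y, M.IsVector Y → Y ≠ 0 → supp Y ⊆ supp X → supp Y = supp X

/-- A set is independent if it is contained in the ground set and contains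
the support of no circuit. -/
def Indep (A : Set α) : Prop :=
  A ⊆ M.ground ∧ ∀ X, M.IsCircuit X → ¬ supp X ⊆ A

/-- The rank of a subset: maximal cardinality of an independent subset of it. -/
noncomputable def rk (A : Set α) : ℕ :=
  sSup {k | ∃ I : Set α, I ⊆ A ∧ M.Indep I ∧ I.ncard = k}

/-- The rank of the oriented matroid. -/
noncomputable def rank : ℕ := M.rk M.ground

end OrientedMatroid

open scoped Classical in
/-- Zero out the coordinates in `A` (the restriction to the complement of `A`,
in ambient terms). -/
noncomputable def restrictAway (A : Set α) (X : SignVec α) : SignVec α :=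
  fun e => if e ∈ A then 0 else X e

/-- `M'` is the deletion `M ∖ A`: its ground set is `M.ground ∖ A` and its
circuits are the circuits of `M` vanishing on `A`. -/
def IsDeletion (M : OrientedMatroid α) (A : Set α) (M' : OrientedMatroid α) : Prop :=
  M'.ground = M.ground \ A ∧
  ∀ X, M'.IsCircuit X ↔ (M.IsCircuit X ∧ ∀ e ∈ A, X e = 0)

/-- `M'` is the contraction `M / A`: its ground set is `M.ground ∖ A` and its
circuits are the nonzero minimal-support members of the restrictions away from
`A` of circuits of `M`. -/
def IsContraction (M : OrientedMatroid α) (A : Set α) (M' : OrientedMatroid α) : Prop :=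
  M'.ground = M.ground \ A ∧
  ∀ X, M'.IsCircuit X ↔
    (X ≠ 0 ∧ (∃ Y, M.IsCircuit Y ∧ X = restrictAway A Y) ∧
      ∀ Z : SignVec α, Z ≠ 0 → (∃ Y, M.IsCircuit Y ∧ Z = restrictAway A Y) →
        supp Z ⊆ supp X → supp Z = supp X)

/-- `Nh` is an extension of `N` by the new element `h` (same rank). -/
def IsExtension (N : OrientedMatroid α) (h : α) (Nh : OrientedMatroid α) : Prop :=
  h ∉ N.ground ∧ Nh.ground = insert h N.ground ∧ Nh.rank = N.rank ∧
    IsDeletion Nh {h} N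

/-- The element `h` is in general position in `Nh`: every circuit whose support
contains `h` has support of cardinality `rank + 1`. -/
def GenPos (Nh : OrientedMatroid α) (h : α) : Prop :=
  ∀ X, Nh.IsCircuit X → X h ≠ 0 → (supp X).ncard = Nh.rank + 1

/-- A directed path from `a` to `b` in the digraph with arc relation `A`. -/
def IsDipath {V : Type*} (A : V → V → Prop) (p : List V) (a b : V) : Prop :=
  p ≠ [] ∧ p.head? = some a ∧ p.getLast? = some b ∧ p.Chain' A ∧ p.Nodup

/-! ### Oriented matroid programs.
We fix the ambient type `ℕ`; the ground set of a program is `[n] ∪ {f, g}`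
where `[n] = {0, …, n-1}`, the objective element is `f = n` and the right hand
side element is `g = n + 1`.  Extensions use the fresh element `h = n + 2`. -/

/-- `[n] = {0, …, n - 1}`. -/
def nset (n : ℕ) : Set ℕ := {k | k < n}

/-- `M` is an oriented matroid program of rank `r` on `[n] ∪ {f, g}`
(`f = n`, `g = n + 1`), where `Mf` denotes the deletion `M ∖ f`:
(i) every nonnegative cocircuit of `M ∖ f` has `g` in its support;
(ii) for every `e ∈ [n]` there is a nonnegative cocircuit `Y` of `M ∖ f`
with `Y e = +`; (iii) every circuit of `M` whose support contains `f` has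
support of cardinality `r + 1`. -/
def IsProgram (M Mf : OrientedMatroid ℕ) (n r : ℕ) : Prop :=
  M.ground = nset n ∪ {n, n + 1} ∧ M.rank = r ∧ IsDeletion M {n} Mf ∧
  (∀ Y, Mf.IsCocircuit Y → Nonneg Y → Y (n + 1) ≠ 0) ∧
  (∀ e, e < n → ∃ Y, Mf.IsCocircuit Y ∧ Nonneg Y ∧ Y e = 1) ∧
  (∀ X, M.IsCircuit X → X n ≠ 0 → (supp X).ncard = r + 1)

/-- A node of the program: `[n] ∖ supp Y` for `Y` a nonnegative cocircuit of
`M ∖ f`. -/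
def IsNode (Mf : OrientedMatroid ℕ) (n : ℕ) (v : Set ℕ) : Prop :=
  ∃ Y, Mf.IsCocircuit Y ∧ Nonneg Y ∧ v = nset n \ supp Y

/-- The arc relation of the digraph `K_f`: `v → v'` when `v, v'` are adjacent
nodes and the witnessing cocircuit `Y''` of `M` (zero at `g`, positive on
`v' ∖ v`, negative on `v ∖ v'`, zero on `v ∩ v'`, nonzero at `f`) satisfies
`Y'' f = Y'' e` for `e ∈ v ∖ v'`. -/
def Arc (M Mf : OrientedMatroid ℕ) (n r : ℕ) (v v' : Set ℕ) : Prop :=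
  IsNode Mf n v ∧ IsNode Mf n v' ∧ v ≠ v' ∧ M.rk (v ∩ v') = r - 2 ∧
  ∃ Y, M.IsCocircuit Y ∧ Y (n + 1) = 0 ∧
    (∀ e ∈ v' \ v, Y e = 1) ∧ (∀ e ∈ v \ v', Y e = -1) ∧
    (∀ e ∈ v ∩ v', Y e = 0) ∧ Y n ≠ 0 ∧ (∀ e ∈ v \ v', Y n = Y e)

/-- The source of `K_f`: the node with no incoming arcs. -/
def IsSource (M Mf : OrientedMatroid ℕ) (n r : ℕ) (v : Set ℕ) : Prop :=
  IsNode Mf n v ∧ ∀ u, ¬ Arc M Mf n r u v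

/-- The sink of `K_f`: the node with no outgoing arcs. -/
def IsSink (M Mf : OrientedMatroid ℕ) (n r : ℕ) (v : Set ℕ) : Prop :=
  IsNode Mf n v ∧ ∀ u, ¬ Arc M Mf n r v u

/-- The arc relation of the digraph `K_h` determined by an extension `M̂` of
`M/g` by `h = n + 2` in general position; `Mhf` denotes `M̂ ∖ f`. -/
def ArcH (M Mf Mhf : OrientedMatroid ℕ) (n r : ℕ) (v v' : Set ℕ) : Prop :=
  IsNode Mf n v ∧ IsNode Mf n v' ∧ v ≠ v' ∧ M.rk (v ∩ v') = r - 2 ∧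
  ∃ Y, Mhf.IsCocircuit Y ∧
    (∀ e ∈ v' \ v, Y e = 1) ∧ (∀ e ∈ v \ v', Y e = -1) ∧
    (∀ e ∈ v ∩ v', Y e = 0) ∧ Y (n + 2) ≠ 0 ∧ (∀ e ∈ v \ v', Y (n + 2) = Y e)

/-- `x` is a vertex of the subdigraph `K_{[f,-h]}`: there is a vector `X` of
`M̂` with `X₊ = x ∪ {h}` and `X₋ = {f}`. -/
def InKfmh (Mhat : OrientedMatroid ℕ) (n : ℕ) (x : Set ℕ) : Prop :=
  ∃ X, Mhat.IsVector X ∧ {e | X e = 1} = x ∪ {n + 2} ∧ {e | X e = -1} = {n}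

/-- `x` is a vertex of the subdigraph `K_{[-h,-f]}`: there is a vector `X` of
`M̂` with `X₊ = x ∪ {f, h}` and `X₋ = ∅`. -/
def InKmhmf (Mhat : OrientedMatroid ℕ) (n : ℕ) (x : Set ℕ) : Prop :=
  ∃ X, Mhat.IsVector X ∧ {e | X e = 1} = x ∪ {n, n + 2} ∧ {e | X e = -1} = (∅ : Set ℕ)

end OMHK
namespace OMHK

open OrientedMatroid

open scoped Classical in
/-- `N` has an adjoint: an oriented matroid `A` of the same rank together with
an injection `am` from the ground set of `A` into the cocircuits of `N` whose
image contains exactly one cocircuit of each opposite pair, such that for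
every `e` in the ground set of `N` the sign vector `b ↦ (am b) e` is a
cocircuit of `A`. -/
def HasAdjoint (N : OrientedMatroid ℕ) : Prop :=
  ∃ (β : Type) (A : OrientedMatroid β) (am : β → SignVec ℕ),
    A.rank = N.rank ∧
    (∀ b ∈ A.ground, N.IsCocircuit (am b)) ∧
    Set.InjOn am A.ground ∧
    (∀ Y, N.IsCocircuit Y →
      Xor' (∃ b ∈ A.ground, am b = Y) (∃ b ∈ A.ground, am b = -Y)) ∧
    (∀ e ∈ N.ground, A.IsCocircuit (fun b => if b ∈ A.ground then am b e else 0))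

/-- The generalized Levi intersection property for an oriented matroid `N` of
rank `s`: for every list of `s - 1` covectors `Y¹, …, Y^{s-1}` of `N` there is
an extension `N̂` of `N` by an element `h` and covectors `W¹, …, W^{s-1}` of
`N̂` with `Wⁱ h = 0` and `Wⁱ e = Yⁱ e` for all `e ≠ h`. -/
def GenLevi (N : OrientedMatroid ℕ) : Prop :=
  ∀ Y : Fin (N.rank - 1) → SignVec ℕ, (∀ i, Y i ∈ N.covectors) →
    ∃ h ∉ N.ground, ∃ Nh : OrientedMatroid ℕ, IsExtension N h Nh ∧
      ∃ W : Fin (N.rank - 1) → SignVec ℕ,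
        ∀ i, W i ∈ Nh.covectors ∧ W i h = 0 ∧ ∀ e, e ≠ h → W i e = Y i e

/-- `p ∈ conv_N(A)`: there is a circuit `X` of `N` with `X₊ ⊆ A` and
`X₋ = {p}`. -/
def MemConv (N : OrientedMatroid ℕ) (p : ℕ) (A : Set ℕ) : Prop :=
  ∃ X, N.IsCircuit X ∧ {e | X e = 1} ⊆ A ∧ {e | X e = -1} = {p}

/-- A face of `N`: the complement in the ground set of the support of a
nonnegative covector. -/
def IsFace (N : OrientedMatroid ℕ) (F : Set ℕ) : Prop :=
  ∃ Y ∈ N.covectors, Nonneg Y ∧ F = N.ground \ supp Y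

/-- A facet of `N`: a face of rank `rank N - 1`. -/
def IsFacet (N : OrientedMatroid ℕ) (F : Set ℕ) : Prop :=
  IsFace N F ∧ N.rk F = N.rank - 1

/-- `S` is a subdivision of the oriented matroid `N`. -/
def IsSubdivision (N : OrientedMatroid ℕ) (S : Set (Set ℕ)) : Prop :=
  (∀ σ ∈ S, σ ⊆ N.ground ∧ N.rk σ = N.rank) ∧
  (∀ f ∉ N.ground, ∀ Nf : OrientedMatroid ℕ, IsExtension N f Nf →
    ∀ σ1 ∈ S, ∀ σ2 ∈ S,
      MemConv Nf f σ1 → MemConv Nf f σ2 → MemConv Nf f (σ1 ∩ σ2)) ∧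
  (∀ σ1 ∈ S, ∀ σ2 ∈ S, ∀ N1 : OrientedMatroid ℕ,
    IsDeletion N (N.ground \ σ1) N1 → IsFace N1 (σ1 ∩ σ2)) ∧
  (∀ σ ∈ S, ∀ Nσ : OrientedMatroid ℕ, IsDeletion N (N.ground \ σ) Nσ →
    ∀ F, IsFacet Nσ F →
      (∃ G, IsFacet N G ∧ F ⊆ G) ∨ ({τ ∈ S | F ⊆ τ}.ncard = 2))

/-- The arc relation of the digraph `K_f` on the cells of a subdivision `S` of
`N`, induced by an extension `Nf` of `N` by `f` in general position. -/
def CellArc (N Nf : OrientedMatroid ℕ) (f : ℕ) (S : Set (Set ℕ))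
    (σ1 σ2 : Set ℕ) : Prop :=
  σ1 ∈ S ∧ σ2 ∈ S ∧ σ1 ≠ σ2 ∧ N.rk (σ1 ∩ σ2) = N.rank - 1 ∧
  ∃ Y, Nf.IsCocircuit Y ∧ (∀ e ∈ σ1 ∩ σ2, Y e = 0) ∧ Y f = 1 ∧
    ∀ e ∈ σ1 \ σ2, Y e = 1

/-- The source of the cell digraph: the cell `σ` admitting a vector `C` of
`N ∪ f` with `C f = -` and `C₊ = σ`. -/
def IsCellSource (Nf : OrientedMatroid ℕ) (f : ℕ) (S : Set (Set ℕ))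
    (σ : Set ℕ) : Prop :=
  σ ∈ S ∧ ∃ C, Nf.IsVector C ∧ C f = -1 ∧ {e | C e = 1} = σ

/-- The sink of the cell digraph: the cell `σ` admitting a vector `C` of
`N ∪ f` with `C f = +` and `C₊ = σ`. -/
def IsCellSink (Nf : OrientedMatroid ℕ) (f : ℕ) (S : Set (Set ℕ))
    (σ : Set ℕ) : Prop :=
  σ ∈ S ∧ ∃ C, Nf.IsVector C ∧ C f = 1 ∧ {e | C e = 1} = σ

/-- Property (P) for an oriented matroid of rank `n` on `[2n]`: every circuit
`Y` has `Y i = Y (n+i) ≠ 0` for some `i < n`. -/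
def PropertyP (N : OrientedMatroid ℕ) (n : ℕ) : Prop :=
  ∀ X, N.IsCircuit X → ∃ i, i < n ∧ X i = X (n + i) ∧ X i ≠ 0

/-- The cells of the cube subdivision: sets `B ⊆ [2n]` with
`|B ∩ {i, n+i}| = 1` for every `i < n`. -/
def cubeCells (n : ℕ) : Set (Set ℕ) :=
  {B | B ⊆ nset (2 * n) ∧
    ∀ i, i < n → ((i ∈ B ∧ n + i ∉ B) ∨ (i ∉ B ∧ n + i ∈ B))}

/-! ### Sign vectors and orthogonality -/

section Basics

variable {α : Type*}

theorem sgn_cases (a : SignType) : a = 0 ∨ a = 1 ∨ a = -1 := by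
  revert a; decide

theorem sgn_mul_one (a b : SignType) : a * b = 1 ↔ a ≠ 0 ∧ a = b := by
  revert a b; decide

theorem sgn_mul_neg_one (a b : SignType) : a * b = -1 ↔ a ≠ 0 ∧ a = -b := by
  revert a b; decide

theorem sgn_ne (a b : SignType) (ha : a ≠ 0) (hb : b ≠ 0) : a = b ∨ a = -b := by
  revert a b; decide

theorem sgn_neg_ne (a : SignType) (ha : a ≠ 0) : a ≠ -a := by
  revert a; decide

theorem sgn_neg_ne' (a : SignType) (ha : a ≠ 0) : -a ≠ a := by
  revert a; decide

theorem sgn_neg_eq_zero (a : SignType) : -a = 0 ↔ a = 0 := by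
  revert a; decide

theorem compose_ne {X Y : SignVec α} {e : α} (h : X e ≠ 0) : compose X Y e = X e := by
  simp [compose, h]

theorem compose_eq {X Y : SignVec α} {e : α} (h : X e = 0) : compose X Y e = Y e := by
  simp [compose, h]

theorem compose_eq_zero {X Y : SignVec α} {e : α} :
    compose X Y e = 0 ↔ X e = 0 ∧ Y e = 0 := by
  by_cases h : X e = 0 <;> simp [compose, h]

/-- The conformal order: `X ≤ Y` when every nonzero entry of `X` agrees with that of `Y`. -/
def Conf (X Y : SignVec α) : Prop := ∀ e, X e = 0 ∨ X e = Y e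

theorem Conf.refl (X : SignVec α) : Conf X X := fun _ => Or.inr rfl

theorem Conf.trans {X Y Z : SignVec α} (h : Conf X Y) (h' : Conf Y Z) : Conf X Z := by
  intro e
  rcases h e with h1 | h1
  · exact Or.inl h1
  · rw [h1]; exact h' e

theorem Conf.eq_of_ne {X Y : SignVec α} (h : Conf X Y) {e : α} (he : X e ≠ 0) : X e = Y e :=
  (h e).resolve_left he

theorem Conf.zero {X Y : SignVec α} (h : Conf X Y) {e : α} (he : Y e = 0) : X e = 0 := by
  rcases h e with h1 | h1
  · exact h1
  · rw [h1, he]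

theorem Conf.supp {X Y : SignVec α} (h : Conf X Y) : supp X ⊆ supp Y := by
  intro e he hY
  exact he (h.zero hY)

theorem conf_compose_left (X Y : SignVec α) : Conf X (compose X Y) := by
  intro e
  by_cases h : X e = 0
  · exact Or.inl h
  · exact Or.inr (compose_ne h).symm

/-- `V` is orthogonal to every member of the symmetric family `C`; because `C` is closed under
negation it is enough that agreement somewhere forces disagreement somewhere. -/
def PerpAll (C : Set (SignVec α)) (V : SignVec α) : Prop :=
  ∀ X ∈ C, (∃ a, V a * X a = 1) → ∃ b, V b * X b = -1

theorem sep_ne_empty {X Y : SignVec α} : sep X Y ≠ ∅ ↔ ∃ e, X e * Y e = -1 := by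
  rw [← nonempty_iff_ne_empty]
  constructor
  · rintro ⟨e, h1, h2⟩
    exact ⟨e, (sgn_mul_neg_one _ _).2 ⟨h2, h1⟩⟩
  · rintro ⟨e, h⟩
    obtain ⟨h2, h1⟩ := (sgn_mul_neg_one _ _).1 h
    exact ⟨e, h1, h2⟩

theorem sep_neg_ne_empty {X Y : SignVec α} : sep X (-Y) ≠ ∅ ↔ ∃ e, X e * Y e = 1 := by
  rw [sep_ne_empty]
  constructor
  · rintro ⟨e, h⟩
    refine ⟨e, ?_⟩
    rw [sgn_mul_neg_one] at h
    rw [sgn_mul_one]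
    exact ⟨h.1, by simpa using h.2⟩
  · rintro ⟨e, h⟩
    refine ⟨e, ?_⟩
    rw [sgn_mul_one] at h
    rw [sgn_mul_neg_one]
    exact ⟨h.1, by simpa using h.2⟩

theorem orth_iff {X Y : SignVec α} :
    Orth X Y ↔ ((∃ e, X e * Y e = 1) ↔ ∃ e, X e * Y e = -1) := by
  rw [← sep_ne_empty, ← sep_neg_ne_empty]
  unfold Orth
  tauto

theorem perpAll_neg {C : Set (SignVec α)} (hC : ∀ X ∈ C, -X ∈ C) {V : SignVec α}
    (hV : PerpAll C V) {X : SignVec α} (hX : X ∈ C) (h : ∃ a, V a * X a = -1) :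
    ∃ b, V b * X b = 1 := by
  obtain ⟨a, ha⟩ := h
  obtain ⟨b, hb⟩ := hV (-X) (hC X hX) ⟨a, by simp [ha]⟩
  exact ⟨b, by simpa [neg_eq_iff_eq_neg] using hb⟩

namespace OrientedMatroid

variable (M : OrientedMatroid α)

theorem isVector_iff {V : SignVec α} :
    M.IsVector V ↔ supp V ⊆ M.ground ∧ PerpAll M.covectors V := by
  unfold IsVector
  refine and_congr_right fun _ => ⟨fun h X hX => (orth_iff.1 (h X hX)).1, fun h X hX => ?_⟩
  rw [orth_iff]
  exact ⟨h X hX, perpAll_neg M.neg_mem h hX⟩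

variable {M}

theorem zero_off {X : SignVec α} (hX : X ∈ M.covectors) {e : α} (he : e ∉ M.ground) : X e = 0 := by
  by_contra h
  exact he (M.supp_subset X hX h)

theorem zero_off_supp {X : SignVec α} {S : Set α} (hX : supp X ⊆ S) {e : α} (he : e ∉ S) :
    X e = 0 := by
  by_contra h
  exact he (hX h)

/-- An oriented matroid is determined by its ground set and its covectors. -/
theorem ext' {M M' : OrientedMatroid α} (hg : M.ground = M'.ground)
    (hc : M.covectors = M'.covectors) : M = M' := by
  cases M; cases M'; simp only at hg hc; subst hg; subst hc; rfl

/-- The element of `{X, -X}` whose entry at `e` is `s`, provided `X e ≠ 0`. -/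
theorem exists_sign {X : SignVec α} (hX : X ∈ M.covectors) {e : α} (he : X e ≠ 0) {s : SignType}
    (hs : s ≠ 0) :
    ∃ X' ∈ M.covectors, X' e = s ∧ (∀ a, X a = 0 ↔ X' a = 0) ∧ (X' = X ∨ X' = -X) := by
  rcases sgn_ne _ _ he hs with h | h
  · exact ⟨X, hX, h, fun _ => Iff.rfl, Or.inl rfl⟩
  · exact ⟨-X, M.neg_mem X hX, by simp [h], fun a => by simp, Or.inr rfl⟩

/-- Elimination of `e` between two covectors that are both nonzero at `e`, up to replacing the
second by its negative: the result agrees with `X` wherever `Y` vanishes, and up to sign with `Y`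
wherever `X` vanishes. -/
theorem elim_pm {X Y : SignVec α} (hX : X ∈ M.covectors) (hY : Y ∈ M.covectors) {e : α}
    (hXe : X e ≠ 0) (hYe : Y e ≠ 0) :
    ∃ Z ∈ M.covectors, Z e = 0 ∧ (∀ a, Y a = 0 → Z a = X a) ∧
      (∀ a, X a = 0 → (Z a = 0 ↔ Y a = 0)) := by
  obtain ⟨Y', hY', h1, h2, -⟩ := exists_sign hY hYe (s := -X e) (by simpa using hXe)
  obtain ⟨Z, hZ, hZe, hZs⟩ := M.elim X hX Y' hY' e ⟨by simp [h1], hXe⟩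
  refine ⟨Z, hZ, hZe, fun a ha => ?_, fun a ha => ?_⟩
  · have : Y' a = 0 := (h2 a).1 ha
    rw [hZs a (by rintro ⟨h3, h4⟩; simp [this] at h3; exact h4 h3)]
    by_cases hx : X a = 0
    · rw [compose_eq hx, this, hx]
    · rw [compose_ne hx]
  · rw [hZs a (by rintro ⟨h3, h4⟩; exact h4 ha), compose_eq ha, h2 a]

/-! ### Deletion, contraction, double orthogonality, duality -/

/-- The deletion `M ∖ A`, by restricting covectors. -/
noncomputable def del (M : OrientedMatroid α) (A : Set α) : OrientedMatroid α where
  ground := M.ground \ A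
  ground_finite := M.ground_finite.subset sdiff_subset
  covectors := restrictAway A '' M.covectors
  supp_subset := by
    rintro _ ⟨X, hX, rfl⟩ e he
    by_cases h : e ∈ A
    · simp [supp, restrictAway, h] at he
    · exact ⟨M.supp_subset X hX (by simpa [supp, restrictAway, h] using he), h⟩
  zero_mem := ⟨0, M.zero_mem, by ext e; simp [restrictAway]⟩
  neg_mem := by
    rintro _ ⟨X, hX, rfl⟩
    refine ⟨-X, M.neg_mem X hX, ?_⟩
    funext e; by_cases h : e ∈ A <;> simp [restrictAway, h]
  compose_mem := by
    rintro _ ⟨X, hX, rfl⟩ _ ⟨Y, hY, rfl⟩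
    refine ⟨_, M.compose_mem X hX Y hY, ?_⟩
    funext e; by_cases h : e ∈ A <;> simp [restrictAway, compose, h]
  elim := by
    rintro _ ⟨X, hX, rfl⟩ _ ⟨Y, hY, rfl⟩ e he
    have hsep : ∀ a, a ∉ A → (a ∈ sep (restrictAway A X) (restrictAway A Y) ↔ a ∈ sep X Y) := by
      intro a ha
      simp [sep, restrictAway, ha]
    have heA : e ∉ A := by
      intro h
      exact he.2 (by simp [restrictAway, h])
    obtain ⟨Z, hZ, hZe, hZs⟩ := M.elim X hX Y hY e ((hsep e heA).1 he)
    refine ⟨_, ⟨Z, hZ, rfl⟩, by simp [restrictAway, heA, hZe], fun a ha => ?_⟩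
    by_cases h : a ∈ A
    · simp [restrictAway, compose, h]
    · have := hZs a (fun h' => ha ((hsep a h).2 h'))
      simpa [restrictAway, compose, h] using this

/-- The contraction `M / A`, by selecting the covectors that vanish on `A`. -/
def con (M : OrientedMatroid α) (A : Set α) : OrientedMatroid α where
  ground := M.ground \ A
  ground_finite := M.ground_finite.subset sdiff_subset
  covectors := {X | X ∈ M.covectors ∧ ∀ a ∈ A, X a = 0}
  supp_subset := fun X hX e he => ⟨M.supp_subset X hX.1 he, fun h => he (hX.2 e h)⟩
  zero_mem := ⟨M.zero_mem, fun _ _ => rfl⟩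
  neg_mem := fun X hX => ⟨M.neg_mem X hX.1, fun a ha => by simp [hX.2 a ha]⟩
  compose_mem := fun X hX Y hY =>
    ⟨M.compose_mem X hX.1 Y hY.1, fun a ha => compose_eq_zero.2 ⟨hX.2 a ha, hY.2 a ha⟩⟩
  elim := fun X hX Y hY e he => by
    obtain ⟨Z, hZ, hZe, hZs⟩ := M.elim X hX.1 Y hY.1 e he
    refine ⟨Z, ⟨hZ, fun a ha => ?_⟩, hZe, hZs⟩
    rw [hZs a (fun h => h.2 (hX.2 a ha)), compose_eq_zero]
    exact ⟨hX.2 a ha, hY.2 a ha⟩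

theorem mem_con {A : Set α} {X : SignVec α} :
    X ∈ (M.con A).covectors ↔ X ∈ M.covectors ∧ ∀ a ∈ A, X a = 0 := Iff.rfl

open Classical in
/-- A sign vector orthogonal to the covectors vanishing at `e` can be given a sign at `e` making it
orthogonal to all covectors. -/
theorem lift_one {V : SignVec α} {e : α} (hVe : V e = 0)
    (H : ∀ X ∈ M.covectors, X e = 0 → (∃ a, V a * X a = 1) → ∃ b, V b * X b = -1) :
    ∃ s, PerpAll M.covectors (Function.update V e s) := by
  by_contra! hcon
  have hup : ∀ s a, a ≠ e → Function.update V e s a = V a := fun s a h => by simp [h]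
  have hcon' : ∀ s, ∃ X ∈ M.covectors, (∃ a, Function.update V e s a * X a = 1) ∧
      ∀ b, Function.update V e s b * X b ≠ -1 := by
    intro s
    have := hcon s
    unfold PerpAll at this
    push Not at this
    exact this
  obtain ⟨X, hX, ⟨a, ha⟩, hXn⟩ := hcon' 0
  have hup0 : Function.update V e 0 = V := by
    rw [← hVe, Function.update_eq_self]
  rw [hup0] at ha hXn
  have hXe : X e ≠ 0 := by
    intro h
    obtain ⟨b, hb⟩ := H X hX h ⟨a, ha⟩
    exact hXn b hb
  obtain ⟨Y, hY, ⟨c, hc⟩, hYn⟩ := hcon' (-X e)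
  have hYn' : ∀ b, V b * Y b ≠ -1 := by
    intro b hb
    by_cases h : b = e
    · subst h; simp [hVe] at hb
    · exact hYn b (by rw [hup _ _ h]; exact hb)
  have hYe0 : Y e ≠ 0 := by
    intro h
    have hce : c ≠ e := by
      rintro rfl; simp [h] at hc
    rw [hup _ _ hce] at hc
    obtain ⟨b, hb⟩ := H Y hY h ⟨c, hc⟩
    exact hYn' b hb
  have hYe : X e = -Y e := by
    have h1 := hYn e
    rw [Function.update_self] at h1
    rcases sgn_ne _ _ hXe hYe0 with h | h
    · exact absurd ((sgn_mul_neg_one _ _).2 ⟨by simpa using hXe, by rw [h]⟩) h1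
    · exact h
  obtain ⟨Z, hZ, hZe, hZs⟩ := M.elim X hX Y hY e ⟨hYe, hXe⟩
  have key : ∀ b, V b ≠ 0 → b ∉ sep X Y := by
    rintro b hb ⟨h1, h2⟩
    have := hXn b
    have := hYn' b
    rw [ne_eq, sgn_mul_neg_one] at *
    rcases sgn_ne _ _ hb h2 with h3 | h3
    · exact this ⟨hb, by rw [h3, h1]⟩
    · tauto
  have haV : V a ≠ 0 := ((sgn_mul_one _ _).1 ha).1
  have hXa : X a ≠ 0 := by
    intro h; simp [h] at ha
  obtain ⟨b, hb⟩ := H Z hZ hZe ⟨a, by rw [hZs a (key a haV), compose_ne hXa]; exact ha⟩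
  have hbV : V b ≠ 0 := ((sgn_mul_neg_one _ _).1 hb).1
  rw [hZs b (key b hbV)] at hb
  by_cases h : X b = 0
  · rw [compose_eq h] at hb; exact hYn' b hb
  · rw [compose_ne h] at hb; exact hXn b hb

theorem lift_finset (F : Finset α) : ∀ (M : OrientedMatroid α) {V : SignVec α},
    (∀ e ∈ F, V e = 0) →
    (∀ X ∈ M.covectors, (∀ e ∈ F, X e = 0) → (∃ a, V a * X a = 1) → ∃ b, V b * X b = -1) →
    ∃ U, (∀ e ∉ F, U e = V e) ∧ PerpAll M.covectors U := by
  classical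
  induction F using Finset.induction_on with
  | empty =>
    intro M V _ H
    exact ⟨V, fun _ _ => rfl, fun X hX => H X hX (by simp)⟩
  | insert e F he ih =>
    intro M V hV H
    obtain ⟨s, hs⟩ := lift_one (M := M.con F) (V := V) (e := e) (hV e (by simp))
      (fun X hX hXe => H X hX.1 (by
        intro a ha
        rcases Finset.mem_insert.1 ha with rfl | ha
        · exact hXe
        · exact hX.2 a ha))
    obtain ⟨U, hU, hU'⟩ := ih M (V := Function.update V e s)
      (fun a ha => by
        have : a ≠ e := by rintro rfl; exact he ha
        rw [Function.update_of_ne this]; exact hV a (by simp [ha]))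
      (fun X hX hXF => hs X ⟨hX, hXF⟩)
    refine ⟨U, fun a ha => ?_, hU'⟩
    simp only [Finset.mem_insert, not_or] at ha
    rw [hU a ha.2, Function.update_of_ne ha.1]

theorem lift_set {F : Set α} (hF : F.Finite) {V : SignVec α} (hV : ∀ e ∈ F, V e = 0)
    (H : ∀ X ∈ M.covectors, (∀ e ∈ F, X e = 0) → (∃ a, V a * X a = 1) → ∃ b, V b * X b = -1) :
    ∃ U, (∀ e ∉ F, U e = V e) ∧ PerpAll M.covectors U := by
  obtain ⟨U, h1, h2⟩ := lift_finset hF.toFinset M (V := V) (by simpa using hV) (by simpa using H)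
  exact ⟨U, by simpa using h1, h2⟩

theorem restrictAway_mem {A : Set α} {e : α} (h : e ∈ A) (X : SignVec α) :
    restrictAway A X e = 0 := by simp [restrictAway, h]

theorem restrictAway_not_mem {A : Set α} {e : α} (h : e ∉ A) (X : SignVec α) :
    restrictAway A X e = X e := by simp [restrictAway, h]

theorem isVector_del {A : Set α} {V : SignVec α} :
    (M.del A).IsVector V ↔ M.IsVector V ∧ ∀ a ∈ A, V a = 0 := by
  have key : (∀ a ∈ A, V a = 0) → ∀ X : SignVec α, ∀ a, V a * restrictAway A X a = V a * X a := by
    intro h X a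
    by_cases ha : a ∈ A
    · simp [h a ha]
    · rw [restrictAway_not_mem ha]
  rw [isVector_iff, isVector_iff]
  constructor
  · rintro ⟨h1, h2⟩
    have h0 : ∀ a ∈ A, V a = 0 := fun a ha => zero_off_supp h1 (fun h => h.2 ha)
    refine ⟨⟨h1.trans sdiff_subset, fun X hX => ?_⟩, h0⟩
    simpa only [key h0] using h2 _ ⟨X, hX, rfl⟩
  · rintro ⟨⟨h1, h2⟩, h0⟩
    refine ⟨fun e he => ⟨h1 he, fun h => he (h0 e h)⟩, ?_⟩
    rintro _ ⟨X, hX, rfl⟩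
    simpa only [key h0] using h2 X hX

theorem isVector_con {A : Set α} {V : SignVec α} :
    (M.con A).IsVector V ↔ ∃ U, M.IsVector U ∧ V = restrictAway A U := by
  constructor
  · intro h
    rw [isVector_iff] at h
    obtain ⟨h1, h2⟩ := h
    have h0 : ∀ a ∈ A, V a = 0 := fun a ha => zero_off_supp h1 (fun h => h.2 ha)
    obtain ⟨U, hU, hU'⟩ := lift_set (M := M) (F := A ∩ M.ground) (V := V)
      (M.ground_finite.subset inter_subset_right) (fun e he => h0 e he.1)
      (fun X hX hXA => h2 X ⟨hX, fun a ha => by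
        by_cases hg : a ∈ M.ground
        · exact hXA a ⟨ha, hg⟩
        · exact zero_off hX hg⟩)
    refine ⟨U, (isVector_iff M).2 ⟨fun e he => ?_, hU'⟩, ?_⟩
    · by_contra hg
      rw [supp, mem_ofPred, hU e (fun h => hg h.2)] at he
      exact hg (h1 he).1
    · funext e
      by_cases he : e ∈ A
      · rw [restrictAway_mem he, h0 e he]
      · rw [restrictAway_not_mem he, hU e (fun h => he h.1)]
  · rintro ⟨U, hU, rfl⟩
    rw [isVector_iff] at *
    refine ⟨fun e he => ?_, fun X hX => ?_⟩
    · by_cases h : e ∈ A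
      · simp [supp, restrictAway, h] at he
      · exact ⟨hU.1 (by simpa [supp, restrictAway, h] using he), h⟩
    · have key : ∀ a, restrictAway A U a * X a = U a * X a := by
        intro a
        by_cases ha : a ∈ A
        · simp [hX.2 a ha]
        · rw [restrictAway_not_mem ha]
      simpa only [key] using hU.2 X hX.1

/-- Double orthogonality: a sign vector on the ground set orthogonal to all vectors is a
covector. -/
theorem double_orth : ∀ (k : ℕ) (M : OrientedMatroid α), M.ground.ncard = k → ∀ {X : SignVec α},
    supp X ⊆ M.ground →
    (∀ V, M.IsVector V → (∃ a, V a * X a = 1) → ∃ b, V b * X b = -1) → X ∈ M.covectors := by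
  classical
  intro k
  induction k using Nat.strong_induction_on with
  | _ k ih =>
  intro M hk X hs hX
  have hlt : ∀ e ∈ M.ground, (M.ground \ {e}).ncard < k := by
    intro e he
    rw [← hk]
    exact ncard_sdiff_singleton_lt_of_mem he M.ground_finite
  by_cases hfull : ∃ e ∈ M.ground, X e = 0
  · obtain ⟨e, he, hXe⟩ := hfull
    have : X ∈ (M.con {e}).covectors := by
      refine ih _ (hlt e he) (M.con {e}) rfl (X := X) ?_ ?_
      · intro a ha
        exact ⟨hs ha, by rintro rfl; exact ha hXe⟩
      · intro V hV
        obtain ⟨U, hU, rfl⟩ := isVector_con.1 hV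
        have key : ∀ a, restrictAway {e} U a * X a = U a * X a := by
          intro a
          by_cases ha : a ∈ ({e} : Set α)
          · rw [mem_singleton_iff] at ha; subst ha; simp [hXe]
          · rw [restrictAway_not_mem ha]
        simpa only [key] using hX U hU
    exact this.1
  · push Not at hfull
    by_contra hnot
    have hY : ∀ e ∈ M.ground, ∃ Y ∈ M.covectors, ∀ a, a ≠ e → Y a = X a := by
      intro e he
      have : restrictAway {e} X ∈ (M.del {e}).covectors := by
        refine ih _ (hlt e he) (M.del {e}) rfl ?_ ?_
        · intro a ha
          by_cases h : a ∈ ({e} : Set α)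
          · exact absurd (restrictAway_mem h X) ha
          · exact ⟨hs (fun h0 => ha (by rw [restrictAway_not_mem h]; exact h0)), h⟩
        · intro V hV
          rw [isVector_del] at hV
          have key : ∀ a, V a * restrictAway {e} X a = V a * X a := by
            intro a
            by_cases ha : a ∈ ({e} : Set α)
            · simp [hV.2 a ha]
            · rw [restrictAway_not_mem ha]
          simpa only [key] using hX V hV.1
      obtain ⟨Y, hY, hYX⟩ := this
      refine ⟨Y, hY, fun a ha => ?_⟩
      have := congrFun hYX a
      rwa [restrictAway_not_mem (by simpa using ha), restrictAway_not_mem (by simpa using ha)]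
        at this
    have hYneg : ∀ e ∈ M.ground, ∃ Y ∈ M.covectors, (∀ a, a ≠ e → Y a = X a) ∧ Y e = -X e := by
      intro e he
      obtain ⟨Y, hYm, hYX⟩ := hY e he
      refine ⟨Y, hYm, hYX, ?_⟩
      by_cases h0 : Y e = 0
      · exfalso
        by_cases hZ : ∃ Z ∈ M.covectors, Z e ≠ 0
        · obtain ⟨Z, hZ, hZe⟩ := hZ
          obtain ⟨Z', hZ', hZ'e, -, -⟩ := exists_sign hZ hZe (hfull e he)
          apply hnot
          have : X = compose Y Z' := by
            funext a
            by_cases ha : a = e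
            · subst ha; rw [compose_eq h0, hZ'e]
            · by_cases hg : a ∈ M.ground
              · rw [compose_ne (by rw [hYX a ha]; exact hfull a hg), hYX a ha]
              · rw [zero_off_supp hs hg, zero_off (M.compose_mem _ hYm _ hZ') hg]
          rw [this]
          exact M.compose_mem _ hYm _ hZ'
        · push Not at hZ
          obtain ⟨b, hb⟩ := hX (fun a => if a = e then X e else 0) (by
            rw [isVector_iff]
            refine ⟨fun a ha => ?_, fun Z hZ' => ?_⟩
            · by_cases h : a = e
              · rwa [h]
              · simp [supp, h] at ha
            · rintro ⟨a, ha⟩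
              by_cases h : a = e
              · subst h; simp [hZ Z hZ'] at ha
              · simp [h] at ha) ⟨e, by
                simp only [if_true]; exact (sgn_mul_one _ _).2 ⟨hfull e he, rfl⟩⟩
          by_cases h : b = e
          · subst h
            simp only [if_true] at hb
            exact sgn_neg_ne _ (hfull b he) ((sgn_mul_neg_one _ _).1 hb).2
          · simp [h] at hb
      · rcases sgn_ne _ _ h0 (hfull e he) with h | h
        · exfalso; apply hnot
          have : X = Y := by
            funext a
            by_cases ha : a = e
            · rw [ha, h]
            · rw [hYX a ha]
          rw [this]; exact hYm
        · exact h
    have hV : M.IsVector X := by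
      rw [isVector_iff]
      refine ⟨hs, fun Z hZ ⟨a, ha⟩ => ?_⟩
      by_contra! hb
      rw [sgn_mul_one] at ha
      obtain ⟨Y, hYm, hYX, -⟩ := hYneg a (hs ha.1)
      apply hnot
      have : X = compose Z Y := by
        funext c
        by_cases hc : Z c = 0
        · rw [compose_eq hc, hYX c]
          rintro rfl
          exact ha.1 (by rw [ha.2, hc])
        · rw [compose_ne hc]
          have h1 := hb c
          have hXc : X c ≠ 0 := hfull c (M.supp_subset Z hZ hc)
          rw [ne_eq, sgn_mul_neg_one] at h1
          exact (sgn_ne _ _ hXc hc).resolve_right (fun h => h1 ⟨hXc, h⟩)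
      rw [this]
      exact M.compose_mem _ hZ _ hYm
    by_cases hne : M.ground.Nonempty
    · obtain ⟨e, he⟩ := hne
      obtain ⟨b, hb⟩ := hX X hV ⟨e, (sgn_mul_one _ _).2 ⟨hfull e he, rfl⟩⟩
      rw [sgn_mul_neg_one] at hb
      exact sgn_neg_ne _ hb.1 hb.2
    · apply hnot
      have : X = 0 := by
        funext a
        exact zero_off_supp hs (fun h => hne ⟨a, h⟩)
      rw [this]; exact M.zero_mem

theorem mem_of_perp {X : SignVec α} (hs : supp X ⊆ M.ground)
    (hX : ∀ V, M.IsVector V → (∃ a, V a * X a = 1) → ∃ b, V b * X b = -1) : X ∈ M.covectors :=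
  double_orth _ M rfl hs hX

theorem _root_.OMHK.PerpAll.compose {V W : SignVec α} (hV : PerpAll M.covectors V)
    (hW : PerpAll M.covectors W) : PerpAll M.covectors (compose V W) := by
  rintro X hX ⟨a, ha⟩
  by_cases h1 : ∃ c, V c * X c = 1
  · obtain ⟨b, hb⟩ := hV X hX h1
    exact ⟨b, by rw [compose_ne ((sgn_mul_neg_one _ _).1 hb).1]; exact hb⟩
  by_cases h2 : ∃ b, V b * X b = -1
  · exact absurd (perpAll_neg M.neg_mem hV hX h2) h1
  push Not at h1 h2
  have hz : ∀ c, X c ≠ 0 → V c = 0 := by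
    intro c hc
    by_contra hVc
    rcases sgn_ne _ _ hVc hc with h | h
    · exact h1 c ((sgn_mul_one _ _).2 ⟨hVc, h⟩)
    · exact h2 c ((sgn_mul_neg_one _ _).2 ⟨hVc, h⟩)
  have hXa : X a ≠ 0 := by intro h; simp [h] at ha
  rw [compose_eq (hz a hXa)] at ha
  obtain ⟨b, hb⟩ := hW X hX ⟨a, ha⟩
  have hXb : X b ≠ 0 := by intro h; simp [h] at hb
  exact ⟨b, by rw [compose_eq (hz b hXb)]; exact hb⟩

/-- The dual oriented matroid, whose covectors are the vectors of `M`. -/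
def dual (M : OrientedMatroid α) : OrientedMatroid α where
  ground := M.ground
  ground_finite := M.ground_finite
  covectors := {V | M.IsVector V}
  supp_subset := fun _ hV => hV.1
  zero_mem := (isVector_iff M).2 ⟨fun e he => absurd rfl he, fun X _ ⟨a, ha⟩ => by simp at ha⟩
  neg_mem := fun V hV => by
    rw [mem_ofPred, isVector_iff] at *
    refine ⟨fun e he => hV.1 (by simpa [supp] using he), fun X hX ⟨a, ha⟩ => ?_⟩
    obtain ⟨b, hb⟩ := hV.2 (-X) (M.neg_mem X hX) ⟨a, by simpa using ha⟩
    exact ⟨b, by simpa using hb⟩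
  compose_mem := fun V hV W hW => by
    rw [mem_ofPred, isVector_iff] at *
    refine ⟨fun e he => ?_, hV.2.compose hW.2⟩
    by_contra hg
    exact he (compose_eq_zero.2 ⟨zero_off_supp hV.1 hg, zero_off_supp hW.1 hg⟩)
  elim := fun V hV W hW e he => by
    classical
    have hV' := (isVector_iff M).1 hV
    have hW' := (isVector_iff M).1 hW
    have hVg : sep V W ⊆ M.ground := fun a ha => hV.1 ha.2
    have hfin : (sep V W \ {e}).Finite := M.ground_finite.subset (sdiff_subset.trans hVg)
    set U : SignVec α := fun a => if a ∈ sep V W then 0 else compose V W a with hUdef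
    have hUV : ∀ a, a ∉ sep V W → V a ≠ 0 → U a = V a := fun a ha h => by
      simp [hUdef, ha, compose_ne h]
    have hUW : ∀ a, a ∉ sep V W → W a ≠ 0 → U a = W a := fun a ha h => by
      by_cases hv : V a = 0
      · simp [hUdef, ha, compose_eq hv]
      · rw [hUV a ha hv]
        exact (sgn_ne _ _ hv h).resolve_right (fun h' => ha ⟨h', hv⟩)
    obtain ⟨Z, hZ, hZ'⟩ := lift_set (M := M) (F := sep V W \ {e}) (V := U) hfin
      (fun a ha => by simp [hUdef, ha.1]) (fun X hX hXF => by
        have hns : ∀ c, c ≠ e → X c ≠ 0 → c ∉ sep V W := fun c hc hXc h => hXc (hXF c ⟨h, hc⟩)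
        rintro ⟨a, ha⟩
        by_cases hXe : X e = 0
        · have hns' : ∀ c, X c ≠ 0 → c ∉ sep V W := fun c hXc =>
            hns c (by rintro rfl; exact hXc hXe) hXc
          have hVWX : ∀ c, X c ≠ 0 → U c = compose V W c := fun c hc => by
            simp [hUdef, hns' c hc]
          have hXa : X a ≠ 0 := by intro h; simp [h] at ha
          rw [hVWX a hXa] at ha
          have hcomp := hV'.2.compose hW'.2 X hX ⟨a, ha⟩
          obtain ⟨b, hb⟩ := hcomp
          have hXb : X b ≠ 0 := by intro h; simp [h] at hb
          exact ⟨b, by rw [hVWX b hXb]; exact hb⟩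
        · rcases sgn_ne _ _ he.2 hXe with h | h
          · obtain ⟨b, hb⟩ := hV'.2 X hX ⟨e, (sgn_mul_one _ _).2 ⟨he.2, h⟩⟩
            have hXb : X b ≠ 0 := by intro h; simp [h] at hb
            have hbe : b ≠ e := by
              rintro rfl
              rw [h, sgn_mul_neg_one] at hb
              exact sgn_neg_ne _ hb.1 hb.2
            exact ⟨b, by
              rw [hUV b (hns b hbe hXb) ((sgn_mul_neg_one _ _).1 hb).1]; exact hb⟩
          · have hWX : W e = X e := by
              have := he.1
              rw [h] at this
              simpa using this.symm
            obtain ⟨b, hb⟩ := hW'.2 X hX ⟨e, (sgn_mul_one _ _).2 ⟨by rwa [hWX], hWX⟩⟩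
            have hXb : X b ≠ 0 := by intro h; simp [h] at hb
            have hbe : b ≠ e := by
              rintro rfl
              rw [hWX, sgn_mul_neg_one] at hb
              exact sgn_neg_ne _ hb.1 hb.2
            exact ⟨b, by
              rw [hUW b (hns b hbe hXb) ((sgn_mul_neg_one _ _).1 hb).1]; exact hb⟩)
    refine ⟨Z, ?_, ?_, ?_⟩
    · rw [mem_ofPred, isVector_iff]
      refine ⟨fun a ha => ?_, hZ'⟩
      by_contra hg
      have h1 : a ∉ sep V W := fun h => hg (hVg h)
      apply ha
      rw [hZ a (fun h => h1 h.1)]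
      simp [hUdef, h1, compose_eq (zero_off_supp hV.1 hg), zero_off_supp hW.1 hg]
    · rw [hZ e (fun h => h.2 rfl)]
      simp [hUdef, he]
    · intro a ha
      rw [hZ a (fun h => ha h.1)]
      simp [hUdef, ha]

end OrientedMatroid

end Basics

/-! ### Conformal decomposition -/

section Conformal

variable {α : Type*} {M : OrientedMatroid α}

namespace OrientedMatroid

/-- Moving from `X` towards `W` until the first entry of `S` in which they disagree vanishes. -/
theorem pencil (S : Set α) {X : SignVec α} (hX : X ∈ M.covectors) :
    ∀ (k : ℕ) {W : SignVec α}, W ∈ M.covectors → (sep X W).ncard = k → (sep X W ∩ S).Nonempty →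
    ∃ T ∈ M.covectors, (∀ e ∉ sep X W, T e = compose X W e) ∧
      (∀ a ∈ S, a ∈ sep X W → T a = 0 ∨ T a = X a) ∧ ∃ a ∈ S, a ∈ sep X W ∧ T a = 0 := by
  intro k
  induction k using Nat.strong_induction_on with
  | _ k ih =>
  intro W hW hk ⟨a, ha, haS⟩
  obtain ⟨Z, hZ, hZa, hZs⟩ := M.elim X hX W hW a ha
  have hfin : (sep X W).Finite := M.ground_finite.subset (fun b hb => M.supp_subset X hX hb.2)
  have hsub : sep X Z ⊆ sep X W := by
    rintro b ⟨h1, h2⟩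
    by_contra hb
    rw [hZs b hb, compose_ne h2] at h1
    exact sgn_neg_ne _ h2 h1
  have hlt : (sep X Z).ncard < k := by
    rw [← hk]
    refine ncard_lt_ncard ⟨hsub, fun h => ?_⟩ hfin
    have := (h ha).1
    rw [hZa, neg_zero] at this
    exact ha.2 this
  by_cases hne : (sep X Z ∩ S).Nonempty
  · obtain ⟨T, hT, h1, h2, c, hc, hcs, hc0⟩ := ih _ hlt hZ rfl hne
    refine ⟨T, hT, fun e he => ?_, fun b hbS hb => ?_, c, hc, hsub hcs, hc0⟩
    · rw [h1 e (fun h => he (hsub h))]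
      by_cases hXe : X e = 0
      · rw [compose_eq hXe, hZs e he]
      · rw [compose_ne hXe, compose_ne hXe]
    · by_cases hbZ : b ∈ sep X Z
      · exact h2 b hbS hbZ
      · right; rw [h1 b hbZ, compose_ne hb.2]
  · refine ⟨Z, hZ, hZs, fun b hbS hb => ?_, a, haS, ha, hZa⟩
    by_cases h0 : Z b = 0
    · exact Or.inl h0
    · rcases sgn_ne _ _ hb.2 h0 with h | h
      · exact Or.inr h.symm
      · exact absurd ⟨b, ⟨h, hb.2⟩, hbS⟩ hne

theorem conf_cocircuit : ∀ (k : ℕ) {X : SignVec α}, X ∈ M.covectors → (supp X).ncard = k →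
    ∀ {e}, X e ≠ 0 → ∃ Y, M.IsCocircuit Y ∧ Conf Y X ∧ Y e = X e := by
  intro k
  induction k using Nat.strong_induction_on with
  | _ k ih =>
  intro X hX hk e he
  by_cases hc : M.IsCocircuit X
  · exact ⟨X, hc, Conf.refl X, rfl⟩
  have hX0 : X ≠ 0 := by rintro rfl; exact he rfl
  have hfin : (supp X).Finite := M.ground_finite.subset (M.supp_subset X hX)
  have step : ∀ T ∈ M.covectors, Conf T X → T e = X e → (∃ a, T a = 0 ∧ X a ≠ 0) →
      ∃ Y, M.IsCocircuit Y ∧ Conf Y X ∧ Y e = X e := by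
    rintro T hT hTX hTe ⟨a, ha, ha'⟩
    obtain ⟨Y, h1, h2, h3⟩ := ih _ (by
      rw [← hk]
      exact ncard_lt_ncard ⟨hTX.supp, fun h => h ha' ha⟩ hfin) hT rfl (e := e) (by rwa [hTe])
    exact ⟨Y, h1, h2.trans hTX, h3.trans hTe⟩
  have : ∃ Y ∈ M.covectors, Y ≠ 0 ∧ supp Y ⊆ supp X ∧ ∃ a, Y a = 0 ∧ X a ≠ 0 := by
    unfold IsCocircuit at hc
    push Not at hc
    obtain ⟨Y, hY, hY0, hs, hne⟩ := hc hX hX0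
    refine ⟨Y, hY, hY0, hs, ?_⟩
    by_contra! h
    exact hne (hs.antisymm (fun a ha h0 => ha (h a h0)))
  obtain ⟨Y, hY, hY0, hs, a, ha, ha'⟩ := this
  have hpen : ∀ W ∈ M.covectors, supp W ⊆ supp X → (sep X W).Nonempty → e ∉ sep X W →
      ∃ Y, M.IsCocircuit Y ∧ Conf Y X ∧ Y e = X e := by
    intro W hW hWs hne hes
    obtain ⟨T, hT, h1, h2, c, -, hc, hc0⟩ := pencil univ hX _ hW rfl (by simpa using hne)
    refine step T hT (fun b => ?_) ?_ ⟨c, hc0, hc.2⟩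
    · by_cases hb : b ∈ sep X W
      · exact h2 b trivial hb
      · rw [h1 b hb]
        by_cases hXb : X b = 0
        · left; rw [compose_eq hXb]; by_contra h; exact hWs h hXb
        · right; rw [compose_ne hXb]
    · rw [h1 e hes, compose_ne he]
  by_cases hYe : Y e = 0
  · obtain ⟨b, hb⟩ : ∃ b, Y b ≠ 0 := by
      by_contra! h; exact hY0 (funext h)
    have hXb : X b ≠ 0 := hs hb
    obtain ⟨W, hW, hWb, hW0, -⟩ := exists_sign hY hb (s := -X b) (by simpa using hXb)
    exact hpen W hW (fun c hc => hs (fun h => hc ((hW0 c).1 h))) ⟨b, by simp [hWb], hXb⟩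
      (fun h => he (by rw [h.1, (hW0 e).1 hYe, neg_zero]))
  · obtain ⟨W, hW, hWe, hW0, -⟩ := exists_sign hY hYe he
    have hWs : supp W ⊆ supp X := fun c hc => hs (fun h => hc ((hW0 c).1 h))
    by_cases hne : (sep X W).Nonempty
    · refine hpen W hW hWs hne (fun h => ?_)
      have := h.1
      rw [hWe] at this
      exact sgn_neg_ne _ he this
    · refine step W hW (fun b => ?_) hWe ⟨a, (hW0 a).1 ha, ha'⟩
      by_cases hb : W b = 0
      · exact Or.inl hb
      · rcases sgn_ne _ _ (hWs hb) hb with h | h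
        · exact Or.inr h.symm
        · exact absurd ⟨b, h, hWs hb⟩ hne

/-- Every covector nonzero at `e` has a cocircuit conformal to it and nonzero at `e`. -/
theorem exists_cocircuit {X : SignVec α} (hX : X ∈ M.covectors) {e : α} (he : X e ≠ 0) :
    ∃ Y, M.IsCocircuit Y ∧ Conf Y X ∧ Y e = X e := conf_cocircuit _ hX rfl he

theorem isCocircuit_dual {X : SignVec α} : M.dual.IsCocircuit X ↔ M.IsCircuit X := Iff.rfl

theorem exists_circuit {V : SignVec α} (hV : M.IsVector V) {e : α} (he : V e ≠ 0) :
    ∃ C, M.IsCircuit C ∧ Conf C V ∧ C e = V e :=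
  exists_cocircuit (M := M.dual) hV he

theorem IsCocircuit.neg {Y : SignVec α} (h : M.IsCocircuit Y) : M.IsCocircuit (-Y) := by
  have hs : supp (-Y) = supp Y := by ext e; simp [supp]
  refine ⟨M.neg_mem _ h.1, fun h' => h.2.1 (by
    funext a; exact (sgn_neg_eq_zero _).1 (congrFun h' a)), fun Z hZ hZ0 => ?_⟩
  rw [hs]
  exact h.2.2 Z hZ hZ0

/-- A covector vanishing wherever the cocircuit `Y` vanishes is `0`, `Y` or `-Y`. -/
theorem IsCocircuit.unique {Y Z : SignVec α} (h : M.IsCocircuit Y) (hZ : Z ∈ M.covectors)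
    (hs : ∀ e, Y e = 0 → Z e = 0) : Z = 0 ∨ Z = Y ∨ Z = -Y := by
  by_contra! hcon
  obtain ⟨h0, h1, h2⟩ := hcon
  obtain ⟨e, he⟩ : ∃ e, Z e ≠ 0 := by by_contra! h; exact h0 (funext h)
  have hsub : supp Z ⊆ supp Y := fun a ha h' => ha (hs a h')
  have hss := h.2.2 Z hZ h0 hsub
  have key : ∀ X ∈ M.covectors, supp X = supp Y → X e = -Y e → X = -Y := by
    intro X hX hXs hXe
    obtain ⟨R, hR, hRe, hRs⟩ := M.elim X hX Y h.1 e ⟨hXe, by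
      have : e ∈ supp X := by rw [hXs]; exact hsub he
      exact this⟩
    have hRsub : supp R ⊆ supp Y := by
      intro a ha hYa
      have hXa : X a = 0 := by
        by_contra h'
        have : a ∈ supp Y := by rw [← hXs]; exact h'
        exact this hYa
      apply ha
      rw [hRs a (fun h' => h'.2 hXa), compose_eq hXa, hYa]
    have hR0 : R = 0 := by
      by_contra hR0
      have := h.2.2 R hR hR0 hRsub
      have he' : e ∈ supp R := by rw [this]; exact hsub he
      exact he' hRe
    funext a
    by_cases ha : a ∈ sep X Y
    · exact ha.1
    · have := hRs a ha
      rw [hR0] at this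
      obtain ⟨h3, h4⟩ := compose_eq_zero.1 this.symm
      simp [h3, h4]
  rcases sgn_ne _ _ he (hsub he) with h' | h'
  · have := key (-Z) (M.neg_mem _ hZ) (by rw [← hss]; ext a; simp [supp]) (by simp [h'])
    exact h1 (neg_injective this)
  · exact h2 (key Z hZ hss h')

theorem isCocircuit_of_unique {Y : SignVec α} (hY : Y ∈ M.covectors) (h0 : Y ≠ 0)
    (h : ∀ Z ∈ M.covectors, (∀ e, Y e = 0 → Z e = 0) → Z = 0 ∨ Z = Y ∨ Z = -Y) :
    M.IsCocircuit Y := by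
  refine ⟨hY, h0, fun Z hZ hZ0 hs => ?_⟩
  rcases h Z hZ (fun e he => by by_contra h'; exact hs h' he) with h' | h' | h'
  · exact absurd h' hZ0
  · rw [h']
  · rw [h']; ext a; simp [supp]

theorem mem_of_circuits {X : SignVec α} (hs : supp X ⊆ M.ground)
    (hX : ∀ V, M.IsCircuit V → (∃ a, V a * X a = 1) → ∃ b, V b * X b = -1) :
    X ∈ M.covectors := by
  refine mem_of_perp hs (fun V hV ⟨a, ha⟩ => ?_)
  by_contra! hb
  obtain ⟨C, hC, hCV, hCa⟩ := exists_circuit hV ((sgn_mul_one _ _).1 ha).1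
  obtain ⟨b, hb'⟩ := hX C hC ⟨a, by rw [hCa]; exact ha⟩
  refine hb b ?_
  rw [← hCV.eq_of_ne ((sgn_mul_neg_one _ _).1 hb').1]
  exact hb'

/-- An oriented matroid is determined by its ground set and its circuits. -/
theorem ext_circuits {M M' : OrientedMatroid α} (hg : M.ground = M'.ground)
    (hc : ∀ C, M.IsCircuit C ↔ M'.IsCircuit C) : M = M' := by
  refine ext' hg (Subset.antisymm (fun X hX => ?_) (fun X hX => ?_))
  · refine mem_of_circuits (hg ▸ M.supp_subset X hX) (fun V hV => ?_)
    exact ((isVector_iff M).1 ((hc V).2 hV).1).2 X hX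
  · refine mem_of_circuits (hg.symm ▸ M'.supp_subset X hX) (fun V hV => ?_)
    exact ((isVector_iff M').1 ((hc V).1 hV).1).2 X hX

theorem isDeletion_del (M : OrientedMatroid α) (A : Set α) : IsDeletion M A (M.del A) := by
  refine ⟨rfl, fun X => ?_⟩
  unfold IsCircuit
  rw [isVector_del]
  constructor
  · rintro ⟨⟨h1, h2⟩, h3, h4⟩
    refine ⟨⟨h1, h3, fun Y hY hY0 hs => h4 Y (isVector_del.2 ⟨hY, fun a ha => ?_⟩) hY0 hs⟩, h2⟩
    by_contra h
    exact hs h (h2 a ha)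
  · rintro ⟨⟨h1, h3, h4⟩, h2⟩
    exact ⟨⟨h1, h2⟩, h3, fun Y hY hY0 hs => h4 Y (isVector_del.1 hY).1 hY0 hs⟩

theorem _root_.OMHK.IsDeletion.eq {A : Set α} {M' : OrientedMatroid α} (h : IsDeletion M A M') :
    M' = M.del A := by
  have h' := isDeletion_del M A
  exact ext_circuits (h.1.trans h'.1.symm) (fun C => (h.2 C).trans (h'.2 C).symm)

theorem isContraction_con (M : OrientedMatroid α) (A : Set α) : IsContraction M A (M.con A) := by
  have hvec : ∀ V, (M.con A).IsVector V → V ≠ 0 → ∃ C, M.IsCircuit C ∧ restrictAway A C ≠ 0 ∧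
      Conf (restrictAway A C) V := by
    intro V hV h0
    obtain ⟨U, hU, rfl⟩ := isVector_con.1 hV
    obtain ⟨e, he⟩ : ∃ e, restrictAway A U e ≠ 0 := by by_contra! h; exact h0 (funext h)
    have heA : e ∉ A := fun h => he (restrictAway_mem h U)
    rw [restrictAway_not_mem heA] at he
    obtain ⟨C, hC, hCU, hCe⟩ := exists_circuit hU he
    refine ⟨C, hC, fun h => he ?_, fun a => ?_⟩
    · rw [← hCe, ← restrictAway_not_mem heA C, h]; rfl
    · by_cases ha : a ∈ A
      · exact Or.inl (restrictAway_mem ha C)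
      · rw [restrictAway_not_mem ha, restrictAway_not_mem ha]; exact hCU a
  have hcv : ∀ Y, M.IsCircuit Y → (M.con A).IsVector (restrictAway A Y) :=
    fun Y hY => isVector_con.2 ⟨Y, hY.1, rfl⟩
  refine ⟨rfl, fun X => ⟨?_, ?_⟩⟩
  · rintro ⟨h1, h2, h3⟩
    refine ⟨h2, ?_, ?_⟩
    · obtain ⟨C, hC, hC0, hCX⟩ := hvec X h1 h2
      refine ⟨C, hC, ?_⟩
      have hs := h3 _ (hcv C hC) hC0 hCX.supp
      funext a
      rcases hCX a with h | h
      · have : a ∉ supp X := by rw [← hs]; exact fun h' => h' h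
        rw [h]; by_contra h'; exact this h'
      · exact h.symm
    · rintro Z hZ ⟨Y, hY, rfl⟩ hs
      exact h3 _ (hcv Y hY) hZ hs
  · rintro ⟨h2, ⟨C, hC, rfl⟩, h3⟩
    refine ⟨hcv C hC, h2, fun Y hY hY0 hs => ?_⟩
    obtain ⟨C', hC', h0, hconf⟩ := hvec Y hY hY0
    have := h3 _ h0 ⟨C', hC', rfl⟩ (hconf.supp.trans hs)
    exact hs.antisymm (by rw [← this]; exact hconf.supp)

theorem _root_.OMHK.IsContraction.eq {A : Set α} {M' : OrientedMatroid α}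
    (h : IsContraction M A M') : M' = M.con A := by
  have h' := isContraction_con M A
  exact ext_circuits (h.1.trans h'.1.symm) (fun C => (h.2 C).trans (h'.2 C).symm)

/-! ### Independence and rank through covectors -/

/-- Independence, expressed by covectors: each element of `I` is separated from the others. -/
def CIndep (M : OrientedMatroid α) (I : Set α) : Prop :=
  I ⊆ M.ground ∧ ∀ e ∈ I, ∃ X ∈ M.covectors, X e ≠ 0 ∧ ∀ a ∈ I, a ≠ e → X a = 0

/-- `I` spans `S`: every covector vanishing on `I` vanishes on `S`. -/
def Spans (M : OrientedMatroid α) (I S : Set α) : Prop :=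
  ∀ X ∈ M.covectors, (∀ a ∈ I, X a = 0) → ∀ a ∈ S, X a = 0

theorem CIndep.finite {I : Set α} (h : M.CIndep I) : I.Finite := M.ground_finite.subset h.1

theorem CIndep.mono {I J : Set α} (h : M.CIndep J) (hs : I ⊆ J) : M.CIndep I := by
  refine ⟨hs.trans h.1, fun e he => ?_⟩
  obtain ⟨X, h1, h2, h3⟩ := h.2 e (hs he)
  exact ⟨X, h1, h2, fun a ha => h3 a (hs ha)⟩

theorem cIndep_iff {I : Set α} : M.CIndep I ↔ M.Indep I := by
  classical
  refine and_congr_right fun hg => ⟨fun h C hC hs => ?_, fun h e he => ?_⟩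
  · obtain ⟨e, he⟩ : ∃ e, C e ≠ 0 := by by_contra! h; exact hC.2.1 (funext h)
    obtain ⟨X, hX, hXe, hX0⟩ := h e (hs he)
    have hperp := ((isVector_iff M).1 hC.1).2
    obtain ⟨X', hX', hX'e, hz, -⟩ := exists_sign hX hXe he
    obtain ⟨b, hb⟩ := hperp X' hX' ⟨e, (sgn_mul_one _ _).2 ⟨he, hX'e.symm⟩⟩
    have hCb : C b ≠ 0 := ((sgn_mul_neg_one _ _).1 hb).1
    by_cases hbe : b = e
    · subst hbe
      rw [hX'e, sgn_mul_neg_one] at hb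
      exact sgn_neg_ne _ he hb.2
    · rw [(hz b).1 (hX0 b (hs hCb) hbe)] at hb
      simp at hb
  · have : (fun a => if a = e then 1 else 0 : SignVec α) ∈ (M.del Iᶜ).covectors := by
      refine mem_of_circuits (fun a ha => ?_) (fun V hV => ?_)
      · by_cases hae : a = e
        · subst hae; exact ⟨hg he, fun h => h he⟩
        · simp [supp, hae] at ha
      · rw [(isDeletion_del M Iᶜ).2] at hV
        refine absurd (fun a ha => ?_) (h V hV.1)
        by_contra hI
        exact ha (hV.2 a hI)
    obtain ⟨X, hX, hXe⟩ := this
    refine ⟨X, hX, ?_, fun a ha hae => ?_⟩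
    · have := congrFun hXe e
      rw [restrictAway_not_mem (by simpa using he)] at this
      simp [this]
    · have := congrFun hXe a
      rw [restrictAway_not_mem (by simpa using ha)] at this
      simp [this, hae]

theorem CIndep.insert {I : Set α} (h : M.CIndep I) {q : SignVec α} (hq : q ∈ M.covectors)
    (hqI : ∀ a ∈ I, q a = 0) {x : α} (hx : q x ≠ 0) : M.CIndep (insert x I) := by
  refine ⟨insert_subset (M.supp_subset q hq hx) h.1, ?_⟩
  rintro e (rfl | he)
  · refine ⟨q, hq, hx, fun a ha hae => hqI a (ha.resolve_left hae)⟩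
  · obtain ⟨X, hX, hXe, hX0⟩ := h.2 e he
    by_cases hXx : X x = 0
    · refine ⟨X, hX, hXe, ?_⟩
      rintro a (rfl | ha) hae
      · exact hXx
      · exact hX0 a ha hae
    · obtain ⟨Z, hZ, hZx, hZ1, -⟩ := elim_pm hX hq hXx hx
      refine ⟨Z, hZ, by rwa [hZ1 e (hqI e he)], ?_⟩
      rintro a (rfl | ha) hae
      · exact hZx
      · rw [hZ1 a (hqI a ha), hX0 a ha hae]

theorem exists_basis : ∀ (k : ℕ) {J S : Set α}, (M.ground \ J).ncard = k → M.CIndep J → J ⊆ S →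
    ∃ I, J ⊆ I ∧ I ⊆ S ∧ M.CIndep I ∧ M.Spans I S := by
  intro k
  induction k using Nat.strong_induction_on with
  | _ k ih =>
  intro J S hk hJ hJS
  by_cases hsp : M.Spans J S
  · exact ⟨J, Subset.rfl, hJS, hJ, hsp⟩
  · unfold Spans at hsp
    push Not at hsp
    obtain ⟨q, hq, hqJ, x, hxS, hx⟩ := hsp
    have hxJ : x ∉ J := fun h => hx (hqJ x h)
    obtain ⟨I, h1, h2, h3, h4⟩ := ih _ (by
      rw [← hk]
      refine ncard_lt_ncard ⟨sdiff_subset_sdiff_right (subset_insert x J), fun h => ?_⟩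
        (M.ground_finite.subset sdiff_subset)
      exact (h ⟨M.supp_subset q hq hx, hxJ⟩).2 (mem_insert x J)) rfl (hJ.insert hq hqJ hx)
      (insert_subset hxS hJS)
    exact ⟨I, (subset_insert x J).trans h1, h2, h3, h4⟩

theorem cIndep_empty : M.CIndep ∅ := ⟨empty_subset _, by simp⟩

theorem CIndep.exists_basis {J S : Set α} (hJ : M.CIndep J) (hJS : J ⊆ S) :
    ∃ I, J ⊆ I ∧ I ⊆ S ∧ M.CIndep I ∧ M.Spans I S := OrientedMatroid.exists_basis _ rfl hJ hJS

theorem exists_minimal_span {j : α} (hj : ∃ X ∈ M.covectors, X j ≠ 0) (I : Finset α) :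
    M.Spans I {j} →
    ∃ i ∈ I, ∃ I0 ⊆ I, i ∉ I0 ∧ (∃ X ∈ M.covectors, X j ≠ 0 ∧ ∀ a ∈ I0, X a = 0) ∧
      M.Spans (insert i I0 : Set α) {j} := by
  classical
  induction I using Finset.induction_on with
  | empty =>
    intro h
    obtain ⟨X, hX, hXj⟩ := hj
    exact absurd (h X hX (by simp) j rfl) hXj
  | insert i I hi ih =>
    intro h
    by_cases hI : M.Spans I {j}
    · obtain ⟨i', hi', I0, h0, h1, h2, h3⟩ := ih hI
      exact ⟨i', by simp [hi'], I0, h0.trans (by simp), h1, h2, h3⟩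
    · unfold Spans at hI
      push Not at hI
      obtain ⟨X, hX, hX0, b, hb, hXb⟩ := hI
      rw [mem_singleton_iff] at hb; subst hb
      exact ⟨i, by simp, I, by simp, hi, ⟨X, hX, hXb, by simpa using hX0⟩, by simpa using h⟩

/-- Steinitz exchange: an independent set spanned by `I` has at most `|I|` elements. -/
theorem steinitz_finset : ∀ (k : ℕ) (M : OrientedMatroid α) {J : Set α} (I : Finset α),
    I.card = k → M.CIndep J → M.Spans I J → J.ncard ≤ I.card := by
  classical
  intro k
  induction k with
  | zero =>
    intro M J I hk hJ hs
    have hI : I = ∅ := Finset.card_eq_zero.1 hk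
    subst hI
    have : J = ∅ := by
      rw [eq_empty_iff_forall_notMem]
      intro j hj
      obtain ⟨X, hX, hXj, -⟩ := hJ.2 j hj
      exact hXj (hs X hX (by simp) j hj)
    simp [this]
  | succ k ih =>
    intro M J I hk hJ hs
    by_cases hJe : J.Nonempty
    swap
    · rw [not_nonempty_iff_eq_empty] at hJe; simp [hJe]
    obtain ⟨j, hj⟩ := hJe
    obtain ⟨X, hX, hXj, -⟩ := hJ.2 j hj
    obtain ⟨i, hi, I0, hI0, hiI0, ⟨X, hX, hXj, hX0⟩, hsp⟩ :=
      exists_minimal_span (M := M) ⟨X, hX, hXj⟩ I (fun X hX h a ha => by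
        rw [mem_singleton_iff] at ha; subst ha; exact hs X hX h a hj)
    have hXi : X i ≠ 0 := by
      intro h
      refine hXj (hsp X hX ?_ j rfl)
      rintro a (rfl | ha)
      · exact h
      · exact hX0 a ha
    have hJ' : (M.con {j}).CIndep (J \ {j}) := by
      refine ⟨fun a ha => ⟨hJ.1 ha.1, ha.2⟩, fun e he => ?_⟩
      obtain ⟨Z, hZ, hZe, hZ0⟩ := hJ.2 e he.1
      refine ⟨Z, ⟨hZ, ?_⟩, hZe, fun a ha => hZ0 a ha.1⟩
      rintro a rfl
      exact hZ0 a hj (fun h => he.2 h.symm)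
    have hcard := ih (M.con {j}) (J := J \ {j}) (I.erase i) (by
      rw [Finset.card_erase_of_mem hi, hk]; rfl) hJ' (by
      rintro Z ⟨hZ, hZj⟩ hZI a ha
      refine hs Z hZ (fun b hb => ?_) a ha.1
      by_cases hbi : b = i
      · subst hbi
        by_contra hZb
        obtain ⟨R, hR, hRi, hR1, -⟩ := elim_pm hX hZ hXi hZb
        have hZj0 := hZj j rfl
        have : R j = 0 := by
          refine hsp R hR ?_ j rfl
          rintro c (rfl | hc)
          · exact hRi
          · have hcb : c ≠ b := by rintro rfl; exact hiI0 hc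
            rw [hR1 c (hZI c (by simp [hcb, hI0 hc]))]
            exact hX0 c hc
        rw [hR1 j hZj0] at this
        exact hXj this
      · exact hZI b (by simp [hbi]; exact hb))
    rw [Finset.card_erase_of_mem hi] at hcard
    have := ncard_sdiff_singleton_add_one hj hJ.finite
    omega

theorem CIndep.ncard_le {I J : Set α} (hJ : M.CIndep J) (hI : I.Finite) (h : M.Spans I J) :
    J.ncard ≤ I.ncard := by
  have := steinitz_finset _ M (J := J) hI.toFinset rfl hJ (by simpa using h)
  rwa [← ncard_eq_toFinset_card I hI] at this

theorem rk_eq {I S : Set α} (hI : M.CIndep I) (hIS : I ⊆ S) (hs : M.Spans I S) :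
    M.rk S = I.ncard := by
  refine IsGreatest.csSup_eq ⟨⟨I, hIS, cIndep_iff.1 hI, rfl⟩, ?_⟩
  rintro _ ⟨J, hJS, hJ, rfl⟩
  exact (cIndep_iff.2 hJ).ncard_le hI.finite (fun X hX h a ha => hs X hX h a (hJS ha))

theorem rank_eq {I : Set α} (hI : M.CIndep I) (hs : M.Spans I M.ground) : M.rank = I.ncard :=
  rk_eq hI hI.1 hs

theorem CIndep.ncard_le_rank {J : Set α} (hJ : M.CIndep J) : J.ncard ≤ M.rank := by
  obtain ⟨I, -, hI, hI', hs⟩ := (cIndep_empty (M := M)).exists_basis (empty_subset M.ground)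
  rw [rank_eq hI' hs]
  exact hJ.ncard_le hI'.finite (fun X hX h a ha => hs X hX h a (hJ.1 ha))

/-- A basis extending a given independent set, with its cardinality. -/
theorem CIndep.exists_base {J : Set α} (hJ : M.CIndep J) :
    ∃ I, J ⊆ I ∧ M.CIndep I ∧ M.Spans I M.ground ∧ I.ncard = M.rank := by
  obtain ⟨I, h1, -, h2, h3⟩ := hJ.exists_basis hJ.1
  exact ⟨I, h1, h2, h3, (rank_eq h2 h3).symm⟩

theorem CIndep.spans_of_rank {I : Set α} (hI : M.CIndep I) (h : M.rank ≤ I.ncard) :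
    M.Spans I M.ground := by
  obtain ⟨B, h1, h2, h3, h4⟩ := hI.exists_base
  have : I = B := eq_of_subset_of_ncard_le h1 (by omega) h2.finite
  rw [this]; exact h3

theorem Spans.eq_zero {I : Set α} (h : M.Spans I M.ground) {X : SignVec α} (hX : X ∈ M.covectors)
    (h0 : ∀ a ∈ I, X a = 0) : X = 0 := by
  funext a
  by_cases ha : a ∈ M.ground
  · exact h X hX h0 a ha
  · exact zero_off hX ha

/-- Enlarging an independent set by a family dual to covectors. -/
theorem CIndep.union_family {ι : Type*} {J : Set α} (hJ : M.CIndep J) (F : Finset ι) (D : ι → α)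
    (q : ι → SignVec α) : (∀ e ∈ F, q e ∈ M.covectors ∧ q e (D e) ≠ 0 ∧ (∀ a ∈ J, q e a = 0) ∧
      ∀ e' ∈ F, e' ≠ e → q e (D e') = 0) →
    M.CIndep (J ∪ D '' F) ∧ (J ∪ D '' F).ncard = J.ncard + F.card := by
  classical
  induction F using Finset.induction_on with
  | empty => intro _; simpa using hJ
  | insert e F he ih =>
    intro h
    obtain ⟨h1, h2⟩ := ih (fun x hx => by
      obtain ⟨a1, a2, a3, a4⟩ := h x (by simp [hx])
      exact ⟨a1, a2, a3, fun e' he' => a4 e' (by simp [he'])⟩)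
    obtain ⟨a1, a2, a3, a4⟩ := h e (by simp)
    have hz : ∀ a ∈ J ∪ D '' F, q e a = 0 := by
      rintro a (ha | ⟨e', he', rfl⟩)
      · exact a3 a ha
      · exact a4 e' (by simp; right; exact he') (by rintro rfl; exact he he')
    have heq : J ∪ D '' (↑(Insert.insert e F) : Set ι) = Insert.insert (D e) (J ∪ D '' F) := by
      rw [Finset.coe_insert, image_insert_eq, union_insert]
    rw [heq]
    refine ⟨h1.insert a1 hz a2, ?_⟩
    rw [ncard_insert_of_notMem (fun hh => a2 (hz _ hh)) h1.finite, h2,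
      Finset.card_insert_of_notMem he]
    ring

end OrientedMatroid

end Conformal

/-! ### The adjoint as an oriented matroid on all cocircuits -/

section Adjoint

variable {α : Type*}

/-- An adjoint of `N`, transported to the set of all cocircuits of `N`: its covectors are odd
functions of the cocircuits, they include the evaluations `Y ↦ Y e`, and its rank does not exceed
that of `N`. -/
structure Adj (N : OrientedMatroid α) (A : OrientedMatroid (SignVec α)) : Prop where
  cocircuit : ∀ Y ∈ A.ground, N.IsCocircuit Y
  odd : ∀ q ∈ A.covectors, ∀ Y, q (-Y) = -q Y
  coord : ∀ e ∈ N.ground, ∃ z ∈ A.covectors, ∀ Y, N.IsCocircuit Y → z Y = Y e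
  card_le : ∀ J, A.CIndep J → J.ncard ≤ N.rank

/-- Pullback of an oriented matroid along a map `φ`, with reorientation `ε`; entries with
`ε = 0` are not in the ground set. -/
def pullback {β γ : Type*} (A : OrientedMatroid β) (φ : γ → β) (ε : γ → SignType)
    (hfin : {y | ε y ≠ 0}.Finite) : OrientedMatroid γ where
  ground := {y | ε y ≠ 0}
  ground_finite := hfin
  covectors := {q | ∃ Q ∈ A.covectors, ∀ y, q y = ε y * Q (φ y)}
  supp_subset := by
    rintro q ⟨Q, -, hq⟩ y hy h
    exact hy (by rw [hq, h, zero_mul])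
  zero_mem := ⟨0, A.zero_mem, fun y => by simp⟩
  neg_mem := by
    rintro q ⟨Q, hQ, hq⟩
    exact ⟨-Q, A.neg_mem Q hQ, fun y => by simp [hq]⟩
  compose_mem := by
    rintro q ⟨Q, hQ, hq⟩ q' ⟨Q', hQ', hq'⟩
    refine ⟨_, A.compose_mem Q hQ Q' hQ', fun y => ?_⟩
    by_cases h1 : ε y = 0
    · simp [compose, hq, hq', h1]
    · by_cases h2 : Q (φ y) = 0 <;> simp [compose, hq, hq', h1, h2]
  elim := by
    rintro q ⟨Q, hQ, hq⟩ q' ⟨Q', hQ', hq'⟩ y hy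
    have hs : ∀ x, ε x ≠ 0 → (x ∈ sep q q' ↔ φ x ∈ sep Q Q') := by
      intro x hx
      simp only [sep, mem_ofPred, hq, hq']
      generalize ε x = a at *
      generalize Q (φ x) = b
      generalize Q' (φ x) = c
      revert a b c; decide
    have hy0 : ε y ≠ 0 := by
      intro h; exact hy.2 (by rw [hq, h, zero_mul])
    obtain ⟨Z, hZ, hZe, hZs⟩ := A.elim Q hQ Q' hQ' (φ y) ((hs y hy0).1 hy)
    refine ⟨fun y => ε y * Z (φ y), ⟨Z, hZ, fun _ => rfl⟩, by simp [hZe], fun x hx => ?_⟩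
    by_cases h1 : ε x = 0
    · simp [compose, hq, hq', h1]
    · show ε x * Z (φ x) = _
      rw [hZs (φ x) (fun h => hx ((hs x h1).2 h))]
      by_cases h2 : Q (φ x) = 0 <;> simp [compose, hq, hq', h1, h2]

theorem _root_.OMHK.HasAdjoint.exists_adj {N : OrientedMatroid ℕ} (h : HasAdjoint N) :
    ∃ A : OrientedMatroid (SignVec ℕ), Adj N A := by
  classical
  obtain ⟨β, A, am, hrank, hcoc, hinj, hxor, hcoord⟩ := h
  have hφ : ∀ Y, N.IsCocircuit Y → ∃ p : β × SignType, p.1 ∈ A.ground ∧ p.2 ≠ 0 ∧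
      ∀ e, am p.1 e = p.2 * Y e := by
    intro Y hY
    rcases hxor Y hY with ⟨⟨b, hb, hbY⟩, -⟩ | ⟨⟨b, hb, hbY⟩, -⟩
    · exact ⟨(b, 1), hb, by simp, fun e => by simp [hbY]⟩
    · exact ⟨(b, -1), hb, by simp, fun e => by simp [hbY]⟩
  by_cases hβ : Nonempty β
  swap
  · -- without elements of the adjoint there are no cocircuits, and the rank is zero
    have hno : ∀ Y, ¬ N.IsCocircuit Y := fun Y hY => hβ ⟨(hφ Y hY).choose.1⟩
    refine ⟨pullback (γ := SignVec ℕ) N (fun _ => 0) (fun _ => 0) (by simp), ?_, ?_, ?_, ?_⟩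
    · intro Y hY; exact absurd rfl hY
    · rintro q ⟨Q, -, hq⟩ Y; simp [hq]
    · intro e he; exact ⟨0, OrientedMatroid.zero_mem _, fun Y hY => absurd hY (hno Y)⟩
    · intro J hJ
      have : J = ∅ := by
        rw [eq_empty_iff_forall_notMem]
        intro Y hY; exact absurd rfl (hJ.1 hY)
      simp [this]
  choose! p hp using hφ
  have hpneg : ∀ Y, N.IsCocircuit Y → (p (-Y)).1 = (p Y).1 ∧ (p (-Y)).2 = -(p Y).2 := by
    intro Y hY
    obtain ⟨h1, h2, h3⟩ := hp Y hY
    obtain ⟨h1', h2', h3'⟩ := hp (-Y) hY.neg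
    have hsign : (p (-Y)).2 = -(p Y).2 := by
      rcases sgn_ne _ _ h2' h2 with h | h
      · exfalso
        have e1 : ∀ e, am (p (-Y)).1 e = - am (p Y).1 e := by
          intro e; rw [h3', h3, h]; simp
        have hX : N.IsCocircuit (am (p Y).1) := hcoc _ h1
        rcases hxor _ hX with ⟨-, h4⟩ | ⟨-, h4⟩
        · exact h4 ⟨_, h1', funext e1⟩
        · exact h4 ⟨_, h1, rfl⟩
      · exact h
    refine ⟨hinj h1' h1 ?_, hsign⟩
    funext e
    rw [h3', h3, hsign]; simp
  set ε : SignVec ℕ → SignType := fun Y => if N.IsCocircuit Y then (p Y).2 else 0 with hε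
  have hεne : ∀ Y, ε Y ≠ 0 ↔ N.IsCocircuit Y := by
    intro Y
    by_cases h : N.IsCocircuit Y
    · simp [hε, h, (hp Y h).2.1]
    · simp [hε, h]
  have hεc : ∀ Y, N.IsCocircuit Y → ε Y = (p Y).2 := fun Y h => by simp [hε, h]
  have hfin : {Y | ε Y ≠ 0}.Finite := by
    refine ((A.ground_finite.image am).union (A.ground_finite.image (fun b => -am b))).subset ?_
    intro Y hY
    have hY' := (hεne Y).1 hY
    rcases hxor Y hY' with ⟨⟨b, hb, hbY⟩, -⟩ | ⟨⟨b, hb, hbY⟩, -⟩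
    · exact Or.inl ⟨b, hb, hbY⟩
    · exact Or.inr ⟨b, hb, by simp [hbY]⟩
  have hcneg : ∀ Y, N.IsCocircuit (-Y) ↔ N.IsCocircuit Y := fun Y =>
    ⟨fun h => by simpa using h.neg, fun h => h.neg⟩
  refine ⟨pullback A (fun Y => (p Y).1) ε hfin, fun Y hY => (hεne Y).1 hY, ?_, ?_, ?_⟩
  · rintro q ⟨Q, -, hq⟩ Y
    rw [hq, hq]
    beta_reduce
    by_cases hY : N.IsCocircuit Y
    · rw [hεc _ hY.neg, hεc _ hY, (hpneg Y hY).1, (hpneg Y hY).2, neg_mul]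
    · have h1 : ε Y = 0 := by by_contra h; exact hY ((hεne Y).1 h)
      have h2 : ε (-Y) = 0 := by
        by_contra h; exact hY ((hcneg Y).1 ((hεne (-Y)).1 h))
      simp [h1, h2]
  · intro e he
    refine ⟨_, ⟨_, (hcoord e he).1, fun Y => rfl⟩, fun Y hY => ?_⟩
    simp only [(hp Y hY).1, if_true, (hp Y hY).2.2, hεc Y hY]
    have := (hp Y hY).2.1
    generalize (p Y).2 = a at *
    generalize Y e = b
    revert a b; decide
  · intro J hJ
    have hinjJ : Set.InjOn (fun Y => (p Y).1) J := by
      intro Y hY Y' hY' heq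
      by_contra hne
      obtain ⟨q, ⟨Q, hQ, hq⟩, hqY, hq0⟩ := hJ.2 Y hY
      have h0 := hq0 Y' hY' (Ne.symm hne)
      rw [hq] at h0 hqY
      have hY'c : ε Y' ≠ 0 := hJ.1 hY'
      have heq' : (p Y).1 = (p Y').1 := heq
      rcases mul_eq_zero.1 h0 with h | h
      · exact hY'c h
      · beta_reduce at h
        rw [← heq'] at h
        exact hqY (by simp [h])
    rw [← hinjJ.ncard_image, ← hrank]
    refine OrientedMatroid.CIndep.ncard_le_rank ⟨?_, ?_⟩
    · rintro _ ⟨Y, hY, rfl⟩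
      exact (hp Y ((hεne Y).1 (hJ.1 hY))).1
    · rintro _ ⟨Y, hY, rfl⟩
      obtain ⟨q, ⟨Q, hQ, hq⟩, hqY, hq0⟩ := hJ.2 Y hY
      refine ⟨Q, hQ, fun h => hqY (by rw [hq]; simp only at h; simp [h]), ?_⟩
      rintro _ ⟨Y', hY', rfl⟩ hne
      have h0 := hq0 Y' hY' (by rintro rfl; exact hne rfl)
      rw [hq] at h0
      exact (mul_eq_zero.1 h0).resolve_left (hJ.1 hY')

/-! ### Sign functions on the cocircuits of a cone -/

variable {N : OrientedMatroid α} {A : OrientedMatroid (SignVec α)}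

/-- If a covector `q` of the adjoint vanishes at `Y` and is nonpositive on the cocircuits, zero on
`G0`, of the smallest cone having `Y` in its relative interior, then `q` vanishes on all cocircuits
zero on `G0`: otherwise the adjoint would contain more than `rank N` independent elements. -/
theorem Adj.interior (hA : Adj N A) {G0 : Set α} {q : SignVec (SignVec α)} (hq : q ∈ A.covectors)
    {Y : SignVec α} (hY : N.IsCocircuit Y) (hY0 : ∀ a ∈ G0, Y a = 0) (hqY : q Y = 0)
    (H : ∀ W, N.IsCocircuit W → (∀ a ∈ G0, W a = 0) → (∀ a, Y a ≠ 0 → W a = 0 ∨ W a = Y a) →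
      q W ≠ 1)
    {W : SignVec α} (hW : N.IsCocircuit W) (hW0 : ∀ a ∈ G0, W a = 0) : q W = 0 := by
  classical
  choose! Zc hZc hZcv using hA.coord
  obtain ⟨I0, -, hI0G, hI0, hsp0⟩ := (cIndep_empty (M := N)).exists_basis (empty_subset G0)
  obtain ⟨I1, hI01, hI1Y, hI1, hsp1⟩ := hI0.exists_basis (S := {a | Y a = 0})
    (fun a ha => hY0 a (hI0G ha))
  obtain ⟨e0, he0⟩ : ∃ e, Y e ≠ 0 := by by_contra! h; exact hY.2.1 (funext h)
  have he0g : e0 ∈ N.ground := N.supp_subset Y hY.1 he0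
  have hI := hI1.insert hY.1 (fun a ha => hI1Y ha) he0
  have he0I : e0 ∉ I1 := fun h => he0 (hI1Y h)
  have hrank : N.rank = I1.ncard + 1 := by
    rw [← ncard_insert_of_notMem he0I hI1.finite]
    refine rank_eq hI (fun X hX hXI a _ => ?_)
    have hXe : X e0 = 0 := hXI e0 (mem_insert _ _)
    rcases hY.unique hX (fun b hb => hsp1 X hX (fun c hc => hXI c (mem_insert_of_mem _ hc)) b hb)
      with h | h | h
    · rw [h]; rfl
    · rw [h] at hXe; exact absurd hXe he0
    · rw [h] at hXe; exact absurd ((sgn_neg_eq_zero _).1 hXe) he0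
  have hD : ∀ e ∈ I1, ∃ D, N.IsCocircuit D ∧ D e ≠ 0 ∧ ∀ a ∈ I1, a ≠ e → D a = 0 := by
    intro e he
    obtain ⟨X, hX, hXe, hX0⟩ := hI1.2 e he
    obtain ⟨D, hD, hDX, hDe⟩ := exists_cocircuit hX hXe
    exact ⟨D, hD, by rwa [hDe], fun a ha hae => hDX.zero (hX0 a ha hae)⟩
  choose! D hDc hDe hD0 using hD
  have hYJ : A.CIndep {Y} := by
    have := (cIndep_empty (M := A)).insert (hZc e0 he0g) (by simp) (x := Y)
      (by rwa [hZcv e0 he0g Y hY])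
    simpa using this
  have hWe : ∀ e ∈ I1 \ I0, ∃ V, N.IsCocircuit V ∧ V e ≠ 0 ∧ q V = 0 ∧
      ∀ a ∈ I1, a ≠ e → V a = 0 := by
    rintro e ⟨he1, he0'⟩
    have heg := hI1.1 he1
    have hYe : Y e = 0 := hI1Y he1
    have hcone : ∀ X ∈ N.covectors, (∀ a ∈ I1, a ≠ e → X a = 0) → X e ≠ 0 →
        ∃ V, N.IsCocircuit V ∧ V e = X e ∧ (∀ a ∈ I1, a ≠ e → V a = 0) ∧ q V ≠ 1 := by
      intro X hX hX0 hXe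
      obtain ⟨V, hV, hVX, hVe⟩ := exists_cocircuit (N.compose_mem Y hY.1 X hX) (e := e)
        (by rwa [compose_eq hYe])
      rw [compose_eq hYe] at hVe
      refine ⟨V, hV, hVe, fun a ha hae => hVX.zero (compose_eq_zero.2 ⟨hI1Y ha, hX0 a ha hae⟩), ?_⟩
      refine H V hV (fun a ha => hVX.zero (compose_eq_zero.2 ⟨hY0 a ha, ?_⟩)) (fun a ha => ?_)
      · exact hsp0 X hX (fun b hb => hX0 b (hI01 hb) (by rintro rfl; exact he0' hb)) a ha
      · have := hVX a
        rwa [compose_ne ha] at this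
    obtain ⟨Vp, hVp, hVpe, hVp0, hVpq⟩ := hcone (D e) (hDc e he1).1 (hD0 e he1) (hDe e he1)
    obtain ⟨Vm, hVm, hVme, hVm0, hVmq⟩ := hcone (-D e) (hDc e he1).neg.1
      (fun a ha hae => by simp [hD0 e he1 a ha hae]) (by simpa using hDe e he1)
    refine ⟨Vp, hVp, by rw [hVpe]; exact hDe e he1, ?_, hVp0⟩
    by_contra hq0
    have hqm : q Vp = -1 := by rcases sgn_cases (q Vp) with h | h | h <;> tauto
    have hz1 : Zc e Vp = D e e := by rw [hZcv e heg Vp hVp, hVpe]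
    have hz2 : Zc e Vm = -D e e := by rw [hZcv e heg Vm hVm, hVme]; rfl
    have hz3 : Zc e Y = 0 := by rw [hZcv e heg Y hY, hYe]
    obtain ⟨X, hX, hX1, hXz, hXpm⟩ := exists_sign (hZc e heg) (e := Vp) (s := 1)
      (by rw [hz1]; exact hDe e he1) (by simp)
    have hX2 : X Vm = -1 := by
      rcases hXpm with rfl | rfl
      · rw [hz2, ← hz1, hX1]
      · rw [Pi.neg_apply, hz2, ← hz1]
        rw [Pi.neg_apply] at hX1
        rw [← hX1]
    have hX3 : X Y = 0 := (hXz Y).1 hz3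
    obtain ⟨R, hR, hRp, hRs⟩ := A.elim q hq X hX Vp ⟨by rw [hqm, hX1], by rw [hqm]; simp⟩
    have hRm : R Vm ≠ 0 := by
      rw [hRs Vm (fun h => by
        have := h.1
        rw [hX2] at this
        exact hVmq (by simpa using this))]
      intro h
      have := (compose_eq_zero.1 h).2
      rw [hX2] at this
      simp at this
    have hRY : R Y = 0 := by
      rw [hRs Y (fun h => h.2 hqY)]
      exact compose_eq_zero.2 ⟨hqY, hX3⟩
    have hJ2 := hYJ.insert (hZc e heg) (x := Vp) (by simpa using hz3)
      (by rw [hz1]; exact hDe e he1)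
    have hJ3 := hJ2.insert hR (x := Vm) (by simp [hRp, hRY]) hRm
    have hYp : Vp ∉ ({Y} : Set (SignVec α)) := by
      rintro rfl; exact hDe e he1 (by rw [← hVpe]; exact hYe)
    have hYm : Vm ∉ (insert Vp {Y} : Set (SignVec α)) := by
      intro h
      refine hRm ?_
      rcases h with h | h
      · rw [h]; exact hRp
      · rw [mem_singleton_iff.1 h]; exact hRY
    have hfin : (I1 \ {e}).Finite := hI1.finite.subset sdiff_subset
    obtain ⟨h1, h2⟩ := hJ3.union_family hfin.toFinset D Zc (fun j hj => by
      rw [Finite.mem_toFinset] at hj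
      obtain ⟨hj, hje⟩ := hj
      have hje : j ≠ e := hje
      have hjg := hI1.1 hj
      refine ⟨hZc j hjg, by rw [hZcv j hjg _ (hDc j hj)]; exact hDe j hj, ?_, ?_⟩
      · rintro X (rfl | rfl | rfl)
        · rw [hZcv j hjg _ hVm]; exact hVm0 j hj hje
        · rw [hZcv j hjg _ hVp]; exact hVp0 j hj hje
        · rw [hZcv j hjg _ hY]; exact hI1Y hj
      · intro j' hj' hne
        rw [Finite.mem_toFinset] at hj'
        rw [hZcv j hjg _ (hDc j' hj'.1)]
        exact hD0 j' hj'.1 j hj (Ne.symm hne))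
    have := hA.card_le _ h1
    rw [h2, ncard_insert_of_notMem hYm hJ2.finite, ncard_insert_of_notMem hYp (finite_singleton Y),
      ncard_singleton, ← ncard_eq_toFinset_card _ hfin, hrank] at this
    have := ncard_sdiff_singleton_add_one he1 hI1.finite
    omega
  choose! V hVc hVe hVq hV0 using hWe
  by_contra hqW
  have hfin1 : (I1 \ I0).Finite := hI1.finite.subset sdiff_subset
  obtain ⟨h1, h2⟩ := hYJ.union_family hfin1.toFinset V Zc (fun e he => by
    rw [Finite.mem_toFinset] at he
    have heg := hI1.1 he.1
    refine ⟨hZc e heg, by rw [hZcv e heg _ (hVc e he)]; exact hVe e he, ?_, ?_⟩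
    · rintro X rfl
      rw [hZcv e heg _ hY]; exact hI1Y he.1
    · intro e' he' hne
      rw [Finite.mem_toFinset] at he'
      rw [hZcv e heg _ (hVc e' he')]
      exact hV0 e' he' e he.1 (Ne.symm hne))
  have hqz : ∀ X ∈ ({Y} ∪ V '' hfin1.toFinset : Set (SignVec α)), q X = 0 := by
    rintro X (rfl | ⟨e, he, rfl⟩)
    · exact hqY
    · rw [Finset.mem_coe, Finite.mem_toFinset] at he
      exact hVq e he
  have h3 := h1.insert hq hqz hqW
  have hWn : W ∉ ({Y} ∪ V '' hfin1.toFinset : Set (SignVec α)) := fun h => hqW (hqz W h)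
  obtain ⟨h4, h5⟩ := h3.union_family hI0.finite.toFinset D Zc (fun j hj => by
    rw [Finite.mem_toFinset] at hj
    have hjg := hI0.1 hj
    refine ⟨hZc j hjg, by rw [hZcv j hjg _ (hDc j (hI01 hj))]; exact hDe j (hI01 hj), ?_, ?_⟩
    · rintro X (rfl | rfl | ⟨e, he, rfl⟩)
      · rw [hZcv j hjg _ hW]; exact hW0 j (hI0G hj)
      · rw [hZcv j hjg _ hY]; exact hI1Y (hI01 hj)
      · rw [Finset.mem_coe, Finite.mem_toFinset] at he
        rw [hZcv j hjg _ (hVc e he)]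
        exact hV0 e he j (hI01 hj) (by rintro rfl; exact he.2 hj)
    · intro j' hj' hne
      rw [Finite.mem_toFinset] at hj'
      rw [hZcv j hjg _ (hDc j' (hI01 hj'))]
      exact hD0 j' (hI01 hj') j (hI01 hj) (Ne.symm hne))
  have := hA.card_le _ h4
  rw [h5, ncard_insert_of_notMem hWn h1.finite, h2, ncard_singleton,
    ← ncard_eq_toFinset_card _ hfin1, ← ncard_eq_toFinset_card _ hI0.finite, hrank] at this
  have := ncard_sdiff_add_ncard_of_subset hI01 hI1.finite
  omega

end Adjoint

section Cones

variable {α : Type*} {N : OrientedMatroid α} {A : OrientedMatroid (SignVec α)}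

/-- The cocircuits of the cone cut out by `Yₐ = 0` on `G0` and `Yₐ ∈ {0, ωₐ}` on `G`. -/
def InK (N : OrientedMatroid α) (G0 : Set α) (G : Finset α) (ω Y : SignVec α) : Prop :=
  N.IsCocircuit Y ∧ (∀ a ∈ G0, Y a = 0) ∧ ∀ a ∈ G, Y a = 0 ∨ Y a = ω a

theorem InK.of_erase [DecidableEq α] {G0 : Set α} {G : Finset α} {ω Y : SignVec α} {g : α}
    (h : InK N (insert g G0) (G.erase g) ω Y) : InK N G0 G ω Y := by
  refine ⟨h.1, fun a ha => h.2.1 a (mem_insert_of_mem _ ha), fun a ha => ?_⟩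
  by_cases hag : a = g
  · left; rw [hag]; exact h.2.1 g (mem_insert _ _)
  · exact h.2.2 a (Finset.mem_erase.2 ⟨hag, ha⟩)

theorem InK.erase [DecidableEq α] {G0 : Set α} {G : Finset α} {ω Y : SignVec α} {g : α}
    (h : InK N G0 G ω Y) (hg : Y g = 0) : InK N (insert g G0) (G.erase g) ω Y := by
  refine ⟨h.1, ?_, fun a ha => h.2.2 a (Finset.mem_of_mem_erase ha)⟩
  rintro a (rfl | ha)
  · exact hg
  · exact h.2.1 a ha

/-- The covector `Y ↦ s * Y c` of the adjoint. -/
theorem Adj.scaled (hA : Adj N A) {c : α} (hc : c ∈ N.ground) {s : SignType} (hs : s ≠ 0) :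
    ∃ X ∈ A.covectors, ∀ Y, N.IsCocircuit Y → X Y = s * Y c := by
  obtain ⟨z, hz, hzv⟩ := hA.coord c hc
  rcases sgn_cases s with rfl | rfl | rfl
  · exact absurd rfl hs
  · exact ⟨z, hz, fun Y hY => by rw [hzv Y hY, one_mul]⟩
  · exact ⟨-z, A.neg_mem z hz, fun Y hY => by rw [Pi.neg_apply, hzv Y hY, neg_one_mul]⟩

theorem sgn_neg_self_mul (a : SignType) (h : a ≠ 0) : -a * a = -1 := by
  revert a; decide

/-- Localization: if `q ≤ 0` on a cone and `q` vanishes at the cocircuit `Y` of the cone, then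
`q ≤ 0` also after dropping the constraints that are not active at `Y`. -/
theorem Adj.localize (hA : Adj N A) (ω : SignVec α) : ∀ (k : ℕ) (G0 : Set α) (G : Finset α),
    G.card = k → (∀ a ∈ G, ω a ≠ 0) → ∀ q ∈ A.covectors, ∀ Y, InK N G0 G ω Y → q Y = 0 →
    (∀ W, InK N G0 G ω W → q W ≠ 1) →
    ∀ W, InK N G0 (G.filter (fun a => Y a = 0)) ω W → q W ≠ 1 := by
  classical
  intro k
  induction k using Nat.strong_induction_on with
  | _ k ih =>
  intro G0 G hk hω q hq Y hY hqY hK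
  have claim : ∀ V, InK N G0 (G.filter (fun a => Y a = 0)) ω V → q V = 1 →
      ∀ g ∈ G, Y g = 0 → V g ≠ 0 := by
    intro V hV hqV g hg hYg hVg
    refine ih (G.erase g).card (by rw [← hk]; exact Finset.card_erase_lt_of_mem hg)
      (insert g G0) (G.erase g) rfl (fun a ha => hω a (Finset.mem_of_mem_erase ha)) q hq Y
      (hY.erase hYg) hqY (fun W hW => hK W hW.of_erase) V ?_ hqV
    have := hV.erase hVg
    have e1 : (G.filter (fun a => Y a = 0)).erase g = (G.erase g).filter (fun a => Y a = 0) := by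
      ext x; simp [and_assoc]
    rwa [e1] at this
  intro Y1 hY1 hqY1
  by_cases hG : ∃ c ∈ G, Y c = 0
  swap
  · push Not at hG
    have := hA.interior hq hY.1 hY.2.1 hqY (fun W hW hW0 hWY => hK W ⟨hW, hW0, fun a ha => by
      have h1 := hWY a (hG a ha)
      rwa [(hY.2.2 a ha).resolve_left (hG a ha)] at h1⟩) hY1.1 hY1.2.1
    rw [hqY1] at this
    exact absurd this (by decide)
  obtain ⟨c, hc, hYc⟩ := hG
  have hωc := hω c hc
  have hcY : c ∈ G.filter (fun a => Y a = 0) := by simp [hc, hYc]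
  have hY1c := claim Y1 hY1 hqY1 c hc hYc
  have hcg : c ∈ N.ground := N.supp_subset Y1 hY1.1.1 hY1c
  obtain ⟨X, hX, hXv⟩ := hA.scaled hcg (s := -ω c) (by simpa using hωc)
  have hXK : ∀ V, InK N G0 (G.filter (fun a => Y a = 0)) ω V →
      (V c = 0 ∧ X V = 0) ∨ (V c ≠ 0 ∧ X V = -1) := by
    intro V hV
    rcases hV.2.2 c hcY with h | h
    · left; exact ⟨h, by rw [hXv V hV.1, h, mul_zero]⟩
    · right; exact ⟨by rwa [h], by rw [hXv V hV.1, h, sgn_neg_self_mul _ hωc]⟩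
  have hXY1 : X Y1 = -1 := ((hXK Y1 hY1).resolve_left (fun h => hY1c h.1)).2
  obtain ⟨T, hT, hT1, hT2, Y2, hY2, hY2s, hTY2⟩ := pencil
    {V | InK N G0 (G.filter (fun a => Y a = 0)) ω V} hX _ hq rfl
    ⟨Y1, ⟨by rw [hXY1, hqY1], by rw [hXY1]; decide⟩, hY1⟩
  have hqY2 : q Y2 = 1 := by
    rcases hXK Y2 hY2 with h | h
    · exact absurd h.2 hY2s.2
    · have := hY2s.1
      rw [h.2] at this
      simpa using this.symm
  have hTK : ∀ V, InK N G0 (G.filter (fun a => Y a = 0)) ω V → T V ≠ 1 := by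
    intro V hV hTV
    by_cases hs : V ∈ sep X q
    · rcases hT2 V hV hs with h | h
      · rw [h] at hTV; exact absurd hTV (by decide)
      · rw [h] at hTV
        rcases hXK V hV with h' | h' <;> rw [h'.2] at hTV <;> exact absurd hTV (by decide)
    · rw [hT1 V hs] at hTV
      rcases hXK V hV with h' | h'
      · rw [compose_eq h'.2] at hTV
        exact claim V hV hTV c hc hYc h'.1
      · rw [compose_ne (by rw [h'.2]; decide), h'.2] at hTV
        exact absurd hTV (by decide)
  have hT0 : ∀ W, N.IsCocircuit W → (∀ a ∈ G0, W a = 0) → T W = 0 := fun W hW hW0 =>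
    hA.interior hT hY2.1 hY2.2.1 hTY2 (fun W hW hW0 hWY => hTK W ⟨hW, hW0, fun a ha => by
      have ha' := Finset.mem_filter.1 ha
      have hne := claim Y2 hY2 hqY2 a ha'.1 ha'.2
      have h1 := hWY a hne
      rwa [(hY2.2.2 a ha).resolve_left hne] at h1⟩) hW hW0
  obtain ⟨D, hD, hDY, hDc⟩ := exists_cocircuit (N.compose_mem Y hY.1.1 Y1 hY1.1.1) (e := c)
    (by rwa [compose_eq hYc])
  rw [compose_eq hYc] at hDc
  have hD0 : ∀ a ∈ G0, D a = 0 := fun a ha =>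
    hDY.zero (compose_eq_zero.2 ⟨hY.2.1 a ha, hY1.2.1 a ha⟩)
  have hDK : InK N G0 G ω D := by
    refine ⟨hD, hD0, fun a ha => ?_⟩
    have h1 := hDY a
    by_cases hYa : Y a = 0
    · rw [compose_eq hYa] at h1
      rcases h1 with h1 | h1
      · exact Or.inl h1
      · rw [h1]; exact hY1.2.2 a (by simp [ha, hYa])
    · rwa [compose_ne hYa, (hY.2.2 a ha).resolve_left hYa] at h1
  have hXD : X D = -1 := by
    rw [hXv D hD, hDc, ← hXv Y1 hY1.1, hXY1]
  have := hT0 D hD hD0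
  rw [hT1 D (fun h => by
    have h1 := h.1
    rw [hXD] at h1
    exact hK D hDK (by simpa using h1.symm)), compose_ne (by rw [hXD]; decide), hXD] at this
  exact absurd this (by decide)

/-- If a covector of the adjoint is negative on the cocircuits of a cone that vanish at `e`, then
the cone has no two non-opposite cocircuits on different sides of `e` at which it is nonnegative. -/
theorem Adj.core (hA : Adj N A) (ω : SignVec α) (e : α) : ∀ (k : ℕ) (G0 : Set α) (G : Finset α),
    G.card = k → (∀ a ∈ G, ω a ≠ 0) → ∀ q ∈ A.covectors, ∀ ε : SignType, ε ≠ 0 →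
    (∀ W, InK N G0 G ω W → W e = 0 → q W = -1) →
    ∀ Y Y', InK N G0 G ω Y → InK N G0 G ω Y' → Y e = ε → Y' e = -ε → q Y ≠ -1 → q Y' ≠ -1 →
    Y' ≠ -Y → False := by
  classical
  intro k
  induction k using Nat.strong_induction_on with
  | _ k ih =>
  intro G0 G hk hω
  -- the induction hypothesis on the face `Y g = 0`
  have face : ∀ g ∈ G, ∀ q ∈ A.covectors, ∀ ε : SignType, ε ≠ 0 →
      (∀ W, InK N G0 G ω W → W e = 0 → q W = -1) →
      ∀ Y Y', InK N G0 G ω Y → InK N G0 G ω Y' → Y e = ε → Y' e = -ε → q Y ≠ -1 → q Y' ≠ -1 →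
      Y' ≠ -Y → Y g = 0 → Y' g = 0 → False := by
    intro g hg q hq ε hε h0 Y Y' hY hY' hYe hYe' hqY hqY' hne hYg hYg'
    exact ih (G.erase g).card (by rw [← hk]; exact Finset.card_erase_lt_of_mem hg)
      (insert g G0) (G.erase g) rfl (fun a ha => hω a (Finset.mem_of_mem_erase ha)) q hq ε hε
      (fun W hW => h0 W hW.of_erase) Y Y' (hY.erase hYg) (hY'.erase hYg') hYe hYe' hqY hqY' hne
  -- the case where the covector is nonpositive on the cone
  have final : ∀ T ∈ A.covectors, ∀ ε : SignType, ε ≠ 0 →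
      (∀ W, InK N G0 G ω W → W e = 0 → T W = -1) → (∀ W, InK N G0 G ω W → T W ≠ 1) →
      ∀ Y Y', InK N G0 G ω Y → InK N G0 G ω Y' → Y e = ε → Y' e = -ε → T Y = 0 → T Y' = 0 →
      Y' ≠ -Y → False := by
    intro T hT ε hε h0 hle Y Y' hY hY' hYe hYe' hTY hTY' hne
    have hloc := hA.localize ω _ G0 G rfl hω T hT Y hY hTY hle
    by_cases hex : ∃ g ∈ G, Y g = 0 ∧ Y' g = 0
    · obtain ⟨g, hg, h1, h2⟩ := hex
      exact face g hg T hT ε hε h0 Y Y' hY hY' hYe hYe' (by rw [hTY]; decide)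
        (by rw [hTY']; decide) hne h1 h2
    · push Not at hex
      have hzero : ∀ W, N.IsCocircuit W → (∀ a ∈ G0, W a = 0) → T W = 0 := fun W hW hW0 =>
        hA.interior hT hY'.1 hY'.2.1 hTY' (fun W hW hW0 hWY => hloc W ⟨hW, hW0, fun a ha => by
          have ha' := Finset.mem_filter.1 ha
          have h1 := hex a ha'.1 ha'.2
          have h2 := hWY a h1
          rwa [(hY'.2.2 a ha'.1).resolve_left h1] at h2⟩) hW hW0
      obtain ⟨Z, hZ, hZe, hZs⟩ := N.elim Y hY.1.1 Y' hY'.1.1 e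
        ⟨by rw [hYe, hYe', neg_neg], by rwa [hYe]⟩
      obtain ⟨a, ha⟩ : ∃ a, Y' a ≠ -Y a := by
        by_contra! h; exact hne (funext h)
      have hZa : Z a ≠ 0 := by
        rw [hZs a (fun h => ha (by rw [h.1, neg_neg]))]
        intro h
        obtain ⟨h1, h2⟩ := compose_eq_zero.1 h
        exact ha (by rw [h1, h2, neg_zero])
      obtain ⟨V, hV, hVZ, hVa⟩ := exists_cocircuit hZ hZa
      have hZG0 : ∀ b ∈ G0, Z b = 0 := fun b hb => by
        rw [hZs b (fun h => h.2 (hY.2.1 b hb))]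
        exact compose_eq_zero.2 ⟨hY.2.1 b hb, hY'.2.1 b hb⟩
      have hVK : InK N G0 G ω V := by
        refine ⟨hV, fun b hb => hVZ.zero (hZG0 b hb), fun b hb => ?_⟩
        rcases hVZ b with h | h
        · exact Or.inl h
        rw [h, hZs b ?_]
        · by_cases hYb : Y b = 0
          · rw [compose_eq hYb]; exact hY'.2.2 b hb
          · rw [compose_ne hYb]; exact hY.2.2 b hb
        · rintro ⟨h1, h2⟩
          have h3 := (hY.2.2 b hb).resolve_left h2
          rcases hY'.2.2 b hb with h4 | h4
          · rw [h4, neg_zero] at h1; exact h2 h1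
          · rw [h3, h4] at h1; exact sgn_neg_ne _ (hω b hb) h1
      have h1 := h0 V hVK (hVZ.zero hZe)
      rw [hzero V hVK.1 hVK.2.1] at h1
      exact absurd h1 (by decide)
  -- the case where the covector is positive somewhere on the side `-ε`, nonpositive on the side `ε`
  have mixed : ∀ T ∈ A.covectors, ∀ ε : SignType, ε ≠ 0 →
      (∀ W, InK N G0 G ω W → W e = 0 → T W = -1) →
      (∀ W, InK N G0 G ω W → W e = ε → T W ≠ 1) →
      ∀ Y Y', InK N G0 G ω Y → InK N G0 G ω Y' → Y e = ε → Y' e = -ε → T Y = 0 → T Y' = 1 →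
      False := by
    intro T hT ε hε h0 hle Y Y' hY hY' hYe hYe' hTY hTY'
    by_cases hG : ∃ g ∈ G, Y g = 0
    swap
    · push Not at hG
      have := hA.interior hT hY.1 hY.2.1 hTY (fun W hW hW0 hWY => by
        have hWK : InK N G0 G ω W := ⟨hW, hW0, fun a ha => by
          have h1 := hWY a (hG a ha)
          rwa [(hY.2.2 a ha).resolve_left (hG a ha)] at h1⟩
        rcases hWY e (by rwa [hYe]) with h | h
        · rw [h0 W hWK h]; decide
        · exact hle W hWK (by rw [h, hYe])) hY'.1 hY'.2.1
      rw [hTY'] at this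
      exact absurd this (by decide)
    obtain ⟨g, hg, hYg⟩ := hG
    have hωg := hω g hg
    have claim : ∀ V, InK N G0 G ω V → T V = 1 → V e = -ε ∧ V g ≠ 0 := by
      intro V hV hTV
      have hVe : V e = -ε := by
        by_cases h : V e = 0
        · rw [h0 V hV h] at hTV; exact absurd hTV (by decide)
        · rcases sgn_ne _ _ h hε with h' | h'
          · exact absurd hTV (hle V hV h')
          · exact h'
      refine ⟨hVe, fun hVg => face g hg T hT ε hε h0 Y V hY hV hYe hVe (by rw [hTY]; decide)
        (by rw [hTV]; decide) ?_ hYg hVg⟩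
      rintro rfl
      rw [hA.odd T hT, hTY] at hTV
      exact absurd hTV (by decide)
    have hgg : g ∈ N.ground := N.supp_subset Y' hY'.1.1 (claim Y' hY' hTY').2
    obtain ⟨X, hX, hXv⟩ := hA.scaled hgg (s := -ω g) (by simpa using hωg)
    have hXK : ∀ V, InK N G0 G ω V → (V g = 0 ∧ X V = 0) ∨ (V g ≠ 0 ∧ X V = -1) := by
      intro V hV
      rcases hV.2.2 g hg with h | h
      · left; exact ⟨h, by rw [hXv V hV.1, h, mul_zero]⟩
      · right; exact ⟨by rwa [h], by rw [hXv V hV.1, h, sgn_neg_self_mul _ hωg]⟩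
    have hXY' : X Y' = -1 := ((hXK Y' hY').resolve_left (fun h => (claim Y' hY' hTY').2 h.1)).2
    obtain ⟨T', hT', h1, h2, Y2, hY2, hY2s, hTY2⟩ := pencil {V | InK N G0 G ω V} hX _ hT rfl
      ⟨Y', ⟨by rw [hXY', hTY'], by rw [hXY']; decide⟩, hY'⟩
    have hsep : ∀ V, InK N G0 G ω V → V ∈ sep X T → T V = 1 := by
      intro V hV hs
      rcases hXK V hV with h | h
      · exact absurd h.2 hs.2
      · have := hs.1
        rw [h.2] at this
        simpa using this.symm
    have hTY2' := hsep Y2 hY2 hY2s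
    have hYX : X Y = 0 := by rw [hXv Y hY.1, hYg, mul_zero]
    refine final T' hT' ε hε (fun W hW hWe => ?_) (fun W hW hTW => ?_) Y Y2 hY hY2 hYe
      (claim Y2 hY2 hTY2').1 ?_ hTY2 ?_
    · have hTW := h0 W hW hWe
      rw [h1 W (fun hs => by
        rw [hsep W hW hs] at hTW; exact absurd hTW (by decide))]
      rcases hXK W hW with h | h
      · rw [compose_eq h.2, hTW]
      · rw [compose_ne (by rw [h.2]; decide), h.2]
    · by_cases hs : W ∈ sep X T
      · rcases h2 W hW hs with h | h
        · rw [h] at hTW; exact absurd hTW (by decide)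
        · rw [h] at hTW
          rcases hXK W hW with h' | h' <;> rw [h'.2] at hTW <;> exact absurd hTW (by decide)
      · rw [h1 W hs] at hTW
        rcases hXK W hW with h' | h'
        · rw [compose_eq h'.2] at hTW
          exact (claim W hW hTW).2 h'.1
        · rw [compose_ne (by rw [h'.2]; decide), h'.2] at hTW
          exact absurd hTW (by decide)
    · rw [h1 Y (fun hs => hs.2 hYX), compose_eq hYX, hTY]
    · rintro rfl
      apply (claim _ hY2 hTY2').2
      rw [Pi.neg_apply, hYg, neg_zero]
  -- reduction to the previous case by moving `q` towards the coordinate function of `e`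
  have positive : ∀ q ∈ A.covectors, ∀ ε : SignType, ε ≠ 0 →
      (∀ W, InK N G0 G ω W → W e = 0 → q W = -1) →
      ∀ Y Y', InK N G0 G ω Y → InK N G0 G ω Y' → Y e = ε → Y' e = -ε → q Y ≠ -1 → q Y' = 1 →
      False := by
    intro q hq ε hε h0 Y Y' hY hY' hYe hYe' hqY hqY'
    by_cases hpos : ∃ V, InK N G0 G ω V ∧ V e = ε ∧ q V = 1
    · obtain ⟨V, hV, hVe, hqV⟩ := hpos
      have heg : e ∈ N.ground := N.supp_subset Y hY.1.1 (by rw [supp, mem_ofPred, hYe]; exact hε)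
      obtain ⟨X, hX, hXv⟩ := hA.scaled heg (s := -ε) (by simpa using hε)
      have hXε : ∀ W, InK N G0 G ω W → W e = ε → X W = -1 := fun W hW hWe => by
        rw [hXv W hW.1, hWe, sgn_neg_self_mul _ hε]
      obtain ⟨T, hT, h1, h2, Y2, hY2, hY2s, hTY2⟩ := pencil
        {V | InK N G0 G ω V ∧ V e = ε} hX _ hq rfl
        ⟨V, ⟨by rw [hXε V hV hVe, hqV], by rw [hXε V hV hVe]; decide⟩, hV, hVe⟩
      have hXY' : X Y' = 1 := by
        rw [hXv Y' hY'.1, hYe']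
        generalize ε = a at hε
        revert a; decide
      refine mixed T hT ε hε (fun W hW hWe => ?_) (fun W hW hWe hTW => ?_) Y2 Y' hY2.1 hY'
        hY2.2 hYe' hTY2 ?_
      · have hXW : X W = 0 := by rw [hXv W hW.1, hWe, mul_zero]
        rw [h1 W (fun hs => hs.2 hXW), compose_eq hXW, h0 W hW hWe]
      · have hXW := hXε W hW hWe
        by_cases hs : W ∈ sep X q
        · rcases h2 W ⟨hW, hWe⟩ hs with h | h
          · rw [h] at hTW; exact absurd hTW (by decide)
          · rw [h, hXW] at hTW; exact absurd hTW (by decide)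
        · rw [h1 W hs, compose_ne (by rw [hXW]; decide), hXW] at hTW
          exact absurd hTW (by decide)
      · rw [h1 Y' (fun hs => by
          have := hs.1
          rw [hXY', hqY'] at this
          exact absurd this (by decide)), compose_ne (by rw [hXY']; decide), hXY']
    · push Not at hpos
      have hqY0 : q Y = 0 := by
        rcases sgn_cases (q Y) with h | h | h
        · exact h
        · exact absurd h (hpos Y hY hYe)
        · exact absurd h hqY
      exact mixed q hq ε hε h0 hpos Y Y' hY hY' hYe hYe' hqY0 hqY'
  intro q hq ε hε h0 Y Y' hY hY' hYe hYe' hqY hqY' hne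
  by_cases hB : ∃ W, InK N G0 G ω W ∧ q W = 1
  · obtain ⟨W, hW, hqW⟩ := hB
    have hWe : W e ≠ 0 := by
      intro h
      rw [h0 W hW h] at hqW
      exact absurd hqW (by decide)
    rcases sgn_ne _ _ hWe hε with h | h
    · exact positive q hq (-ε) (by simpa using hε) h0 Y' W hY' hW hYe' (by rw [h, neg_neg]) hqY' hqW
    · exact positive q hq ε hε h0 Y W hY hW hYe h hqY hqW
  · push Not at hB
    have hz : ∀ V, InK N G0 G ω V → q V ≠ -1 → q V = 0 := by
      intro V hV hqV
      rcases sgn_cases (q V) with h | h | h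
      · exact h
      · exact absurd h (hB V hV)
      · exact absurd h hqV
    exact final q hq ε hε h0 hB Y Y' hY hY' hYe hYe' (hz Y hY hqY) (hz Y' hY' hqY') hne

/-- A covector of the adjoint vanishing on the cocircuits of a cone with an interior covector `P`
vanishes on all cocircuits. -/
theorem Adj.spanning (hA : Adj N A) {P : SignVec α} (hP : P ∈ N.covectors) :
    ∀ (k : ℕ) (G : Finset α), G.card = k → (∀ a ∈ G, P a ≠ 0) → ∀ q ∈ A.covectors,
    (∀ W, InK N ∅ G P W → q W = 0) → ∀ W, N.IsCocircuit W → q W = 0 := by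
  classical
  intro k
  induction k using Nat.strong_induction_on with
  | _ k ih =>
  intro G hk hPG q hq hqK W hW
  by_cases hG : G.Nonempty
  swap
  · rw [Finset.not_nonempty_iff_eq_empty] at hG
    exact hqK W ⟨hW, by simp, by simp [hG]⟩
  obtain ⟨a, ha⟩ := hG
  obtain ⟨Y, hY, hYP, hYa⟩ := exists_cocircuit hP (hPG a ha)
  have hYK : InK N ∅ G P Y := ⟨hY, by simp, fun b _ => hYP b⟩
  refine ih (G.filter (fun b => Y b = 0)).card ?_ _ rfl
    (fun b hb => hPG b (Finset.mem_filter.1 hb).1) q hq (fun V hV => ?_) W hW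
  · rw [← hk]
    refine Finset.card_lt_card ⟨Finset.filter_subset _ _, fun h => ?_⟩
    exact hPG a ha (by rw [← hYa]; exact (Finset.mem_filter.1 (h ha)).2)
  · have h1 := hA.localize P _ ∅ G rfl hPG q hq Y hYK (hqK Y hYK)
      (fun W hW => by rw [hqK W hW]; decide) V hV
    have h2 := hA.localize P _ ∅ G rfl hPG (-q) (A.neg_mem q hq) Y hYK
      (by simp [hqK Y hYK]) (fun W hW => by simp [hqK W hW]) V hV
    rcases sgn_cases (q V) with h | h | h
    · exact h
    · exact absurd h h1
    · exact absurd (by simp [h]) h2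

end Cones

/-! ### The one-element extension defined by an adjoint covector -/

section Extension

variable {α : Type*} {N : OrientedMatroid α} {A : OrientedMatroid (SignVec α)}

/-- `s` is the value of the cocircuit signature `σ` at some cocircuit conformal to `X`. -/
def Sees (N : OrientedMatroid α) (σ : SignVec (SignVec α)) (X : SignVec α) (s : SignType) : Prop :=
  ∃ Y, N.IsCocircuit Y ∧ Conf Y X ∧ σ Y = s

/-- `s` is an admissible entry at the new element for the covector `X`: it is a value of `σ` below
`X` if it is nonzero, and a nonzero covector has the entry `0` only if both signs occur. -/
def Adm (N : OrientedMatroid α) (σ : SignVec (SignVec α)) (X : SignVec α) (s : SignType) : Prop :=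
  (s ≠ 0 → Sees N σ X s) ∧ (s = 0 → X = 0 ∨ ∀ τ : SignType, τ ≠ 0 → Sees N σ X τ)

open scoped Classical in
/-- The sign vector with entry `s` at `h` that agrees with `X` elsewhere. -/
noncomputable def glue (h : α) (s : SignType) (X : SignVec α) : SignVec α :=
  fun a => if a = h then s else X a

theorem glue_self (h : α) (s : SignType) (X : SignVec α) : glue h s X h = s := by simp [glue]

theorem glue_ne {h a : α} (ha : a ≠ h) (s : SignType) (X : SignVec α) : glue h s X a = X a := by
  simp [glue, ha]

theorem Sees.mono {σ : SignVec (SignVec α)} {X X' : SignVec α} {s : SignType}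
    (h : Sees N σ X s) (hX : Conf X X') : Sees N σ X' s := by
  obtain ⟨Y, hY, hYX, hs⟩ := h
  exact ⟨Y, hY, hYX.trans hX, hs⟩

theorem conf_compose_right {X X' : SignVec α} (h : ∀ a, a ∉ sep X X') :
    Conf X' (compose X X') := by
  intro a
  by_cases hX : X a = 0
  · right; rw [compose_eq hX]
  · by_cases hX' : X' a = 0
    · exact Or.inl hX'
    · right
      rw [compose_ne hX]
      rcases sgn_ne _ _ hX hX' with h1 | h1
      · exact h1.symm
      · exact absurd ⟨h1, hX⟩ (h a)

theorem exists_sees {σ : SignVec (SignVec α)} (hσ0 : ∀ Y, N.IsCocircuit Y → σ Y ≠ 0)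
    {X : SignVec α} (hX : X ∈ N.covectors) (hX0 : X ≠ 0) :
    ∃ s : SignType, s ≠ 0 ∧ Sees N σ X s := by
  obtain ⟨a, ha⟩ : ∃ a, X a ≠ 0 := by by_contra! h; exact hX0 (funext h)
  obtain ⟨Y, hY, hYX, -⟩ := exists_cocircuit hX ha
  exact ⟨σ Y, hσ0 Y hY, Y, hY, hYX, rfl⟩

theorem exists_adm {σ : SignVec (SignVec α)} (hσ0 : ∀ Y, N.IsCocircuit Y → σ Y ≠ 0)
    {X : SignVec α} (hX : X ∈ N.covectors) : ∃ s, Adm N σ X s := by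
  by_cases hX0 : X = 0
  · exact ⟨0, fun h => absurd rfl h, fun _ => Or.inl hX0⟩
  · obtain ⟨s, hs, h⟩ := exists_sees hσ0 hX hX0
    exact ⟨s, fun _ => h, fun h' => absurd h' hs⟩

theorem Adm.sees {σ : SignVec (SignVec α)} {X : SignVec α} {s τ : SignType}
    (h : Adm N σ X s) (hX0 : X ≠ 0) (hτ : τ ≠ 0) (hs : s = 0 ∨ s = τ) : Sees N σ X τ := by
  rcases hs with rfl | rfl
  · exact (h.2 rfl).resolve_left hX0 τ hτ
  · exact h.1 hτ

theorem adm_zero {σ : SignVec (SignVec α)} {s : SignType} (h : Adm N σ 0 s) : s = 0 := by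
  by_contra hs
  obtain ⟨Y, hY, hY0, -⟩ := h.1 hs
  exact hY.2.1 (funext fun a => hY0.zero rfl)

/-- Elimination of the new element. -/
theorem eliminate_new {σ : SignVec (SignVec α)} (hσ0 : ∀ Y, N.IsCocircuit Y → σ Y ≠ 0) :
    ∀ (k : ℕ) {X X' : SignVec α}, X ∈ N.covectors → X' ∈ N.covectors → (sep X X').ncard = k →
    ∀ τ : SignType, τ ≠ 0 → Sees N σ X τ → Sees N σ X' (-τ) →
    ∃ Z ∈ N.covectors, (∀ a ∉ sep X X', Z a = compose X X' a) ∧ Adm N σ Z 0 := by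
  intro k
  induction k using Nat.strong_induction_on with
  | _ k ih =>
  intro X X' hX hX' hk τ hτ hs hs'
  have hfin : (sep X X').Finite :=
    N.ground_finite.subset (fun b hb => N.supp_subset X hX hb.2)
  by_cases hne : ∃ e, e ∈ sep X X'
  swap
  · push Not at hne
    refine ⟨_, N.compose_mem X hX X' hX', fun _ _ => rfl, fun h => absurd rfl h,
      fun _ => Or.inr fun τ' hτ' => ?_⟩
    rcases sgn_ne _ _ hτ' hτ with rfl | rfl
    · exact hs.mono (conf_compose_left X X')
    · exact hs'.mono (conf_compose_right hne)
  obtain ⟨e, he⟩ := hne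
  obtain ⟨Z, hZ, hZe, hZs⟩ := N.elim X hX X' hX' e he
  by_cases hZ0 : Z = 0
  · exact ⟨Z, hZ, hZs, fun h => absurd rfl h, fun _ => Or.inl hZ0⟩
  by_cases h1 : Sees N σ Z τ
  · by_cases h2 : Sees N σ Z (-τ)
    · refine ⟨Z, hZ, hZs, fun h => absurd rfl h, fun _ => Or.inr fun τ' hτ' => ?_⟩
      rcases sgn_ne _ _ hτ' hτ with rfl | rfl
      · exact h1
      · exact h2
    · have hsub : sep Z X' ⊆ sep X X' := by
        rintro a ⟨h3, h4⟩
        by_contra ha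
        rw [hZs a ha] at h3 h4
        by_cases hXa : X a = 0
        · rw [compose_eq hXa] at h3 h4
          exact sgn_neg_ne _ h4 h3
        · rw [compose_ne hXa] at h3 h4
          exact ha ⟨h3, hXa⟩
      obtain ⟨W, hW, hWs, hWa⟩ := ih (sep Z X').ncard (by
        rw [← hk]
        exact ncard_lt_ncard ⟨hsub, fun h => (h he).2 hZe⟩ hfin) hZ hX' rfl τ hτ h1 hs'
      refine ⟨W, hW, fun a ha => ?_, hWa⟩
      rw [hWs a (fun h => ha (hsub h))]
      by_cases hZa : Z a = 0
      · rw [compose_eq hZa]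
        rw [hZs a ha] at hZa
        obtain ⟨h5, h6⟩ := compose_eq_zero.1 hZa
        rw [compose_eq h5]
      · rw [compose_ne hZa, hZs a ha]
  · obtain ⟨s, hs0, hsZ⟩ := exists_sees hσ0 hZ hZ0
    have h2 : Sees N σ Z (-τ) := by
      rcases sgn_ne _ _ hs0 hτ with rfl | rfl
      · exact absurd hsZ h1
      · exact hsZ
    have hsub : sep X Z ⊆ sep X X' := by
      rintro a ⟨h3, h4⟩
      by_contra ha
      rw [hZs a ha, compose_ne h4] at h3
      exact sgn_neg_ne _ h4 h3
    obtain ⟨W, hW, hWs, hWa⟩ := ih (sep X Z).ncard (by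
      rw [← hk]
      refine ncard_lt_ncard ⟨hsub, fun h => ?_⟩ hfin
      have := (h he).1
      rw [hZe, neg_zero] at this
      exact he.2 this) hX hZ rfl τ hτ hs h2
    refine ⟨W, hW, fun a ha => ?_, hWa⟩
    rw [hWs a (fun h => ha (hsub h))]
    by_cases hXa : X a = 0
    · rw [compose_eq hXa, hZs a ha]
    · rw [compose_ne hXa, compose_ne hXa]

/-- Elimination of an old element `e` between two covectors below both of which the value `τ` of
`σ` occurs can be done so that `τ` occurs below the result. -/
theorem Adj.eliminate_old (hA : Adj N A) {σ : SignVec (SignVec α)} (hσ : σ ∈ A.covectors)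
    (hσ0 : ∀ Y, N.IsCocircuit Y → σ Y ≠ 0) {X X' : SignVec α} (hX : X ∈ N.covectors)
    (hX' : X' ∈ N.covectors) {e : α} (he : e ∈ sep X X') {τ : SignType} (hτ : τ ≠ 0)
    (hs : Sees N σ X τ) (hs' : Sees N σ X' τ) :
    ∃ Z ∈ N.covectors, Z e = 0 ∧ (∀ a ∉ sep X X', Z a = compose X X' a) ∧ Sees N σ Z τ := by
  classical
  by_contra hcon
  obtain ⟨Z0, hZ0, hZ0e, hZ0s⟩ := N.elim X hX X' hX' e he
  set ω := compose X X' with hω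
  have hfin : {a | a ∉ sep X X' ∧ ω a ≠ 0}.Finite :=
    N.ground_finite.subset (fun b hb => N.supp_subset _ (N.compose_mem X hX X' hX') hb.2)
  set G0 : Set α := {a | a ∉ sep X X' ∧ ω a = 0} with hG0
  have hzero : ∀ W, InK N G0 hfin.toFinset ω W → W e = 0 → σ W ≠ τ := by
    intro W hW hWe hWτ
    refine hcon ⟨_, N.compose_mem W hW.1.1 Z0 hZ0, compose_eq_zero.2 ⟨hWe, hZ0e⟩, fun a ha => ?_,
      W, hW.1, conf_compose_left _ _, hWτ⟩
    by_cases hWa : W a = 0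
    · rw [compose_eq hWa, hZ0s a ha]
    · rw [compose_ne hWa]
      by_cases hωa : ω a = 0
      · exact absurd (hW.2.1 a ⟨ha, hωa⟩) hWa
      · exact (hW.2.2 a ((Finite.mem_toFinset _).2 ⟨ha, hωa⟩)).resolve_left hWa
  obtain ⟨Y, hY, hYX, hYτ⟩ := hs
  obtain ⟨Y', hY', hYX', hYτ'⟩ := hs'
  have hYK : InK N G0 hfin.toFinset ω Y := by
    refine ⟨hY, fun a ha => hYX.zero (compose_eq_zero.1 ha.2).1, fun a _ => ?_⟩
    exact (hYX.trans (conf_compose_left X X')) a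
  have hYK' : InK N G0 hfin.toFinset ω Y' := by
    refine ⟨hY', fun a ha => hYX'.zero (compose_eq_zero.1 ha.2).2, fun a ha => ?_⟩
    have ha' := ((Finite.mem_toFinset _).1 ha).1
    by_cases hXa : X a = 0
    · rw [hω, compose_eq hXa]; exact hYX' a
    · by_cases hXa' : X' a = 0
      · exact Or.inl (hYX'.zero hXa')
      · rw [hω, compose_ne hXa]
        rcases sgn_ne _ _ hXa hXa' with h | h
        · rw [h]; exact hYX' a
        · exact absurd ⟨h, hXa⟩ ha'
  have hYe : Y e = X e := (hYX e).resolve_left (fun h => hzero Y hYK h hYτ)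
  have hYe' : Y' e = -X e := by
    rw [(hYX' e).resolve_left (fun h => hzero Y' hYK' h hYτ'), he.1, neg_neg]
  obtain ⟨q, hq, hqv⟩ : ∃ q ∈ A.covectors, ∀ V, q V = τ * σ V := by
    rcases sgn_cases τ with h | h | h
    · exact absurd h hτ
    · exact ⟨σ, hσ, fun V => by simp [h]⟩
    · exact ⟨-σ, A.neg_mem σ hσ, fun V => by simp [h]⟩
  have hττ : τ * τ ≠ -1 := by
    revert hτ; generalize τ = t; revert t; decide
  refine hA.core ω e _ G0 hfin.toFinset rfl (fun a ha => ((Finite.mem_toFinset _).1 ha).2) q hq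
    (X e) he.2 (fun W hW hWe => ?_) Y Y' hYK hYK' hYe hYe' (by rwa [hqv, hYτ])
    (by rwa [hqv, hYτ']) ?_
  · have h1 := hzero W hW hWe
    have h2 := hσ0 W hW.1
    rw [hqv]
    exact (sgn_mul_neg_one _ _).2 ⟨hτ, by
      rcases sgn_ne _ _ hτ h2 with h | h
      · exact absurd h.symm h1
      · exact h⟩
  · rintro rfl
    rw [hA.odd σ hσ, hYτ] at hYτ'
    exact sgn_neg_ne' _ hτ hYτ'

theorem sep_glue_ne {h a : α} (ha : a ≠ h) (s s' : SignType) (X X' : SignVec α) :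
    a ∈ sep (glue h s X) (glue h s' X') ↔ a ∈ sep X X' := by
  simp [sep, glue_ne ha]

theorem compose_glue (h : α) (s s' : SignType) (X X' : SignVec α) :
    compose (glue h s X) (glue h s' X') = glue h (if s ≠ 0 then s else s') (compose X X') := by
  funext a
  by_cases ha : a = h
  · subst ha; simp [compose, glue_self]
  · simp [compose, glue_ne ha]

/-- The extension of `N` by `h` whose signature on the cocircuits of `N` is the covector `σ` of the
adjoint. -/
noncomputable def Adj.extend (hA : Adj N A) {σ : SignVec (SignVec α)} (hσ : σ ∈ A.covectors)
    (hσ0 : ∀ Y, N.IsCocircuit Y → σ Y ≠ 0) (h : α) : OrientedMatroid α where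
  ground := insert h N.ground
  ground_finite := N.ground_finite.insert h
  covectors := {Xh | ∃ X ∈ N.covectors, ∃ s, Adm N σ X s ∧ Xh = glue h s X}
  supp_subset := by
    rintro _ ⟨X, hX, s, -, rfl⟩ a ha
    by_cases hah : a = h
    · exact Or.inl hah
    · right
      refine N.supp_subset X hX ?_
      simpa [supp, glue_ne hah] using ha
  zero_mem := ⟨0, N.zero_mem, 0, ⟨fun h => absurd rfl h, fun _ => Or.inl rfl⟩, by
    funext a; simp [glue]⟩
  neg_mem := by
    rintro _ ⟨X, hX, s, hs, rfl⟩
    have hneg : ∀ τ, Sees N σ X τ → Sees N σ (-X) (-τ) := by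
      rintro τ ⟨Y, hY, hYX, hτ⟩
      refine ⟨-Y, hY.neg, fun a => ?_, by rw [hA.odd σ hσ, hτ]⟩
      simpa using hYX a
    refine ⟨-X, N.neg_mem X hX, -s, ⟨fun h0 => hneg s (hs.1 (by simpa using h0)), fun h0 => ?_⟩, ?_⟩
    · rcases hs.2 (by simpa using h0) with h1 | h1
      · left; rw [h1, neg_zero]
      · right
        intro τ hτ
        have := hneg _ (h1 (-τ) (by simpa using hτ))
        rwa [neg_neg] at this
    · funext a
      by_cases ha : a = h
      · subst ha; simp [glue_self]
      · simp [glue_ne ha]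
  compose_mem := by
    rintro _ ⟨X, hX, s, hs, rfl⟩ _ ⟨X', hX', s', hs', rfl⟩
    refine ⟨_, N.compose_mem X hX X' hX', _, ?_, compose_glue h s s' X X'⟩
    by_cases hs0 : s = 0
    · simp only [hs0, ne_eq, not_true_eq_false, if_false]
      rcases hs.2 hs0 with h1 | h1
      · rw [h1]
        have : compose 0 X' = X' := by funext a; simp [compose]
        rwa [this]
      · exact ⟨fun h2 => (h1 s' h2).mono (conf_compose_left _ _),
          fun _ => Or.inr fun τ hτ => (h1 τ hτ).mono (conf_compose_left _ _)⟩
    · simp only [ne_eq, hs0, not_false_eq_true, if_true]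
      exact ⟨fun h2 => (hs.1 h2).mono (conf_compose_left _ _), fun h2 => absurd h2 hs0⟩
  elim := by
    rintro _ ⟨X, hX, s, hs, rfl⟩ _ ⟨X', hX', s', hs', rfl⟩ e he
    -- it suffices to find an admissible pair with the right entries
    have key : ∀ Z ∈ N.covectors, ∀ t, Adm N σ Z t → (∀ a ∉ sep X X', Z a = compose X X' a) →
        (glue h t Z e = 0) → ((s = -s' ∧ s ≠ 0) ∨ t = if s ≠ 0 then s else s') →
        ∃ Z ∈ {Xh | ∃ X ∈ N.covectors, ∃ s, Adm N σ X s ∧ Xh = glue h s X}, Z e = 0 ∧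
          ∀ e' ∉ sep (glue h s X) (glue h s' X'),
            Z e' = compose (glue h s X) (glue h s' X') e' := by
      intro Z hZ t ht hZs hZe hst
      refine ⟨_, ⟨Z, hZ, t, ht, rfl⟩, hZe, fun a ha => ?_⟩
      rw [compose_glue]
      by_cases hah : a = h
      · subst hah
        rw [glue_self, glue_self]
        refine hst.resolve_left (fun h1 => ha ?_)
        simpa [sep, glue_self] using h1
      · rw [glue_ne hah, glue_ne hah]
        exact hZs a (fun h1 => ha ((sep_glue_ne hah _ _ _ _).2 h1))
    by_cases heh : e = h
    · subst heh
      have hss : s = -s' ∧ s ≠ 0 := by simpa [sep, glue_self] using he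
      obtain ⟨Z, hZ, hZs, hZa⟩ := eliminate_new hσ0 _ hX hX' rfl s hss.2 (hs.1 hss.2) (by
        have : -s = s' := by rw [hss.1, neg_neg]
        rw [this]
        exact hs'.1 (by rw [← this]; simpa using hss.2))
      exact key Z hZ 0 hZa hZs (glue_self _ _ _) (Or.inl hss)
    rw [sep_glue_ne heh] at he
    have hX0 : X ≠ 0 := by rintro rfl; exact he.2 rfl
    have hX0' : X' ≠ 0 := by
      rintro rfl
      exact he.2 (by rw [he.1]; simp)
    by_cases hss : s = -s' ∧ s ≠ 0
    · obtain ⟨Z, hZ, hZe, hZs⟩ := N.elim X hX X' hX' e he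
      obtain ⟨t, ht⟩ := exists_adm hσ0 hZ
      exact key Z hZ t ht hZs (by rwa [glue_ne heh]) (Or.inl hss)
    -- now the entries at `h` are not opposite, so both are `0` or `t`
    set t := if s ≠ 0 then s else s' with ht
    have hst : (s = 0 ∨ s = t) ∧ (s' = 0 ∨ s' = t) := by
      by_cases h1 : s = 0
      · exact ⟨Or.inl h1, Or.inr (by simp [ht, h1])⟩
      · have h2 : t = s := by simp [ht, h1]
        refine ⟨Or.inr h2.symm, ?_⟩
        by_cases h3 : s' = 0
        · exact Or.inl h3
        · right
          rcases sgn_ne _ _ h1 h3 with h4 | h4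
          · rw [h2, h4]
          · exact absurd ⟨h4, h1⟩ hss
    by_cases ht0 : t = 0
    · have hs0 : s = 0 := hst.1.elim id (fun h1 => by rw [h1, ht0])
      have hs0' : s' = 0 := hst.2.elim id (fun h1 => by rw [h1, ht0])
      have hF : ∀ τ : SignType, τ ≠ 0 → _ := fun τ hτ =>
        hA.eliminate_old hσ hσ0 hX hX' he hτ (hs.sees hX0 hτ (Or.inl hs0))
          (hs'.sees hX0' hτ (Or.inl hs0'))
      obtain ⟨Z1, hZ1, hZ1e, hZ1s, hZ1σ⟩ := hF 1 (by decide)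
      obtain ⟨Z2, hZ2, hZ2e, hZ2s, hZ2σ⟩ := hF (-1) (by decide)
      obtain ⟨Z, hZ, hZs, hZa⟩ := eliminate_new hσ0 _ hZ1 hZ2 rfl 1 (by decide) hZ1σ hZ2σ
      refine key Z hZ 0 hZa (fun a ha => ?_) ?_ (Or.inr ht0.symm)
      · have h12 : Z1 a = Z2 a := by rw [hZ1s a ha, hZ2s a ha]
        rw [hZs a (fun h1 => sgn_neg_ne _ h1.2 (h1.1.trans (by rw [h12]))), ← hZ1s a ha]
        by_cases h1 : Z1 a = 0
        · rw [compose_eq h1, h12]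
        · rw [compose_ne h1]
      · rw [glue_ne heh, hZs e (fun h1 => h1.2 hZ1e)]
        exact compose_eq_zero.2 ⟨hZ1e, hZ2e⟩
    · obtain ⟨Z, hZ, hZe, hZs, hZσ⟩ := hA.eliminate_old hσ hσ0 hX hX' he ht0
        (hs.sees hX0 ht0 hst.1) (hs'.sees hX0' ht0 hst.2)
      exact key Z hZ t ⟨fun _ => hZσ, fun h1 => absurd h1 ht0⟩ hZs (by rwa [glue_ne heh])
        (Or.inr rfl)

theorem Adj.isExtension (hA : Adj N A) {σ : SignVec (SignVec α)} (hσ : σ ∈ A.covectors)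
    (hσ0 : ∀ Y, N.IsCocircuit Y → σ Y ≠ 0) {h : α} (hh : h ∉ N.ground) :
    IsExtension N h (hA.extend hσ hσ0 h) := by
  have hne : ∀ a ∈ N.ground, a ≠ h := by rintro a ha rfl; exact hh ha
  refine ⟨hh, rfl, ?_, ?_⟩
  · obtain ⟨I, -, hI, hIs, hIr⟩ := (cIndep_empty (M := N)).exists_base
    rw [← hIr]
    refine rank_eq ⟨fun a ha => Or.inr (hI.1 ha), fun e he => ?_⟩ ?_
    · obtain ⟨X, hX, hXe, hX0⟩ := hI.2 e he
      obtain ⟨s, hs⟩ := exists_adm hσ0 hX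
      refine ⟨_, ⟨X, hX, s, hs, rfl⟩, by rwa [glue_ne (hne e (hI.1 he))], fun a ha hae => ?_⟩
      rw [glue_ne (hne a (hI.1 ha)), hX0 a ha hae]
    · rintro _ ⟨X, hX, s, hs, rfl⟩ h0 a _
      have hX0 : X = 0 := hIs.eq_zero hX (fun b hb => by
        have := h0 b hb
        rwa [glue_ne (hne b (hI.1 hb))] at this)
      subst hX0
      simp [glue, adm_zero hs]
  · have : N = (hA.extend hσ hσ0 h).del {h} := by
      refine ext' ?_ ?_
      · show N.ground = insert h N.ground \ {h}
        rw [insert_sdiff_of_mem _ (mem_singleton h), sdiff_singleton_eq_self hh]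
      · have hr : ∀ X ∈ N.covectors, ∀ s, restrictAway {h} (glue h s X) = X := by
          intro X hX s
          funext a
          by_cases ha : a = h
          · rw [restrictAway_mem (by simp [ha]), ha, zero_off hX hh]
          · rw [restrictAway_not_mem (by simp [ha]), glue_ne ha]
        ext X
        constructor
        · intro hX
          obtain ⟨s, hs⟩ := exists_adm hσ0 hX
          exact ⟨_, ⟨X, hX, s, hs, rfl⟩, hr X hX s⟩
        · rintro ⟨_, ⟨X', hX', s, -, rfl⟩, rfl⟩
          rwa [hr X' hX' s]
    have h2 := isDeletion_del (hA.extend hσ hσ0 h) {h}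
    rwa [← this] at h2

/-- A cocircuit of `N` with its value of the signature is a cocircuit of the extension. -/
theorem Adj.extend_cocircuit (hA : Adj N A) {σ : SignVec (SignVec α)} (hσ : σ ∈ A.covectors)
    (hσ0 : ∀ Y, N.IsCocircuit Y → σ Y ≠ 0) {h : α} (hh : h ∉ N.ground) {Y : SignVec α}
    (hY : N.IsCocircuit Y) : (hA.extend hσ hσ0 h).IsCocircuit (glue h (σ Y) Y) := by
  have hsees : ∀ Y, N.IsCocircuit Y → ∀ s, Sees N σ Y s → s = σ Y := by
    rintro Y hY s ⟨V, hV, hVY, rfl⟩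
    rcases hY.unique hV.1 (fun a ha => hVY.zero ha) with h1 | h1 | h1
    · exact absurd h1 hV.2.1
    · rw [h1]
    · exfalso
      apply hY.2.1
      funext a
      rcases hVY a with h2 | h2
      · rw [h1] at h2; simpa using h2
      · rw [h1] at h2
        by_contra h3
        exact sgn_neg_ne' _ h3 h2
  have hadm : ∀ Y, N.IsCocircuit Y → ∀ s, Adm N σ Y s → s = σ Y := by
    intro Y hY s hs
    by_cases hs0 : s = 0
    · have h1 := (hs.2 hs0).resolve_left hY.2.1
      have h2 := hsees Y hY _ (h1 1 (by decide))
      have h3 := hsees Y hY _ (h1 (-1) (by decide))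
      rw [← h2] at h3
      exact absurd h3 (by decide)
    · exact hsees Y hY s (hs.1 hs0)
  have hYh : Y h = 0 := zero_off hY.1 hh
  refine isCocircuit_of_unique ⟨Y, hY.1, _, ⟨fun _ => ⟨Y, hY, Conf.refl Y, rfl⟩,
    fun h1 => absurd h1 (hσ0 Y hY)⟩, rfl⟩ ?_ ?_
  · intro h1
    have := congrFun h1 h
    rw [glue_self] at this
    exact hσ0 Y hY this
  · rintro _ ⟨Z, hZ, s, hs, rfl⟩ h0
    rcases hY.unique hZ (fun a ha => by
      by_cases hah : a = h
      · rw [hah]; exact zero_off hZ hh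
      · have := h0 a (by rwa [glue_ne hah])
        rwa [glue_ne hah] at this) with h1 | h1 | h1
    · left
      subst h1
      funext a
      simp [glue, adm_zero hs]
    · right; left
      subst h1
      rw [hadm _ hY s hs]
    · right; right
      subst h1
      rw [hadm _ hY.neg s hs, hA.odd σ hσ]
      funext a
      by_cases hah : a = h
      · subst hah; simp [glue_self]
      · simp [glue_ne hah]

end Extension

/-! ### Choosing the signature -/

section Signature

variable {α : Type*} {N : OrientedMatroid α} {A : OrientedMatroid (SignVec α)}

theorem Adj.exists_nowhere_zero (hA : Adj N A) :
    ∃ w ∈ A.covectors, ∀ Y, N.IsCocircuit Y → w Y ≠ 0 := by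
  classical
  have key : ∀ F : Finset α, (∀ a ∈ F, a ∈ N.ground) →
      ∃ w ∈ A.covectors, ∀ Y, N.IsCocircuit Y → (∃ a ∈ F, Y a ≠ 0) → w Y ≠ 0 := by
    intro F
    induction F using Finset.induction_on with
    | empty => exact fun _ => ⟨0, A.zero_mem, fun Y _ h => by simp at h⟩
    | insert a F _ ih =>
      intro hF
      obtain ⟨w, hw, hwY⟩ := ih (fun b hb => hF b (Finset.mem_insert_of_mem hb))
      obtain ⟨z, hz, hzY⟩ := hA.coord a (hF a (Finset.mem_insert_self _ _))
      refine ⟨_, A.compose_mem w hw z hz, fun Y hY ⟨b, hb, hYb⟩ h0 => ?_⟩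
      obtain ⟨h1, h2⟩ := compose_eq_zero.1 h0
      rw [hzY Y hY] at h2
      rcases Finset.mem_insert.1 hb with rfl | hb
      · exact hYb h2
      · exact hwY Y hY ⟨b, hb, hYb⟩ h1
  obtain ⟨w, hw, hwY⟩ := key N.ground_finite.toFinset (fun a ha => by simpa using ha)
  refine ⟨w, hw, fun Y hY => hwY Y hY ?_⟩
  obtain ⟨a, ha⟩ : ∃ a, Y a ≠ 0 := by by_contra! h; exact hY.2.1 (funext h)
  exact ⟨a, by simpa using N.supp_subset Y hY.1 ha, ha⟩

/-- The cocircuits dual to a basis of `N` form an independent set of the adjoint. -/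
theorem Adj.exists_indep (hA : Adj N A) : ∃ J, A.CIndep J ∧ J.ncard = N.rank := by
  classical
  choose! Zc hZc hZcv using hA.coord
  obtain ⟨I, -, hI, -, hIr⟩ := (cIndep_empty (M := N)).exists_base
  have hD : ∀ e ∈ I, ∃ D, N.IsCocircuit D ∧ D e ≠ 0 ∧ ∀ a ∈ I, a ≠ e → D a = 0 := by
    intro e he
    obtain ⟨X, hX, hXe, hX0⟩ := hI.2 e he
    obtain ⟨D, hD, hDX, hDe⟩ := exists_cocircuit hX hXe
    exact ⟨D, hD, by rwa [hDe], fun a ha hae => hDX.zero (hX0 a ha hae)⟩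
  choose! D hDc hDe hD0 using hD
  obtain ⟨h1, h2⟩ := (cIndep_empty (M := A)).union_family hI.finite.toFinset D Zc (fun j hj => by
    rw [Finite.mem_toFinset] at hj
    have hjg := hI.1 hj
    refine ⟨hZc j hjg, by rw [hZcv j hjg _ (hDc j hj)]; exact hDe j hj, by simp, ?_⟩
    intro j' hj' hne
    rw [Finite.mem_toFinset] at hj'
    rw [hZcv j hjg _ (hDc j' hj')]
    exact hD0 j' hj' j hj (Ne.symm hne))
  exact ⟨_, h1, by rw [h2, ncard_empty, zero_add, ← ncard_eq_toFinset_card _ hI.finite, hIr]⟩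

/-- At most `rank N` cones, each with an interior covector, can be met by cocircuits at which some
covector of the adjoint is positive. The cocircuits are found one after another: as fewer than
`rank N` elements do not span the adjoint, some covector of it vanishes at the previous ones but not
on all of the next cone. -/
theorem Adj.exists_signature (hA : Adj N A) (v : ℕ → Set α) (P : ℕ → SignVec α) :
    ∀ m ≤ N.rank, (∀ i < m, P i ∈ N.covectors ∧ ∀ a ∈ v i, P i a = 1) →
    ∃ σ ∈ A.covectors, ∃ Y : ℕ → SignVec α, ∀ i < m,
      N.IsCocircuit (Y i) ∧ (∀ a ∈ v i, Y i a = 1 ∨ Y i a = 0) ∧ σ (Y i) = 1 := by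
  classical
  intro m
  induction m with
  | zero => exact fun _ _ => ⟨0, A.zero_mem, fun _ => 0, fun i hi => absurd hi (Nat.not_lt_zero i)⟩
  | succ k ih =>
    intro hk hP
    obtain ⟨σ, hσ, Y, hY⟩ := ih (by omega) (fun i hi => hP i (by omega))
    obtain ⟨hPk, hPv⟩ := hP k (by omega)
    have hfin : (v k).Finite := N.ground_finite.subset (fun a ha =>
      N.supp_subset _ hPk (by rw [supp, mem_ofPred, hPv a ha]; decide))
    obtain ⟨q, hq, hq0, V, hV, hqV⟩ : ∃ q ∈ A.covectors, (∀ i < k, q (Y i) = 0) ∧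
        ∃ V, InK N ∅ hfin.toFinset (P k) V ∧ q V ≠ 0 := by
      by_contra! hcon
      obtain ⟨J, hJ, hJr⟩ := hA.exists_indep
      have h1 := hJ.ncard_le (I := Y '' Iio k) ((finite_Iio k).image Y) (fun q hq h0 W hW => by
        refine hA.spanning hPk _ hfin.toFinset rfl (fun a ha => ?_) q hq (hcon q hq fun i hi =>
          h0 _ ⟨i, hi, rfl⟩) W (hA.cocircuit W (hJ.1 hW))
        rw [hPv a (by simpa using ha)]; decide)
      have h2 := ncard_image_le (f := Y) (finite_Iio k)
      have h3 : (Iio k).ncard = k := by simp [← Nat.card_coe_set_eq]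
      omega
    obtain ⟨q', hq', hq'V, hq'0, -⟩ := exists_sign hq hqV (s := 1) (by decide)
    refine ⟨_, A.compose_mem q' hq' σ hσ, fun i => if i = k then V else Y i, fun i hi => ?_⟩
    by_cases hik : i = k
    · subst hik
      simp only [if_true]
      refine ⟨hV.1, fun a ha => ?_, by rw [compose_ne (by rw [hq'V]; decide), hq'V]⟩
      have := hV.2.2 a (by simpa using ha)
      rwa [hPv a ha, or_comm] at this
    · simp only [hik, if_false]
      obtain ⟨h1, h2, h3⟩ := hY i (by omega)
      exact ⟨h1, h2, by rw [compose_eq ((hq'0 _).1 (hq0 i (by omega))), h3]⟩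

/-- If `m ≤ rank N` sets are each positive in some covector of `N`, then `N` has an extension with
cocircuits positive at the new element and nonnegative on the respective sets. -/
theorem Adj.exists_extension (hA : Adj N A) {h : α} (hh : h ∉ N.ground) (v : ℕ → Set α)
    (P : ℕ → SignVec α) (m : ℕ) (hm : m ≤ N.rank)
    (hP : ∀ i < m, P i ∈ N.covectors ∧ ∀ a ∈ v i, P i a = 1) :
    ∃ Nh, IsExtension N h Nh ∧ ∀ i < m, ∃ Z, Nh.IsCocircuit Z ∧ Z h = 1 ∧
      ∀ a ∈ v i, Z a = 1 ∨ Z a = 0 := by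
  obtain ⟨q, hq, Y, hY⟩ := hA.exists_signature v P m hm hP
  obtain ⟨w, hw, hw0⟩ := hA.exists_nowhere_zero
  have hσ := A.compose_mem q hq w hw
  have hσ0 : ∀ Y, N.IsCocircuit Y → compose q w Y ≠ 0 := fun Y hY h0 =>
    hw0 Y hY (compose_eq_zero.1 h0).2
  refine ⟨_, hA.isExtension hσ hσ0 hh, fun i hi => ?_⟩
  obtain ⟨h1, h2, h3⟩ := hY i hi
  have h4 : compose q w (Y i) = 1 := by rw [compose_ne (by rw [h3]; decide), h3]
  refine ⟨_, hA.extend_cocircuit hσ hσ0 hh h1, by rw [glue_self, h4], fun a ha => ?_⟩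
  rw [glue_ne]
  · exact h2 a ha
  · rintro rfl
    have := (hP i hi).2 a ha
    rw [zero_off (hP i hi).1 hh] at this
    exact absurd this (by decide)

end Signature

/-! ### Nodes of a program -/

section Program

variable {M : OrientedMatroid ℕ} {n r : ℕ}

/-- A node `u` lifts to a covector of the program with zero set `u` in `[n]`; a covector vanishing
on `u` and at `g` vanishes away from `f`. -/
theorem node_lift (hP : IsProgram M (M.del {n}) n r) {u : Set ℕ} (hu : IsNode (M.del {n}) n u) :
    ∃ X ∈ M.covectors, X (n + 1) = 1 ∧ (∀ a ∈ u, X a = 0) ∧ (∀ a < n, a ∉ u → X a = 1) ∧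
      u ⊆ nset n ∧
      ∀ W ∈ M.covectors, (∀ a ∈ u, W a = 0) → W (n + 1) = 0 → ∀ a, a ≠ n → W a = 0 := by
  obtain ⟨hg, -, -, hi, -, -⟩ := hP
  obtain ⟨Y, hY, hY0, rfl⟩ := hu
  have hYg := hi Y hY hY0
  obtain ⟨X, hX, rfl⟩ := hY.1
  have hr : ∀ a, a ≠ n → restrictAway {n} X a = X a := fun a ha =>
    restrictAway_not_mem (by simpa using ha) X
  refine ⟨X, hX, ?_, ?_, ?_, sdiff_subset, ?_⟩
  · rw [← hr (n + 1) (by omega)]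
    exact (hY0 (n + 1)).resolve_right hYg
  · rintro a ⟨ha, ha'⟩
    have ha : a < n := ha
    rw [← hr a (by omega)]
    by_contra h
    exact ha' h
  · intro a ha ha'
    rw [← hr a (by omega)]
    refine (hY0 a).resolve_right (fun h => ha' ⟨ha, fun h' => h' h⟩)
  · intro W hW hWu hWg a ha
    have h1 : ∀ b, b ≠ n → restrictAway {n} W b = W b := fun b hb =>
      restrictAway_not_mem (by simpa using hb) W
    have hsub : ∀ b, restrictAway {n} X b = 0 → restrictAway {n} W b = 0 := by
      intro b hb
      by_cases hbn : b = n
      · exact restrictAway_mem (by simpa using hbn) W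
      rw [h1 b hbn]
      by_cases hbg : b = n + 1
      · rw [hbg, hWg]
      by_cases hb' : b < n
      · exact hWu b ⟨hb', fun h => h hb⟩
      · refine zero_off hW ?_
        rw [hg]
        simp only [nset, mem_union, mem_ofPred, mem_insert_iff, mem_singleton_iff]
        omega
    rcases hY.unique (Z := restrictAway {n} W) ⟨W, hW, rfl⟩ hsub with h | h | h
    · rw [← h1 a ha, h]; rfl
    · rw [← h] at hYg
      exact absurd (by rw [h1 _ (by omega), hWg]) hYg
    · have := congrFun h (n + 1)
      rw [h1 _ (by omega), hWg, Pi.neg_apply] at this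
      exact absurd ((sgn_neg_eq_zero _).1 this.symm) hYg

/-- Every node is contained in the positive part of a covector vanishing at `g`. -/
theorem exists_pos (hP : IsProgram M (M.del {n}) n r) {v : Set ℕ} (hv : IsNode (M.del {n}) n v) :
    ∃ Z ∈ M.covectors, Z (n + 1) = 0 ∧ ∀ a ∈ v, Z a = 1 := by
  obtain ⟨X, hX, hXg, hXv, -, hvn, -⟩ := node_lift hP hv
  obtain ⟨hg, -, -, -, hii, -⟩ := hP
  have key : ∀ k ≤ n, ∃ T ∈ M.covectors, (∀ a, a ≠ n → T a = 1 ∨ T a = 0) ∧ ∀ a < k, T a = 1 := by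
    intro k
    induction k with
    | zero => exact fun _ => ⟨0, M.zero_mem, fun _ _ => Or.inr rfl, fun a ha => by omega⟩
    | succ k ih =>
      intro hk
      obtain ⟨T, hT, hT0, hTk⟩ := ih (by omega)
      obtain ⟨_, ⟨⟨W, hW, rfl⟩, -⟩, hW0, hWk⟩ := hii k (by omega)
      have hr : ∀ a, a ≠ n → restrictAway {n} W a = W a := fun a ha =>
        restrictAway_not_mem (by simpa using ha) W
      refine ⟨_, M.compose_mem T hT W hW, fun a ha => ?_, fun a ha => ?_⟩
      · by_cases h : T a = 0
        · rw [compose_eq h, ← hr a ha]; exact hW0 a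
        · rw [compose_ne h]; exact hT0 a ha
      · by_cases h : T a = 0
        · have hak : a = k := by
            by_contra hne
            rw [hTk a (by omega)] at h
            exact absurd h (by decide)
          rw [compose_eq h, hak, ← hr k (by omega), hWk]
        · rw [compose_ne h]; exact (hT0 a (by omega)).resolve_right h
  obtain ⟨T, hT, hT0, hTn⟩ := key n le_rfl
  rcases hT0 (n + 1) (by omega) with h | h
  · obtain ⟨Z, hZ, hZg, hZs⟩ := M.elim T hT (-X) (M.neg_mem X hX) (n + 1)
      ⟨by simp [h, hXg], by simp [h]⟩
    refine ⟨Z, hZ, hZg, fun a ha => ?_⟩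
    have hTa := hTn a (hvn ha)
    rw [hZs a ?_, compose_ne (by rw [hTa]; decide), hTa]
    rintro ⟨h1, -⟩
    rw [hTa] at h1
    simp [hXv a ha] at h1
  · exact ⟨T, hT, h, fun a ha => hTn a (hvn ha)⟩

/-- A covector vanishing at `g` and nonnegative on the node `u` can be perturbed to be nonzero at
`f`, with a given sign if it vanished there. -/
theorem perturb (hP : IsProgram M (M.del {n}) n r) {u : Set ℕ}
    {X : SignVec ℕ} (hX : X ∈ M.covectors) (hX0 : X ≠ 0) (hXg : X (n + 1) = 0)
    (hXu : ∀ a ∈ u, X a = 1 ∨ X a = 0) {ε : SignType} (hε : ε ≠ 0) (hXf : X n = 0 ∨ X n = ε)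
    (hun : u ⊆ nset n) :
    ∃ X ∈ M.covectors, X (n + 1) = 0 ∧ (∀ a ∈ u, X a = 1 ∨ X a = 0) ∧ X n = ε := by
  obtain ⟨hg, hr, -, -, -, hiii⟩ := hP
  rcases hXf with hXf | hXf
  swap
  · exact ⟨X, hX, hXg, hXu, hXf⟩
  set S : Set ℕ := {a | a ∈ u ∧ X a = 0} ∪ {n + 1} with hS
  have hXS : ∀ a ∈ S, X a = 0 := by
    rintro a (⟨-, ha⟩ | rfl)
    · exact ha
    · exact hXg
  obtain ⟨T, hT, hTS, hTf⟩ : ∃ T ∈ M.covectors, (∀ a ∈ S, T a = 0) ∧ T n ≠ 0 := by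
    by_contra! hcon
    obtain ⟨I, -, hIS, hI, hIs⟩ := (cIndep_empty (M := M)).exists_basis (empty_subset S)
    have hnI : n ∉ I := fun h => by
      rcases hIS h with ⟨h1, -⟩ | h1
      · exact lt_irrefl n (hun h1)
      · have : n = n + 1 := h1
        omega
    have hng : n ∈ M.ground := by rw [hg]; simp
    have hdep : ¬ M.Indep (insert n I) := by
      rw [← cIndep_iff]
      intro h
      obtain ⟨T, hT, hTn, hT0⟩ := h.2 n (mem_insert _ _)
      refine hTn (hcon T hT (hIs T hT fun a ha => hT0 a (mem_insert_of_mem _ ha) ?_))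
      rintro rfl; exact hnI ha
    obtain ⟨C, hC, hCs⟩ : ∃ C, M.IsCircuit C ∧ supp C ⊆ insert n I := by
      by_contra! h
      exact hdep ⟨insert_subset hng hI.1, h⟩
    have hCn : C n ≠ 0 := by
      intro h
      refine (cIndep_iff.1 hI).2 C hC fun a ha => (hCs ha).resolve_left ?_
      rintro rfl; exact ha h
    have h1 := hiii C hC hCn
    have h2 := ncard_le_ncard hCs (hI.finite.insert n)
    have h3 := ncard_insert_le n I
    have h4 := hI.spans_of_rank (by omega)
    exact hX0 (h4.eq_zero hX fun a ha => hXS a (hIS ha))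
  obtain ⟨T', hT', hT'f, hT'0, -⟩ := exists_sign hT hTf hε
  have hT'S : ∀ a ∈ S, T' a = 0 := fun a ha => (hT'0 a).1 (hTS a ha)
  refine ⟨_, M.compose_mem X hX T' hT', ?_, fun a ha => ?_, by rw [compose_eq hXf, hT'f]⟩
  · rw [compose_eq hXg]; exact hT'S _ (by simp [hS])
  · by_cases h : X a = 0
    · rw [compose_eq h]; exact Or.inr (hT'S a (Or.inl ⟨ha, h⟩))
    · rw [compose_ne h]; exact hXu a ha

/-- The improving edge: a nonzero covector that vanishes at `g`, is nonnegative on the node `u` and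
whose entry at `f` is `0` or `ε` yields a node adjacent to `u`. The edge direction `Y` is a
conformal cocircuit after restriction to `u ∪ f`, and the new node is found by moving from `u` in
the direction of `Y` until an element of `[n]` becomes zero. -/
theorem exists_edge (hP : IsProgram M (M.del {n}) n r)
    (hδ : ∀ W ∈ M.covectors, (∀ a, a ≠ n → W a = 0) → W = 0)
    {u : Set ℕ} (hu : IsNode (M.del {n}) n u)
    {X : SignVec ℕ} (hX : X ∈ M.covectors) (hX0 : X ≠ 0) (hXg : X (n + 1) = 0)
    (hXu : ∀ a ∈ u, X a = 1 ∨ X a = 0) {ε : SignType} (hε : ε ≠ 0) (hXf : X n = 0 ∨ X n = ε) :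
    ∃ u', IsNode (M.del {n}) n u' ∧ u ≠ u' ∧ M.rk (u ∩ u') = r - 2 ∧
      ∃ Y, M.IsCocircuit Y ∧ Y (n + 1) = 0 ∧ Y n = ε ∧ (∀ a ∈ u \ u', Y a = 1) ∧
        (∀ a ∈ u' \ u, Y a = -1) ∧ ∀ a ∈ u ∩ u', Y a = 0 := by
  obtain ⟨U, hU, hUg, hUu, hUn, hun, hUW⟩ := node_lift hP hu
  obtain ⟨X, hX, hXg, hXu, hXf⟩ := perturb hP hX hX0 hXg hXu hε hXf hun
  obtain ⟨hg, hr, -, hi, -, -⟩ := hP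
  have hspan : ∀ W ∈ M.covectors, (∀ a ∈ u, W a = 0) → W (n + 1) = 0 → W = 0 :=
    fun W hW h1 h2 => hδ W hW (hUW W hW h1 h2)
  have hlt : ∀ W ∈ M.covectors, ∀ a, W a ≠ 0 → a < n ∨ a = n ∨ a = n + 1 := by
    intro W hW a ha
    have := M.supp_subset W hW ha
    rw [hg] at this
    simp only [nset, mem_union, mem_insert_iff, mem_singleton_iff, mem_ofPred_eq] at this
    tauto
  -- the edge direction
  set K := (M.con {n + 1}).del (nset n \ u) with hK
  have hres : ∀ W : SignVec ℕ, ∀ a, (a ∈ u ∨ a = n) → restrictAway (nset n \ u) W a = W a := by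
    intro W a ha
    refine restrictAway_not_mem ?_ W
    rintro ⟨h1, h2⟩
    rcases ha with ha | rfl
    · exact h2 ha
    · exact absurd h1 (lt_irrefl a)
  have hXK : restrictAway (nset n \ u) X ∈ K.covectors :=
    ⟨X, ⟨hX, fun a ha => by rw [mem_singleton_iff.1 ha, hXg]⟩, rfl⟩
  obtain ⟨Y0, hY0, hY0X, hY0f⟩ := exists_cocircuit hXK (e := n)
    (by rw [hres X n (Or.inr rfl), hXf]; exact hε)
  rw [hres X n (Or.inr rfl), hXf] at hY0f
  obtain ⟨Y, ⟨hY, hYg'⟩, rfl⟩ := hY0.1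
  have hYg : Y (n + 1) = 0 := hYg' _ rfl
  have hYf : Y n = ε := by rwa [hres Y n (Or.inr rfl)] at hY0f
  have hYu : ∀ a ∈ u, Y a = 1 ∨ Y a = 0 := by
    intro a ha
    have h1 := hY0X a
    rw [hres Y a (Or.inl ha), hres X a (Or.inl ha)] at h1
    rcases h1 with h1 | h1
    · exact Or.inr h1
    · rw [h1]; exact hXu a ha
  have hKu : ∀ W ∈ M.covectors, W (n + 1) = 0 → (∀ a ∈ u, Y a = 0 → W a = 0) →
      restrictAway (nset n \ u) W = 0 ∨
      restrictAway (nset n \ u) W = restrictAway (nset n \ u) Y ∨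
      restrictAway (nset n \ u) W = -restrictAway (nset n \ u) Y := by
    intro W hW hWg hW0
    refine hY0.unique ⟨W, ⟨hW, fun a ha => by rw [mem_singleton_iff.1 ha, hWg]⟩, rfl⟩ ?_
    intro a ha
    by_contra hWa
    have ha' : a ∉ nset n \ u := fun h => hWa (restrictAway_mem h W)
    rw [restrictAway_not_mem ha'] at ha hWa
    rcases hlt W hW a hWa with h | rfl | rfl
    · have hau : a ∈ u := by by_contra h'; exact ha' ⟨h, h'⟩
      exact hWa (hW0 a hau ha)
    · rw [hYf] at ha; exact hε ha
    · exact hWa hWg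
  have hK0 : ∀ W ∈ M.covectors, W (n + 1) = 0 → restrictAway (nset n \ u) W = 0 → W = 0 := by
    intro W hW hWg h
    refine hspan W hW (fun a ha => ?_) hWg
    rw [← hres W a (Or.inl ha), h]; rfl
  have hKf : ∀ W ∈ M.covectors, W (n + 1) = 0 → (∀ a ∈ u, Y a = 0 → W a = 0) → W n = 0 →
      W = 0 := by
    intro W hW hWg hW0 hWf
    rcases hKu W hW hWg hW0 with h | h | h
    · exact hK0 W hW hWg h
    · have := congrFun h n
      rw [hres W n (Or.inr rfl), hres Y n (Or.inr rfl), hWf, hYf] at this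
      exact absurd this.symm hε
    · have := congrFun h n
      rw [Pi.neg_apply, hres W n (Or.inr rfl), hres Y n (Or.inr rfl), hWf, hYf] at this
      exact absurd ((sgn_neg_eq_zero _).1 this.symm) hε
  -- two covectors whose difference can be eliminated to zero are equal
  have heq : ∀ W V R : SignVec ℕ, R = 0 → (∀ a ∉ sep W (-V), R a = compose W (-V) a) → W = V := by
    intro W V R hR0 hRs
    funext a
    by_cases h : a ∈ sep W (-V)
    · simpa using h.1
    · have := hRs a h
      rw [hR0] at this
      obtain ⟨h1, h2⟩ := compose_eq_zero.1 this.symm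
      rw [h1]
      exact ((sgn_neg_eq_zero _).1 h2).symm
  have huniq : ∀ W ∈ M.covectors, W (n + 1) = 0 → (∀ a ∈ u, Y a = 0 → W a = 0) →
      W = 0 ∨ W = Y ∨ W = -Y := by
    intro W hW hWg hW0
    by_cases hWf : W n = 0
    · exact Or.inl (hKf W hW hWg hW0 hWf)
    right
    obtain ⟨W', hW', hW'f, hW'0, hW'pm⟩ := exists_sign hW hWf hε
    obtain ⟨R, hR, hRf, hRs⟩ := M.elim W' hW' (-Y) (M.neg_mem Y hY) n
      ⟨by simp [hW'f, hYf], by rwa [hW'f]⟩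
    have hRz : ∀ a, W' a = 0 → Y a = 0 → R a = 0 := by
      intro a h1 h2
      rw [hRs a (fun h => h.2 h1)]
      exact compose_eq_zero.2 ⟨h1, by simp [h2]⟩
    have h1 : W' = Y := heq W' Y R (hKf R hR (hRz _ ((hW'0 _).1 hWg) hYg)
      (fun a ha hYa => hRz a ((hW'0 a).1 (hW0 a ha hYa)) hYa) hRf) hRs
    rcases hW'pm with h2 | h2
    · left; rw [← h2, h1]
    · right; rw [← h1, h2, neg_neg]
  have hYne : Y ≠ 0 := by
    intro h; rw [h] at hYf; exact hε hYf.symm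
  have hYc : M.IsCocircuit Y := isCocircuit_of_unique hY hYne
    (fun Z hZ h => huniq Z hZ (h _ hYg) (fun a _ ha => h a ha))
  -- by boundedness, the edge direction is negative somewhere
  obtain ⟨e, hen, hYe⟩ : ∃ e < n, Y e = -1 := by
    by_contra! hcon
    have hr : ∀ a, a ≠ n → restrictAway {n} Y a = Y a := fun a ha =>
      restrictAway_not_mem (by simpa using ha) Y
    obtain ⟨a, ha, hYa⟩ : ∃ a, a ≠ n ∧ Y a ≠ 0 := by
      by_contra! h; exact hYne (hδ Y hY h)
    obtain ⟨V, hV, hVY, -⟩ := exists_cocircuit (M := M.del {n}) (X := restrictAway {n} Y)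
      ⟨Y, hY, rfl⟩ (e := a) (by rwa [hr a ha])
    refine hi V hV (fun b => ?_) (hVY.zero (by rw [hr _ (by omega), hYg]))
    by_cases hVb : V b = 0
    · exact Or.inr hVb
    left
    have h1 := hVY.eq_of_ne hVb
    have hbn : b ≠ n := by
      rintro rfl
      rw [restrictAway_mem (by simp)] at h1
      exact hVb h1
    rw [hr b hbn] at h1
    rw [h1] at hVb ⊢
    rcases hlt Y hY b hVb with h2 | h2 | h2
    · rcases sgn_cases (Y b) with h | h | h
      · exact absurd h hVb
      · exact h
      · exact absurd h (hcon b h2)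
    · exact absurd h2 hbn
    · rw [h2] at hVb; exact absurd hYg hVb
  have heu : e ∉ u := by
    intro h
    rcases hYu e h with h1 | h1 <;> rw [hYe] at h1 <;> exact absurd h1 (by decide)
  obtain ⟨T, hT, hTs, hTS, b, hbn, hbs, hTb⟩ := pencil {a | a ≠ n} hU _ hY rfl
    ⟨e, ⟨by rw [hUn e hen heu, hYe]; decide, by rw [hUn e hen heu]; decide⟩,
      (by omega : e ≠ n)⟩
  have hbn : b ≠ n := hbn
  have hb : b < n ∧ b ∉ u := by
    rcases hlt U hU b hbs.2 with h | h | h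
    · exact ⟨h, fun h' => hbs.2 (hUu b h')⟩
    · exact absurd h hbn
    · exfalso
      have := hbs.1
      rw [h, hYg, hUg] at this
      exact absurd this (by decide)
  have hYb : Y b ≠ 0 := by
    intro h
    have := hbs.1
    rw [h, neg_zero] at this
    exact hbs.2 this
  have hTg : T (n + 1) = 1 := by
    rw [hTs _ (fun h => ?_), compose_ne (by rw [hUg]; decide), hUg]
    have := h.1
    rw [hYg, hUg] at this
    exact absurd this (by decide)
  have hTu : ∀ a ∈ u, T a = Y a := by
    intro a ha
    rw [hTs a (fun h => h.2 (hUu a ha)), compose_eq (hUu a ha)]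
  have hTo : ∀ a < n, a ∉ u → (a ∈ sep U Y ∧ T a = 0) ∨ T a = 1 := by
    intro a ha hau
    have hUa := hUn a ha hau
    by_cases h : a ∈ sep U Y
    · rcases hTS a (by show a ≠ n; omega) h with h1 | h1
      · exact Or.inl ⟨h, h1⟩
      · right; rw [h1, hUa]
    · right; rw [hTs a h, compose_ne (by rw [hUa]; decide), hUa]
  have hTr : ∀ a, a ≠ n → restrictAway {n} T a = T a := fun a ha =>
    restrictAway_not_mem (by simpa using ha) T
  set u' : Set ℕ := nset n \ supp (restrictAway {n} T) with hu'
  have hmem : ∀ a, a ∈ u' ↔ a < n ∧ T a = 0 := by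
    intro a
    constructor
    · rintro ⟨h1, h2⟩
      have h1 : a < n := h1
      refine ⟨h1, ?_⟩
      rw [← hTr a (by omega)]
      by_contra h; exact h2 h
    · rintro ⟨h1, h2⟩
      refine ⟨h1, fun h => h ?_⟩
      rw [hTr a (by omega), h2]
  have hzero : ∀ W ∈ M.covectors, W (n + 1) = 0 → (∀ a ∈ u', W a = 0) → W = 0 := by
    intro W hW hWg hW0
    have hWb : W b = 0 := hW0 b ((hmem b).2 ⟨hb.1, hTb⟩)
    rcases huniq W hW hWg (fun a ha hYa => hW0 a ((hmem a).2 ⟨hun ha, by rw [hTu a ha, hYa]⟩))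
      with h | h | h
    · exact h
    · rw [h] at hWb; exact absurd hWb hYb
    · rw [h] at hWb; exact absurd ((sgn_neg_eq_zero _).1 hWb) hYb
  have hTc : (M.del {n}).IsCocircuit (restrictAway {n} T) := by
    refine isCocircuit_of_unique ⟨T, hT, rfl⟩ ?_ ?_
    · intro h
      have := congrFun h (n + 1)
      rw [hTr _ (by omega), hTg, Pi.zero_apply] at this
      exact absurd this (by decide)
    · rintro _ ⟨V, hV, rfl⟩ hV0
      have hVr : ∀ a, a ≠ n → restrictAway {n} V a = V a := fun a ha =>
        restrictAway_not_mem (by simpa using ha) V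
      have hVu : ∀ a ∈ u', V a = 0 := by
        intro a ha
        obtain ⟨h1, h2⟩ := (hmem a).1 ha
        rw [← hVr a (by omega)]
        exact hV0 a (by rw [hTr a (by omega), h2])
      by_cases hVg : V (n + 1) = 0
      · left
        rw [hzero V hV hVg hVu]
        funext a
        simp [restrictAway]
      right
      obtain ⟨V', hV', hV'g, hV'0, hV'pm⟩ := exists_sign hV hVg (s := 1) (by decide)
      obtain ⟨R, hR, hRg, hRs⟩ := M.elim V' hV' (-T) (M.neg_mem T hT) (n + 1)
        ⟨by simp [hV'g, hTg], by rw [hV'g]; decide⟩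
      have h1 : V' = T := heq V' T R (hzero R hR hRg fun a ha => by
        have h2 := (hV'0 a).1 (hVu a ha)
        rw [hRs a (fun h => h.2 h2)]
        exact compose_eq_zero.2 ⟨h2, by simp [((hmem a).1 ha).2]⟩) hRs
      rcases hV'pm with h2 | h2
      · left; rw [← h2, h1]
      · right
        have h3 : V = -T := by rw [← h1, h2, neg_neg]
        rw [h3]
        funext a
        by_cases ha : a = n <;> simp [restrictAway, ha]
  have hTnn : Nonneg (restrictAway {n} T) := by
    intro a
    by_cases han : a = n
    · right; exact restrictAway_mem (by simpa using han) T
    rw [hTr a han]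
    by_cases hTa : T a = 0
    · exact Or.inr hTa
    rcases hlt T hT a hTa with h | h | h
    · by_cases hau : a ∈ u
      · rw [hTu a hau]; exact hYu a hau
      · rcases hTo a h hau with h1 | h1
        · exact Or.inr h1.2
        · exact Or.inl h1
    · exact absurd h han
    · rw [h]; exact Or.inl hTg
  have hL : ∀ a, a ∈ u ∩ u' ↔ a ∈ u ∧ Y a = 0 := by
    intro a
    constructor
    · rintro ⟨h1, h2⟩
      exact ⟨h1, by rw [← hTu a h1]; exact ((hmem a).1 h2).2⟩
    · rintro ⟨h1, h2⟩
      exact ⟨h1, (hmem a).2 ⟨hun h1, by rw [hTu a h1, h2]⟩⟩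
  refine ⟨u', ⟨_, hTc, hTnn, rfl⟩, ?_, ?_, Y, hYc, hYg, hYf, ?_, ?_, ?_⟩
  · intro h
    exact hb.2 (by rw [h]; exact (hmem b).2 ⟨hb.1, hTb⟩)
  · -- a basis of `u ∩ u'` together with `f` and `g` is a basis of the program
    obtain ⟨I, -, hIL, hI, hIs⟩ := (cIndep_empty (M := M)).exists_basis (empty_subset (u ∩ u'))
    have hI1 := hI.insert hU (x := n + 1) (fun a ha => hUu a (hIL ha).1)
      (by rw [hUg]; decide)
    have hI2 := hI1.insert hY (x := n) (by
      rintro a (rfl | ha)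
      · exact hYg
      · exact ((hL a).1 (hIL ha)).2) (by rwa [hYf])
    have hgI : n + 1 ∉ I := fun h => by
      have : n + 1 < n := hun (hIL h).1
      omega
    have hfI : n ∉ insert (n + 1) I := by
      rintro (h | h)
      · omega
      · exact lt_irrefl n (hun (hIL h).1)
    have hsp : M.Spans (insert n (insert (n + 1) I)) M.ground := by
      intro W hW h0 a _
      have hWf := h0 n (by simp)
      have hWg := h0 (n + 1) (by simp)
      rw [hKf W hW hWg (fun a ha hYa => hIs W hW (fun b hb => h0 b (by simp [hb])) a
        ((hL a).2 ⟨ha, hYa⟩)) hWf]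
      rfl
    have h1 := rank_eq hI2 hsp
    rw [ncard_insert_of_notMem hfI hI1.finite, ncard_insert_of_notMem hgI hI.finite, hr] at h1
    rw [rk_eq hI hIL hIs]
    omega
  · rintro a ⟨h1, h2⟩
    refine (hYu a h1).resolve_right (fun h => h2 ((hL a).2 ⟨h1, h⟩).2)
  · rintro a ⟨h1, h2⟩
    obtain ⟨h3, h4⟩ := (hmem a).1 h1
    rcases hTo a h3 h2 with h | h
    · have h5 := h.1.1
      rw [hUn a h3 h2] at h5
      rw [h5, neg_neg]
    · rw [h4] at h; exact absurd h (by decide)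
  · exact fun a ha => ((hL a).1 ha).2

/-- Optimality of the sink: the entry at `f` of a nonzero covector that vanishes at `g` and is
nonnegative on the sink is negative. -/
theorem sink_neg (hP : IsProgram M (M.del {n}) n r)
    (hδ : ∀ W ∈ M.covectors, (∀ a, a ≠ n → W a = 0) → W = 0)
    {u : Set ℕ} (hu : IsSink M (M.del {n}) n r u)
    {X : SignVec ℕ} (hX : X ∈ M.covectors) (hX0 : X ≠ 0) (hXg : X (n + 1) = 0)
    (hXu : ∀ a ∈ u, X a = 1 ∨ X a = 0) : X n = -1 := by
  by_contra hXf
  obtain ⟨u', hu', hne, hrk, Y, hY, hYg, hYf, h1, h2, h3⟩ := exists_edge hP hδ hu.1 hX hX0 hXg hXu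
    (ε := 1) (by decide) (by rcases sgn_cases (X n) with h | h | h <;> tauto)
  refine hu.2 u' ⟨hu.1, hu', hne, hrk, -Y, hY.neg, by simp [hYg], fun a ha => by simp [h2 a ha],
    fun a ha => by simp [h1 a ha], fun a ha => by simp [h3 a ha], by simp [hYf],
    fun a ha => by simp [hYf, h1 a ha]⟩

theorem source_pos (hP : IsProgram M (M.del {n}) n r)
    (hδ : ∀ W ∈ M.covectors, (∀ a, a ≠ n → W a = 0) → W = 0)
    {u : Set ℕ} (hu : IsSource M (M.del {n}) n r u)
    {X : SignVec ℕ} (hX : X ∈ M.covectors) (hX0 : X ≠ 0) (hXg : X (n + 1) = 0)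
    (hXu : ∀ a ∈ u, X a = 1 ∨ X a = 0) : X n = 1 := by
  by_contra hXf
  obtain ⟨u', hu', hne, hrk, Y, hY, hYg, hYf, h1, h2, h3⟩ := exists_edge hP hδ hu.1 hX hX0 hXg hXu
    (ε := -1) (by decide) (by rcases sgn_cases (X n) with h | h | h <;> tauto)
  refine hu.2 u' ⟨hu', hu.1, hne.symm, by rwa [inter_comm], Y, hY, hYg, h1, h2,
    fun a ha => h3 a ⟨ha.2, ha.1⟩, by rw [hYf]; decide, fun a ha => by rw [hYf, h2 a ha]⟩

/-- The difference of two distinct nodes. -/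
theorem exists_difference (hP : IsProgram M (M.del {n}) n r) {u v : Set ℕ}
    (hu : IsNode (M.del {n}) n u) (hv : IsNode (M.del {n}) n v) (hvu : v ≠ u) :
    ∃ R ∈ M.covectors, R ≠ 0 ∧ R (n + 1) = 0 ∧ (∀ a ∈ u, R a = 1 ∨ R a = 0) ∧
      ∀ a ∈ v, -R a = 1 ∨ -R a = 0 := by
  obtain ⟨U, hU, hUg, hUu, hUn, hun, -⟩ := node_lift hP hu
  obtain ⟨V, hV, hVg, hVv, hVn, hvn, -⟩ := node_lift hP hv
  obtain ⟨R, hR, hRg, hRs⟩ := M.elim V hV (-U) (M.neg_mem U hU) (n + 1)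
    ⟨by simp [hUg, hVg], by rw [hVg]; decide⟩
  have h1 : ∀ a ∈ u, R a = V a := by
    intro a ha
    have hUa : (-U) a = 0 := by simp [hUu a ha]
    rw [hRs a (fun h => h.2 (by rw [h.1, hUa, neg_zero]))]
    by_cases h : V a = 0
    · rw [compose_eq h, hUa, h]
    · rw [compose_ne h]
  have h2 : ∀ a ∈ v, R a = -U a := by
    intro a ha
    rw [hRs a (fun h => h.2 (hVv a ha)), compose_eq (hVv a ha)]; rfl
  refine ⟨R, hR, ?_, hRg, fun a ha => ?_, fun a ha => ?_⟩
  · rintro rfl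
    refine hvu (Subset.antisymm (fun a ha => ?_) (fun a ha => ?_))
    · by_contra h
      have := h2 a ha
      rw [hUn a (hvn ha) h, Pi.zero_apply] at this
      exact absurd this (by decide)
    · by_contra h
      have := h1 a ha
      rw [hVn a (hun ha) h, Pi.zero_apply] at this
      exact absurd this (by decide)
  · rw [h1 a ha]
    by_cases h : a ∈ v
    · exact Or.inr (hVv a h)
    · exact Or.inl (hVn a (hun ha) h)
  · rw [h2 a ha, neg_neg]
    by_cases h : a ∈ u
    · exact Or.inr (hUu a h)
    · exact Or.inl (hUn a (hvn ha) h)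

/-- A node that is neither the source nor the sink is contained in the positive part of a covector
of `M / {f, g}`. -/
theorem exists_interior (hP : IsProgram M (M.del {n}) n r) {src snk v : Set ℕ}
    (hsrc : IsSource M (M.del {n}) n r src) (hsnk : IsSink M (M.del {n}) n r snk)
    (hv : IsNode (M.del {n}) n v) (hv1 : v ≠ src) (hv2 : v ≠ snk) :
    ∃ P ∈ (M.con {n, n + 1}).covectors, ∀ a ∈ v, P a = 1 := by
  obtain ⟨Z, hZ, hZg, hZv⟩ := exists_pos hP hv
  have hvn : ∀ a ∈ v, a < n := by
    obtain ⟨-, -, -, -, -, h, -⟩ := node_lift hP hv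
    exact fun a ha => h ha
  -- it suffices to have covectors with both signs at `f`
  have combine : ∀ X1 ∈ M.covectors, ∀ X2 ∈ M.covectors, X1 (n + 1) = 0 → X2 (n + 1) = 0 →
      (∀ a ∈ v, X1 a = 1) → (∀ a ∈ v, X2 a = 1) → X1 n = -X2 n → X1 n ≠ 0 →
      ∃ P ∈ (M.con {n, n + 1}).covectors, ∀ a ∈ v, P a = 1 := by
    intro X1 hX1 X2 hX2 h1 h2 h3 h4 h5 h6
    obtain ⟨P, hP, hPf, hPs⟩ := M.elim X1 hX1 X2 hX2 n ⟨h5, h6⟩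
    refine ⟨P, ⟨hP, ?_⟩, fun a ha => ?_⟩
    · rintro a (rfl | rfl)
      · exact hPf
      · rw [hPs _ (fun h => h.2 h1)]
        exact compose_eq_zero.2 ⟨h1, h2⟩
    · rw [hPs a (fun h => ?_), compose_ne (by rw [h3 a ha]; decide), h3 a ha]
      have := h.1
      rw [h3 a ha, h4 a ha] at this
      exact absurd this (by decide)
  by_cases hδ : ∀ W ∈ M.covectors, (∀ a, a ≠ n → W a = 0) → W = 0
  · have hcomp : ∀ R : SignVec ℕ, (∀ a ∈ v, -R a = 1 ∨ -R a = 0) → ∀ a ∈ v,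
        compose (-R) Z a = 1 := by
      intro R hR a ha
      rcases hR a ha with h | h
      · rw [compose_ne (by rw [Pi.neg_apply, h]; decide), Pi.neg_apply, h]
      · rw [compose_eq (by rw [Pi.neg_apply, h]), hZv a ha]
    obtain ⟨R1, hR1, hR10, hR1g, hR1u, hR1v⟩ := exists_difference hP hsnk.1 hv hv2
    obtain ⟨R2, hR2, hR20, hR2g, hR2u, hR2v⟩ := exists_difference hP hsrc.1 hv hv1
    have h1 := sink_neg hP hδ hsnk hR1 hR10 hR1g hR1u
    have h2 := source_pos hP hδ hsrc hR2 hR20 hR2g hR2u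
    have h1' : compose (-R1) Z n = 1 := by
      rw [compose_ne (by rw [Pi.neg_apply, h1]; decide), Pi.neg_apply, h1]; rfl
    have h2' : compose (-R2) Z n = -1 := by
      rw [compose_ne (by rw [Pi.neg_apply, h2]; decide), Pi.neg_apply, h2]
    refine combine _ (M.compose_mem _ (M.neg_mem R1 hR1) Z hZ) _
      (M.compose_mem _ (M.neg_mem R2 hR2) Z hZ) (compose_eq_zero.2 ⟨by simp [hR1g], hZg⟩)
      (compose_eq_zero.2 ⟨by simp [hR2g], hZg⟩) (hcomp R1 hR1v) (hcomp R2 hR2v) ?_ ?_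
    · rw [h1', h2']; rfl
    · rw [h1']; decide
  · push Not at hδ
    obtain ⟨W, hW, hW0, hWne⟩ := hδ
    have hWf : W n ≠ 0 := by
      intro h
      refine hWne (funext fun a => ?_)
      by_cases ha : a = n
      · rw [ha, h]; rfl
      · exact hW0 a ha
    have hWZ : ∀ a ∈ v, compose W Z a = 1 ∧ compose (-W) Z a = 1 := by
      intro a ha
      have hWa := hW0 a (by have := hvn a ha; omega)
      exact ⟨by rw [compose_eq hWa, hZv a ha], by rw [compose_eq (by simp [hWa]), hZv a ha]⟩
    have hWg := hW0 (n + 1) (by omega)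
    have h1 : compose W Z n = W n := compose_ne hWf
    have h2 : compose (-W) Z n = -W n := compose_ne (by simpa using hWf)
    refine combine _ (M.compose_mem W hW Z hZ) _ (M.compose_mem _ (M.neg_mem W hW) Z hZ)
      (compose_eq_zero.2 ⟨hWg, hZg⟩) (compose_eq_zero.2 ⟨by simp [hWg], hZg⟩)
      (fun a ha => (hWZ a ha).1) (fun a ha => (hWZ a ha).2) ?_ ?_
    · rw [h1, h2, neg_neg]
    · rwa [h1]

theorem rank_con (M : OrientedMatroid ℕ) (n : ℕ) : M.rank - 2 ≤ (M.con {n, n + 1}).rank := by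
  obtain ⟨B, -, hB, -, hBr⟩ := (cIndep_empty (M := M)).exists_base
  obtain ⟨I, -, hI, hIs, hIr⟩ := (cIndep_empty (M := M.con {n, n + 1})).exists_base
  have h1 := hB.ncard_le (I := insert n (insert (n + 1) I)) ((hI.finite.insert _).insert _)
    (fun X hX h0 a _ => by
      rw [hIs.eq_zero (X := X) ⟨hX, by
        rintro b (rfl | rfl)
        · exact h0 _ (by simp)
        · exact h0 _ (by simp)⟩ (fun b hb => h0 b (by simp [hb]))]
      rfl)
  have h2 := ncard_insert_le n (insert (n + 1) I)
  have h3 := ncard_insert_le (n + 1) I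
  omega

end Program

/-- Let `M` be an oriented matroid program of rank `r` on
`[n] ∪ {f, g}` (`f = n`, `g = n + 1`, `Mf = M ∖ f`, `Mfg = M / {f, g}`), let
`vt 1, …, vt (r-2)` be nodes of `K_f`, none the source or sink of `K_f`, and
suppose `M / {f, g}` has an adjoint.  Then there is an extension `Mtilde` of
`M / {f, g}` by the element `h = n + 2` such that for each `i` there is a
cocircuit `Zⁱ` of `Mtilde` with `Zⁱ h = +` and `Zⁱ e ∈ {+, 0}` for all
`e ∈ vt i`. -/
theorem extension_from_adjoint (M Mf Mfg : OrientedMatroid ℕ) (n r : ℕ)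
    (src snk : Set ℕ) (vt : Fin (r - 2) → Set ℕ)
    (hProg : IsProgram M Mf n r)
    (hMfg : IsContraction M {n, n + 1} Mfg)
    (hsrc : IsSource M Mf n r src)
    (hsnk : IsSink M Mf n r snk)
    (hnodes : ∀ i, IsNode Mf n (vt i) ∧ vt i ≠ src ∧ vt i ≠ snk)
    (hAdj : HasAdjoint Mfg) :
    ∃ Mtilde : OrientedMatroid ℕ, IsExtension Mfg (n + 2) Mtilde ∧
      ∀ i, ∃ Z : SignVec ℕ, Mtilde.IsCocircuit Z ∧ Z (n + 2) = 1 ∧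
        ∀ e ∈ vt i, Z e = 1 ∨ Z e = 0 := by
  obtain rfl := hProg.2.2.1.eq
  obtain rfl := hMfg.eq
  obtain ⟨A, hA⟩ := hAdj.exists_adj
  have hh : n + 2 ∉ (M.con {n, n + 1}).ground := by
    rintro ⟨h, -⟩
    rw [hProg.1] at h
    simp [nset] at h
  choose P hPc hPv using fun i =>
    exists_interior hProg hsrc hsnk (hnodes i).1 (hnodes i).2.1 (hnodes i).2.2
  -- the nodes are indexed by `ℕ`, with junk values beyond `r - 2`
  obtain ⟨Nh, hNh, hZ⟩ := hA.exists_extension hh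
    (fun i => if h : i < r - 2 then vt ⟨i, h⟩ else ∅) (fun i => if h : i < r - 2 then P ⟨i, h⟩ else 0)
    (r - 2) (by have := rank_con M n; rwa [hProg.2.1] at this)
    (fun i hi => by simpa [hi] using ⟨hPc ⟨i, hi⟩, hPv ⟨i, hi⟩⟩)
  refine ⟨Nh, hNh, fun i => ?_⟩
  have := hZ i i.2
  simpa using this

end OMHK
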